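/- Let V be a Banach space with a normalized unconditional basis (v_i) having the property that there is a constant C > 0 so that for any two interlacing sequences p_1 < q_1 < p_2 < q_2 < ⋯ in ℕ, (v_{p_n}) C-dominates (v_{q_n}). Let X be a Banach space with an FDD (E_i) which satisfies subsequential V-lower estimates. Then X embeds isomorphically into an ℒ∞ space Z with an FDD (F̄_i) which satisfies skipped subsequential V'-lower estimates, where V' is spanned by some subsequence (v_{m_i}) of (v_i); that is, there exist K ≥ 1 and a strictly increasing sequence (m_i) such that whenever p_1 < q_1 < p_2 < q_2 < ⋯ in ℕ and (z_n) is a normalized block sequence of (F̄_i) with supp(z_n) ⊆ (m_{p_n}, m_{q_n}) for all n, then (z_n) K-dominates (v_{q_n}). Furthermore, if (E_i) and (v_i) are both shrinking, then (F̄_i) can be chosen to be shrinking too. -/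

import Mathlib

open Filter Topology

/-- `X` embeds isomorphically into `Y`. -/
def Embeds (X Y : Type*) [NormedAddCommGroup X] [NormedSpace ℝ X]
    [NormedAddCommGroup Y] [NormedSpace ℝ Y] : Prop :=
  ∃ T : X →L[ℝ] Y, ∃ c : ℝ, 0 < c ∧ ∀ x : X, c * ‖x‖ ≤ ‖T x‖

/-- `X` is an `ℒ_{∞,λ}` space. -/
def IsLinftyLambda (lam : ℝ) (X : Type*) [NormedAddCommGroup X] [NormedSpace ℝ X] : Prop :=
  ∃ E : ℕ → Submodule ℝ X, Monotone E ∧ (∀ n, FiniteDimensional ℝ (E n)) ∧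
    Dense (⋃ n, (E n : Set X)) ∧
    ∀ n, ∃ T : (E n) ≃L[ℝ] (Fin (Module.finrank ℝ (E n)) → ℝ),
      ‖(T : E n →L[ℝ] (Fin (Module.finrank ℝ (E n)) → ℝ))‖ *
        ‖(T.symm : (Fin (Module.finrank ℝ (E n)) → ℝ) →L[ℝ] E n)‖ ≤ lam

/-- `X` is an `ℒ_∞` space. -/
def IsLinfty (X : Type*) [NormedAddCommGroup X] [NormedSpace ℝ X] : Prop :=
  ∃ lam : ℝ, IsLinftyLambda lam X

/-- A finite dimensional decomposition (FDD) of a Banach space, given by its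
sequence of coordinate projections. -/
structure FDDOn (X : Type*) [NormedAddCommGroup X] [NormedSpace ℝ X] where
  P : ℕ → X →L[ℝ] X
  finDim : ∀ n, FiniteDimensional ℝ (LinearMap.range (P n : X →ₗ[ℝ] X))
  idem : ∀ n x, P n (P n x) = P n x
  orth : ∀ m n, m ≠ n → ∀ x, P m (P n x) = 0
  total : ∀ x : X, Tendsto (fun N => ∑ i ∈ Finset.range N, P i x) atTop (𝓝 x)

namespace FDDOn

variable {X : Type*} [NormedAddCommGroup X] [NormedSpace ℝ X]

/-- Support of a vector with respect to the FDD. -/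
def suppIn (F : FDDOn X) (x : X) : Set ℕ := {n | F.P n x ≠ 0}

/-- `x` is finitely supported with respect to the FDD, with support contained in
`[a, b]` and both endpoints active. -/
def SuppExact (F : FDDOn X) (x : X) (a b : ℕ) : Prop :=
  a ≤ b ∧ (F.suppIn x ⊆ Set.Icc a b) ∧ a ∈ F.suppIn x ∧ b ∈ F.suppIn x

/-- `z` is a block sequence of the FDD. -/
def IsBlockSeq (F : FDDOn X) (z : ℕ → X) (a b : ℕ → ℕ) : Prop :=
  (∀ n, F.SuppExact (z n) (a n) (b n)) ∧ ∀ n, b n < a (n + 1)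

/-- The FDD is shrinking: every normalized block sequence is weakly null. -/
def Shrinking (F : FDDOn X) : Prop :=
  ∀ (z : ℕ → X) (a b : ℕ → ℕ), F.IsBlockSeq z a b → (∀ n, ‖z n‖ = 1) →
    ∀ f : X →L[ℝ] ℝ, Tendsto (fun n => f (z n)) atTop (𝓝 0)

end FDDOn

/-- `v : ℕ → V` is a Schauder basis of `V`. -/
def IsSchauderBasis {V : Type*} [NormedAddCommGroup V] [NormedSpace ℝ V] (v : ℕ → V) : Prop :=
  ∀ x : V, ∃! a : ℕ → ℝ,
    Tendsto (fun N => ∑ i ∈ Finset.range N, a i • v i) atTop (𝓝 x)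

/-- `v` is an unconditional basis. -/
def UnconditionalBasis {V : Type*} [NormedAddCommGroup V] [NormedSpace ℝ V] (v : ℕ → V) : Prop :=
  IsSchauderBasis v ∧ ∃ Ku : ℝ, 1 ≤ Ku ∧
    ∀ (a ε : ℕ → ℝ) (N : ℕ), (∀ i, |ε i| ≤ 1) →
      ‖∑ i ∈ Finset.range N, (ε i * a i) • v i‖ ≤ Ku * ‖∑ i ∈ Finset.range N, a i • v i‖

/-- A block sequence of the basis `v`. -/
def BasisBlockSeq {V : Type*} [NormedAddCommGroup V] [NormedSpace ℝ V]
    (v : ℕ → V) (z : ℕ → V) (a b : ℕ → ℕ) : Prop :=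
  (∀ n, ∃ co : ℕ → ℝ, z n = ∑ i ∈ Finset.Icc (a n) (b n), co i • v i) ∧
  ∀ n, b n < a (n + 1)

/-- `v` is a shrinking basis: every bounded block sequence is weakly null. -/
def ShrinkingBasis {V : Type*} [NormedAddCommGroup V] [NormedSpace ℝ V] (v : ℕ → V) : Prop :=
  IsSchauderBasis v ∧
  ∀ (z : ℕ → V) (a b : ℕ → ℕ), BasisBlockSeq v z a b → (∀ n, ‖z n‖ ≤ 1) →
    ∀ f : V →L[ℝ] ℝ, Tendsto (fun n => f (z n)) atTop (𝓝 0)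

/-- The FDD `F` satisfies subsequential `C`-`V`-lower estimates: every normalized block
sequence `(z_n)` with minimal supports `(a_n)` `C`-dominates `(v_{a_n})`. -/
def SubseqLowerEst {Z V : Type*} [NormedAddCommGroup Z] [NormedSpace ℝ Z]
    [NormedAddCommGroup V] [NormedSpace ℝ V]
    (F : FDDOn Z) (v : ℕ → V) (C : ℝ) : Prop :=
  ∀ (z : ℕ → Z) (a b : ℕ → ℕ), F.IsBlockSeq z a b → (∀ n, ‖z n‖ = 1) →
    ∀ (co : ℕ → ℝ) (N : ℕ),
      ‖∑ n ∈ Finset.range N, co n • v (a n)‖ ≤ C * ‖∑ n ∈ Finset.range N, co n • z n‖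

/-!
`Z` is a Bourgain–Delbaen space whose coordinates are indexed by finite trees, called labels. A
label `t` carries a functional `φ t` on `X` and a finitely supported sequence `α t`, of dual norm at
most `2` on the span of `v`. A label of rank `n` refers to labels `η`, `ζ`, `ξ` of smaller rank, and
`φ t = φ η + β φ ζ ∘ (1 - S_k) + β a φ ξ ∘ (1 - S_l) + g`, where `S_k` is a partial sum projection
of `X` and `g` is a functional of the coordinate `n - 1`. The same recursion without `g` defines the
extension operators of `Z`, so `x ↦ (φ t x)_t` maps `X` into `Z`. Since `a` and `g` run through fine
nets, each functional on `X` is nearly a multiple of some `φ t`, so this map is an isomorphic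
embedding.

For the lower estimate of a skipped block sequence `z`, choose coordinates `ξ n` of rank less than
`q n` at which `z n` is large. By unconditionality, `∑ (c n * z n (ξ n)) • v (q n)` dominates
`∑ c n • v (q n)`; let `α` be a sequence of dual norm `1` norming it. The lower `V`-estimates in `X`
ensure that some label glues the `ξ n` together with coefficients close to `α (q n)`. The coordinate
of `∑ c n • z n` at this label is nearly `β * ∑ α (q n) * c n * z n (ξ n)`.

Each label adds a large piece to the `φ` or the `α` of its predecessor `η`. Hence, if `E` and `v`
are shrinking, the tree of labels has no infinite branch, as its limit would be a functional with
infinitely many large pieces. By well-foundedness, a limit of coordinate functionals along an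
ultrafilter is, on far-out blocks, at most a small multiple of functionals of norm at most `1`.
Iterating this, and passing from coordinates to all functionals by Simons' inequality, shows that
the decomposition of `Z` is shrinking.
-/

section Simons

variable {E : Type*} [NormedAddCommGroup E] [NormedSpace ℝ E]

/-- The series `∑ 2⁻ⁿ⁻¹ g n` of the proof of Simons' inequality, with partial sums `h n`: each
`g n ∈ C n` minimizes, up to an error controlled by `ε`, the norm of the sum that would result
from using the same vector in all later steps. -/
structure IsGreedySeries (C : ℕ → Set E) (ε : ℝ) (g h : ℕ → E) : Prop where
  convex : ∀ n, Convex ℝ (C n)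
  antitone : Antitone C
  mem : ∀ n, g n ∈ C n
  zero : h 0 = 0
  succ : ∀ n, h (n + 1) = h n + (1 / 2 : ℝ) ^ (n + 1) • g n
  near_min : ∀ n, ∀ g' ∈ C n,
    ‖h n + (1 / 2 : ℝ) ^ n • g n‖ ≤ ‖h n + (1 / 2 : ℝ) ^ n • g'‖ + ε * (1 / 2) ^ (2 * n + 1)

theorem exists_mem_forall_norm_add_smul_le {C : Set E} (hC : C.Nonempty) (x : E) (t : ℝ) {ε : ℝ}
    (hε : 0 < ε) : ∃ g ∈ C, ∀ g' ∈ C, ‖x + t • g‖ ≤ ‖x + t • g'‖ + ε := by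
  have hbdd : BddBelow ((fun g => ‖x + t • g‖) '' C) := ⟨0, by rintro _ ⟨g, -, rfl⟩; positivity⟩
  obtain ⟨_, ⟨g, hg, rfl⟩, hlt⟩ := exists_lt_of_csInf_lt (hC.image _) (lt_add_of_pos_right _ hε)
  exact ⟨g, hg, fun g' hg' =>
    hlt.le.trans (add_le_add_left (csInf_le hbdd (Set.mem_image_of_mem _ hg')) ε)⟩

theorem exists_isGreedySeries {C : ℕ → Set E} (hconv : ∀ n, Convex ℝ (C n)) (hanti : Antitone C)
    (hne : ∀ n, (C n).Nonempty) {ε : ℝ} (hε : 0 < ε) : ∃ g h, IsGreedySeries C ε g h := by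
  choose G hGmem hGmin using fun (n : ℕ) (x : E) =>
    exists_mem_forall_norm_add_smul_le (hne n) x ((1 / 2 : ℝ) ^ n)
      (ε := ε * (1 / 2) ^ (2 * n + 1)) (by positivity)
  let h : ℕ → E := fun n => Nat.rec 0 (fun n x => x + (1 / 2 : ℝ) ^ (n + 1) • G n x) n
  exact ⟨fun n => G n (h n), h, hconv, hanti, fun n => hGmem n _, rfl, fun _ => rfl,
    fun n => hGmin n (h n)⟩

namespace IsGreedySeries

variable {C : ℕ → Set E} {ε : ℝ} {g h : ℕ → E}

theorem exists_mem_eq_add_smul (hg : IsGreedySeries C ε g h) {n N : ℕ} (hnN : n ≤ N) :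
    ∃ g' ∈ C n, h N + (1 / 2 : ℝ) ^ N • g N = h n + (1 / 2 : ℝ) ^ n • g' := by
  suffices ∀ x ∈ C N, ∃ g' ∈ C n, h N + (1 / 2 : ℝ) ^ N • x = h n + (1 / 2 : ℝ) ^ n • g' from
    this _ (hg.mem N)
  induction N, hnN using Nat.le_induction with
  | base => exact fun x hx => ⟨x, hx, rfl⟩
  | succ N _ ih =>
    intro x hx
    obtain ⟨g', hg', hEq⟩ := ih ((1 / 2 : ℝ) • g N + (1 / 2 : ℝ) • x)
      (hg.convex N (hg.mem N) (hg.antitone N.le_succ hx) (by norm_num) (by norm_num) (by norm_num))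
    refine ⟨g', hg', ?_⟩
    rw [← hEq, hg.succ, smul_add, smul_smul, smul_smul, pow_succ, add_assoc]

theorem exists_tendsto [CompleteSpace E] (hg : IsGreedySeries C ε g h) {M : ℝ}
    (hM : ∀ n, ‖g n‖ ≤ M) : ∃ H, Tendsto (fun N => h N + (1 / 2 : ℝ) ^ N • g N) atTop (𝓝 H) := by
  have hstep (n : ℕ) : dist (h n) (h (n + 1)) ≤ M / 2 * (1 / 2) ^ n := by
    rw [dist_comm, dist_eq_norm, hg.succ, add_sub_cancel_left, norm_smul,
      Real.norm_of_nonneg (by positivity), pow_succ]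
    calc (1 / 2 : ℝ) ^ n * (1 / 2) * ‖g n‖ ≤ (1 / 2) ^ n * (1 / 2) * M := by gcongr; exact hM n
      _ = M / 2 * (1 / 2) ^ n := by ring
  obtain ⟨H, hH⟩ := cauchySeq_tendsto_of_complete
    (cauchySeq_of_le_geometric _ _ one_half_lt_one hstep)
  have hrest : Tendsto (fun N => (1 / 2 : ℝ) ^ N • g N) atTop (𝓝 0) := by
    have hpow := (tendsto_pow_atTop_nhds_zero_of_lt_one (r := (1 / 2 : ℝ)) (by norm_num)
      one_half_lt_one).mul_const M
    rw [zero_mul] at hpow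
    refine squeeze_zero_norm (fun n => ?_) hpow
    rw [norm_smul, Real.norm_of_nonneg (by positivity)]
    gcongr
    exact hM n
  exact ⟨H, by simpa using hH.add hrest⟩

variable {H : E}

theorem apply_limit_le (hg : IsGreedySeries C ε g h)
    (hlim : Tendsto (fun N => h N + (1 / 2 : ℝ) ^ N • g N) atTop (𝓝 H))
    (k : E →L[ℝ] ℝ) {n : ℕ} {s : ℝ} (hs : ∀ g' ∈ C n, k g' ≤ s) :
    k H ≤ k (h n) + (1 / 2) ^ n * s := by
  refine le_of_tendsto ((k.continuous.tendsto H).comp hlim)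
    (eventually_atTop.2 ⟨n, fun N hN => ?_⟩)
  obtain ⟨g', hg', hEq⟩ := hg.exists_mem_eq_add_smul hN
  simp only [Function.comp_apply, hEq, map_add, map_smul, smul_eq_mul]
  gcongr
  exact hs g' hg'

theorem le_norm_limit (hg : IsGreedySeries C ε g h)
    (hlim : Tendsto (fun N => h N + (1 / 2 : ℝ) ^ N • g N) atTop (𝓝 H))
    {τ : ℝ} (hτ : ∀ g' ∈ C 0, τ ≤ ‖g'‖) : τ ≤ ‖H‖ := by
  refine ge_of_tendsto' hlim.norm fun N => ?_
  obtain ⟨g', hg', hEq⟩ := hg.exists_mem_eq_add_smul N.zero_le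
  rw [hEq, hg.zero, pow_zero, one_smul, zero_add]
  exact hτ g' hg'

theorem norm_add_smul_le_norm_limit (hg : IsGreedySeries C ε g h)
    (hlim : Tendsto (fun N => h N + (1 / 2 : ℝ) ^ N • g N) atTop (𝓝 H))
    (n : ℕ) :
    ‖h n + (1 / 2 : ℝ) ^ n • g n‖ ≤ ‖H‖ + ε * (1 / 2) ^ (2 * n + 1) := by
  refine ge_of_tendsto (hlim.norm.add_const _) (eventually_atTop.2 ⟨n, fun N hN => ?_⟩)
  obtain ⟨g', hg', hEq⟩ := hg.exists_mem_eq_add_smul hN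
  rw [hEq]
  exact hg.near_min n g' hg'

theorem two_mul_norm_succ_le (hg : IsGreedySeries C ε g h)
    (hlim : Tendsto (fun N => h N + (1 / 2 : ℝ) ^ N • g N) atTop (𝓝 H))
    (n : ℕ) :
    2 * ‖h (n + 1)‖ ≤ ‖h n‖ + ‖H‖ + ε * (1 / 2) ^ (2 * n + 1) := by
  have hmid : (2 : ℝ) • h (n + 1) = h n + (h n + (1 / 2 : ℝ) ^ n • g n) := by
    rw [hg.succ, pow_succ', mul_smul]
    module
  calc 2 * ‖h (n + 1)‖ = ‖(2 : ℝ) • h (n + 1)‖ := by simp [norm_smul]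
    _ ≤ ‖h n‖ + ‖h n + (1 / 2 : ℝ) ^ n • g n‖ := hmid ▸ norm_add_le _ _
    _ ≤ _ := by linarith [hg.norm_add_smul_le_norm_limit hlim n]

theorem sub_le_two_pow_mul (hg : IsGreedySeries C ε g h)
    (hlim : Tendsto (fun N => h N + (1 / 2 : ℝ) ^ N • g N) atTop (𝓝 H))
    {τ : ℝ} (hτ : ∀ g' ∈ C 0, τ ≤ ‖g'‖) (n : ℕ) :
    τ - ε * (1 - (1 / 2) ^ n) ≤ 2 ^ n * (‖H‖ - ‖h n‖) := by
  induction n with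
  | zero => simpa [hg.zero] using hg.le_norm_limit hlim hτ
  | succ n ih =>
    have hstep := mul_le_mul_of_nonneg_left (hg.two_mul_norm_succ_le hlim n)
      (show (0 : ℝ) ≤ 2 ^ n by positivity)
    have herr : (2 : ℝ) ^ n * (ε * (1 / 2) ^ (2 * n + 1)) = ε * (1 / 2) ^ (n + 1) := by
      have : (2 : ℝ) ^ n * (1 / 2) ^ n = 1 := by rw [← mul_pow]; norm_num
      rw [show 2 * n + 1 = n + (n + 1) by ring, pow_add (1 / 2 : ℝ) n (n + 1)]
      linear_combination ε * (1 / 2) ^ (n + 1) * this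
    have hhalf : (1 / 2 : ℝ) ^ n = 2 * (1 / 2) ^ (n + 1) := by ring
    rw [mul_add, mul_add, herr] at hstep
    rw [hhalf] at ih
    rw [pow_succ (2 : ℝ)]
    linarith

end IsGreedySeries

theorem simons_inequality [CompleteSpace E] {B : Set (E →L[ℝ] ℝ)}
    (hB_le : ∀ k ∈ B, ∀ x, k x ≤ ‖x‖) (hB_attain : ∀ x, ∃ k ∈ B, k x = ‖x‖)
    {z : ℕ → E} {M : ℝ} (hz : ∀ j, ‖z j‖ ≤ M) {τ s : ℝ}
    (hτ : ∀ g ∈ convexHull ℝ (Set.range z), τ ≤ ‖g‖)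
    (hs : ∀ k ∈ B, ∀ᶠ j in atTop, k (z j) ≤ s) : τ ≤ s := by
  refine le_of_forall_pos_le_add fun ε hε => ?_
  set C : ℕ → Set E := fun n => convexHull ℝ (z '' Set.Ici n)
  have hconv (n : ℕ) : Convex ℝ (C n) := convex_convexHull ℝ _
  have hanti : Antitone C := fun m n hmn =>
    convexHull_mono (Set.image_mono (Set.Ici_subset_Ici.2 hmn))
  have hnorm (n : ℕ) : C n ⊆ Metric.closedBall 0 M :=
    convexHull_min (by rintro _ ⟨j, -, rfl⟩; simpa using hz j) (convex_closedBall 0 M)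
  obtain ⟨g, h, hg⟩ := exists_isGreedySeries hconv hanti
    (fun n => ⟨z n, subset_convexHull ℝ _ ⟨n, Set.mem_Ici.2 le_rfl, rfl⟩⟩) hε
  obtain ⟨H, hH⟩ := hg.exists_tendsto fun n => mem_closedBall_zero_iff.1 (hnorm n (hg.mem n))
  obtain ⟨k, hkB, hkH⟩ := hB_attain H
  obtain ⟨n, hn⟩ := eventually_atTop.1 (hs k hkB)
  have hkC : C n ⊆ {x | k x ≤ s} :=
    convexHull_min (by rintro _ ⟨j, hj, rfl⟩; exact hn j hj)
      (convex_halfSpace_le k.toLinearMap.isLinear s)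
  have hupper : ‖H‖ - ‖h n‖ ≤ (1 / 2) ^ n * s := by
    linarith [hg.apply_limit_le hH k hkC, hB_le k hkB (h n)]
  have hlower : τ - ε * (1 - (1 / 2) ^ n) ≤ 2 ^ n * (‖H‖ - ‖h n‖) :=
    hg.sub_le_two_pow_mul hH
      (fun x hx => hτ x (convexHull_mono (Set.image_subset_range _ _) hx)) n
  have hcancel : (2 : ℝ) ^ n * ((1 / 2) ^ n * s) = s := by
    rw [← mul_assoc, ← mul_pow]; norm_num
  have hpos : 0 < ε * (1 / 2 : ℝ) ^ n := by positivity
  linarith [mul_le_mul_of_nonneg_left hupper (show (0 : ℝ) ≤ 2 ^ n by positivity)]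

/-- A quantitative form of Rainwater's theorem. -/
theorem eventually_abs_apply_le_of_norming [CompleteSpace E] {z : ℕ → E} {M : ℝ}
    (hz : ∀ j, ‖z j‖ ≤ M) {s s' : ℝ} (hss' : s < s')
    (hnorming : ∀ x, ∃ k : E →L[ℝ] ℝ, (∀ y, |k y| ≤ ‖y‖) ∧ |k x| = ‖x‖ ∧
      ∀ᶠ j in atTop, |k (z j)| ≤ s)
    {b : E →L[ℝ] ℝ} (hb : ∀ x, |b x| ≤ ‖x‖) : ∀ᶠ j in atTop, |b (z j)| ≤ s' := by
  have hle (b : E →L[ℝ] ℝ) (hb : ∀ x, b x ≤ ‖x‖) : ∀ᶠ j in atTop, b (z j) ≤ s' := by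
    by_contra hfreq
    obtain ⟨φ, hφ, hbφ⟩ := extraction_of_frequently_atTop (not_eventually.1 hfreq)
    refine hss'.not_ge (simons_inequality (z := z ∘ φ)
      (B := {k | (∀ x, k x ≤ ‖x‖) ∧ ∀ᶠ j in atTop, k (z j) ≤ s}) (fun k hk => hk.1)
      (fun x => ?_) (fun j => hz (φ j)) (fun g hg => ?_)
      fun k hk => hφ.tendsto_atTop.eventually hk.2)
    · obtain ⟨k, hk, hkx, hks⟩ := hnorming x
      rcases abs_choice (k x) with h | h
      · exact ⟨k, ⟨fun y => (le_abs_self _).trans (hk y),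
          hks.mono fun j hj => (le_abs_self _).trans hj⟩, by rw [← hkx, h]⟩
      · exact ⟨-k, ⟨fun y => (neg_le_abs _).trans (hk y),
          hks.mono fun j hj => (neg_le_abs _).trans hj⟩, by rw [← hkx, h]; rfl⟩
    · have hull : convexHull ℝ (Set.range (z ∘ φ)) ⊆ {x | s' ≤ b x} :=
        convexHull_min (by rintro _ ⟨j, rfl⟩; exact (not_le.1 (hbφ j)).le)
          (convex_halfSpace_ge b.toLinearMap.isLinear s')
      exact le_trans (hull hg) (hb g)
  filter_upwards [hle b fun x => (le_abs_self _).trans (hb x),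
    hle (-b) fun x => (neg_le_abs _).trans (hb x)] with j hpos hneg
  exact abs_le.2 ⟨neg_le.1 hneg, hpos⟩

end Simons

theorem exists_tendsto_ultrafilter {E ι : Type*} [NormedAddCommGroup E] [NormedSpace ℝ E]
    (f : ι → E →L[ℝ] ℝ) (M : ℝ) (hf : ∀ i x, |f i x| ≤ M * ‖x‖) (U : Ultrafilter ι) :
    ∃ g : E →L[ℝ] ℝ, (∀ x, |g x| ≤ M * ‖x‖) ∧ ∀ x, Tendsto (fun i => f i x) U (𝓝 (g x)) := by
  have hlim (x : E) : ∃ c, |c| ≤ M * ‖x‖ ∧ Tendsto (fun i => f i x) U (𝓝 c) := by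
    obtain ⟨c, hc, hle⟩ := (isCompact_closedBall (0 : ℝ) (M * ‖x‖)).ultrafilter_le_nhds
      (U.map fun i => f i x) (by
        rw [Ultrafilter.coe_map, le_principal_iff, mem_map]
        exact univ_mem' fun i => by simpa using hf i x)
    exact ⟨c, by simpa using hc, hle⟩
  choose g hg hlim using hlim
  refine ⟨LinearMap.mkContinuous
    { toFun := g, map_add' := fun x y => ?_, map_smul' := fun c x => ?_ } M hg, hg, hlim⟩
  · refine tendsto_nhds_unique (hlim (x + y)) ?_
    simpa using (hlim x).add (hlim y)
  · refine tendsto_nhds_unique (hlim (c • x)) ?_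
    simpa using (hlim x).const_mul c

namespace FDDOn

variable {X : Type*} [NormedAddCommGroup X] [NormedSpace ℝ X] (F : FDDOn X)

/-- The partial sum projection `P 0 + ⋯ + P (N - 1)` of a finite dimensional decomposition. -/
noncomputable def S (N : ℕ) : X →L[ℝ] X := ∑ i ∈ Finset.range N, F.P i

theorem S_apply (N : ℕ) (x : X) : F.S N x = ∑ i ∈ Finset.range N, F.P i x := by
  simp [S]

theorem S_zero (x : X) : F.S 0 x = 0 := by simp [S_apply]

theorem S_succ_sub (n : ℕ) (x : X) : F.S (n + 1) x - F.S n x = F.P n x := by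
  simp [S_apply, Finset.sum_range_succ]

theorem tendsto_S (x : X) : Tendsto (fun N => F.S N x) atTop (𝓝 x) := by
  simpa only [S_apply] using F.total x

theorem P_S (i N : ℕ) (x : X) : F.P i (F.S N x) = if i < N then F.P i x else 0 := by
  rw [S_apply, map_sum]
  split_ifs with h
  · rw [Finset.sum_eq_single_of_mem i (Finset.mem_range.2 h)
      fun j _ hj => F.orth i j hj.symm x, F.idem]
  · refine Finset.sum_eq_zero fun j hj => F.orth i j ?_ x
    rintro rfl
    exact h (Finset.mem_range.1 hj)

theorem S_S (i j : ℕ) (x : X) : F.S i (F.S j x) = F.S (min i j) x := by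
  rw [S_apply]
  simp only [P_S]
  rw [← Finset.sum_filter, S_apply]
  refine Finset.sum_congr ?_ fun _ _ => rfl
  ext k
  simp

theorem S_eq_zero_of_supp {x : X} {m : ℕ} (h : ∀ i ∈ F.suppIn x, m ≤ i) : F.S m x = 0 := by
  rw [S_apply]
  refine Finset.sum_eq_zero fun i hi => ?_
  by_contra hne
  exact (Finset.mem_range.1 hi).not_ge (h i hne)

theorem S_eq_self_of_supp {x : X} {m : ℕ} (h : ∀ i ∈ F.suppIn x, i < m) : F.S m x = x := by
  refine tendsto_nhds_unique (tendsto_const_nhds.congr' ?_) (F.tendsto_S x)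
  filter_upwards [eventually_ge_atTop m] with N hN
  rw [S_apply, S_apply]
  refine Finset.sum_subset (Finset.range_subset_range.2 hN) fun i _ hi => ?_
  by_contra hne
  exact hi (Finset.mem_range.2 (h i hne))

section OfPartialSums

variable (Q : ℕ → X →L[ℝ] X) (h0 : Q 0 = 0) (hQ : ∀ i j x, Q i (Q j x) = Q (min i j) x)
  (hfin : ∀ n, FiniteDimensional ℝ (LinearMap.range (Q n : X →ₗ[ℝ] X)))
  (hlim : ∀ x, Tendsto (fun N => Q N x) atTop (𝓝 x))

/-- The decomposition whose partial sum projections are the given commuting projections `Q`. -/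
noncomputable def ofPartialSums : FDDOn X where
  P n := Q (n + 1) - Q n
  finDim n := by
    have := hfin (n + 1)
    refine Submodule.finiteDimensional_of_le
      (S₂ := LinearMap.range (Q (n + 1) : X →ₗ[ℝ] X)) ?_
    rintro _ ⟨x, rfl⟩
    exact ⟨x - Q n x, by simp [hQ]⟩
  idem n x := by simp [hQ]
  orth m n hmn x := by
    rcases lt_or_gt_of_ne hmn with h | h
    · simp [hQ, h.le, Nat.succ_le_of_lt h, min_eq_left (Nat.le_succ_of_le h.le)]
    · simp [hQ, h.le, Nat.succ_le_of_lt h, min_eq_right (Nat.le_succ_of_le h.le)]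
  total x := by simpa [Finset.sum_range_sub (fun i => Q i x), h0] using hlim x

theorem ofPartialSums_S (N : ℕ) (x : X) : (ofPartialSums Q h0 hQ hfin hlim).S N x = Q N x := by
  simp [S_apply, ofPartialSums, Finset.sum_range_sub (fun i => Q i x), h0]

end OfPartialSums

end FDDOn

theorem IsLinftyLambda.of_linearEquiv_pi {X : Type*} [NormedAddCommGroup X] [NormedSpace ℝ X]
    {E : ℕ → Submodule ℝ X} (hmono : Monotone E) (hdense : Dense (⋃ n, (E n : Set X)))
    {ι : ℕ → Type*} [∀ n, Fintype (ι n)] (e : ∀ n, E n ≃ₗ[ℝ] (ι n → ℝ)) {lam : ℝ}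
    (hlam : 0 ≤ lam) (he : ∀ n z, ‖e n z‖ ≤ ‖z‖) (he' : ∀ n u, ‖(e n).symm u‖ ≤ lam * ‖u‖) :
    IsLinftyLambda lam X := by
  have hfin (n : ℕ) : FiniteDimensional ℝ (E n) := (e n).symm.finiteDimensional
  refine ⟨E, hmono, hfin, hdense, fun n => ?_⟩
  have hcard : Module.finrank ℝ (E n) = Fintype.card (ι n) := by
    rw [(e n).finrank_eq, Module.finrank_fintype_fun_eq_card]
  let σ : ι n ≃ Fin (Module.finrank ℝ (E n)) := (Fintype.equivFin _).trans (finCongr hcard.symm)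
  let R : (ι n → ℝ) ≃ₗᵢ[ℝ] (Fin (Module.finrank ℝ (E n)) → ℝ) :=
    { LinearEquiv.funCongrLeft ℝ ℝ σ.symm with
      norm_map' := (IsometryEquiv.piCongrLeft' σ).isometry.norm_map_of_map_zero rfl }
  let L : E n ≃L[ℝ] (Fin (Module.finrank ℝ (E n)) → ℝ) :=
    ((e n).trans R.toLinearEquiv).toContinuousLinearEquiv
  have hL : ‖(L : E n →L[ℝ] Fin (Module.finrank ℝ (E n)) → ℝ)‖ ≤ 1 := by
    refine ContinuousLinearMap.opNorm_le_bound _ zero_le_one fun z => ?_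
    calc ‖R (e n z)‖ = ‖e n z‖ := R.norm_map _
      _ ≤ 1 * ‖z‖ := by rw [one_mul]; exact he n z
  have hLsymm : ‖(L.symm : (Fin (Module.finrank ℝ (E n)) → ℝ) →L[ℝ] E n)‖ ≤ lam := by
    refine ContinuousLinearMap.opNorm_le_bound _ hlam fun u => ?_
    calc ‖(e n).symm (R.symm u)‖ ≤ lam * ‖R.symm u‖ := he' n _
      _ = lam * ‖u‖ := by rw [R.symm.norm_map]
  exact ⟨L, (mul_le_of_le_one_left (ContinuousLinearMap.opNorm_nonneg _) hL).trans hLsymm⟩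

/-- Data of a Bourgain–Delbaen construction. The functional `e_γ` at an index `γ` of positive rank
agrees, on vectors supported below the rank of `γ`, with
`e_(pre γ) + β (e_(mid γ) ∘ (1 - P_(k γ))) + β (a γ) (e_(last γ) ∘ (1 - P_(l γ)))`,
where `P_n` is the projection onto the first `n` levels. The fields `pre`, `mid`, `last`, `k`, `l`
carry no information at indices of rank `0`. -/
structure BDData (Γ : Type*) where
  rank : Γ → ℕ
  root : Γ
  eq_root : ∀ γ, rank γ = 0 → γ = root
  rank_root : rank root = 0
  finite_rank_le : ∀ n, {γ | rank γ ≤ n}.Finite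
  pre : Γ → Γ
  mid : Γ → Γ
  last : Γ → Γ
  k : Γ → ℕ
  l : Γ → ℕ
  a : Γ → ℝ
  β : ℝ
  β_nonneg : 0 ≤ β
  β_le : β ≤ 1 / 8
  a_le : ∀ γ, |a γ| ≤ 1
  rank_pre : ∀ γ, 0 < rank γ → rank (pre γ) < rank γ
  rank_mid : ∀ γ, 0 < rank γ → rank (mid γ) < rank γ
  rank_last : ∀ γ, 0 < rank γ → rank (last γ) < rank γ
  pre_le_k : ∀ γ, 0 < rank γ → rank (pre γ) ≤ k γ
  pre_le_l : ∀ γ, 0 < rank γ → rank (pre γ) ≤ l γ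

theorem abs_add_mul_add_mul_mul_le {β a s x y w : ℝ} (hβ : 0 ≤ β) (hβ8 : β ≤ 1 / 8)
    (ha : |a| ≤ 1) (hx : |x| ≤ s) (hy : |y| ≤ 4 * s) (hw : |w| ≤ 4 * s) :
    |x + β * y + β * (a * w)| ≤ 2 * s := by
  have hβy : |β * y| ≤ 1 / 8 * (4 * s) := by
    rw [abs_mul, abs_of_nonneg hβ]
    exact mul_le_mul hβ8 hy (abs_nonneg _) (by norm_num)
  have haw : |a * w| ≤ 4 * s := by
    rw [abs_mul]
    exact (mul_le_of_le_one_left (abs_nonneg _) ha).trans hw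
  have hβaw : |β * (a * w)| ≤ 1 / 8 * (4 * s) := by
    rw [abs_mul, abs_of_nonneg hβ]
    exact mul_le_mul hβ8 haw (abs_nonneg _) (by norm_num)
  linarith [abs_add_le (x + β * y) (β * (a * w)), abs_add_le x (β * y)]

namespace BDData

variable {Γ : Type*} (D : BDData Γ)

instance (n : ℕ) : Finite {γ // D.rank γ ≤ n} := D.finite_rank_le n

/-- The value at `γ` of the canonical extension of the restriction of `z` to rank at most `j`. -/
noncomputable def ext (z : Γ → ℝ) (γ : Γ) (j : ℕ) : ℝ :=
  if _h : D.rank γ ≤ j then z γ else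
    ext z (D.pre γ) j + D.β * (ext z (D.mid γ) j - ext z (D.mid γ) (min (D.k γ) j)) +
      D.β * (D.a γ * (ext z (D.last γ) j - ext z (D.last γ) (min (D.l γ) j)))
termination_by D.rank γ
decreasing_by
  all_goals
    have h0 : 0 < D.rank γ := by omega
    first
    | exact D.rank_pre γ h0
    | exact D.rank_mid γ h0
    | exact D.rank_last γ h0

theorem ext_of_le (z : Γ → ℝ) {γ : Γ} {j : ℕ} (h : D.rank γ ≤ j) : D.ext z γ j = z γ := by
  rw [ext, dif_pos h]

theorem ext_of_lt (z : Γ → ℝ) {γ : Γ} {j : ℕ} (h : j < D.rank γ) :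
    D.ext z γ j = D.ext z (D.pre γ) j +
      D.β * (D.ext z (D.mid γ) j - D.ext z (D.mid γ) (min (D.k γ) j)) +
      D.β * (D.a γ * (D.ext z (D.last γ) j - D.ext z (D.last γ) (min (D.l γ) j))) := by
  rw [ext, dif_neg (by omega)]

theorem ext_of_le_rank_pre (z : Γ → ℝ) {γ : Γ} {j : ℕ} (h0 : 0 < D.rank γ)
    (h : j ≤ D.rank (D.pre γ)) : D.ext z γ j = D.ext z (D.pre γ) j := by
  rw [D.ext_of_lt z (lt_of_le_of_lt h (D.rank_pre γ h0)),
    min_eq_right (h.trans (D.pre_le_k γ h0)), min_eq_right (h.trans (D.pre_le_l γ h0))]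
  ring

theorem rank_induction {p : Γ → Prop}
    (step : ∀ γ, (0 < D.rank γ → p (D.pre γ) ∧ p (D.mid γ) ∧ p (D.last γ)) → p γ) (γ : Γ) :
    p γ := by
  induction hn : D.rank γ using Nat.strong_induction_on generalizing γ with
  | _ n ih =>
    subst hn
    exact step γ fun h0 => ⟨ih _ (D.rank_pre γ h0) _ rfl, ih _ (D.rank_mid γ h0) _ rfl,
      ih _ (D.rank_last γ h0) _ rfl⟩

theorem ext_ext (z : Γ → ℝ) (γ : Γ) (i j : ℕ) :
    D.ext (fun δ => D.ext z δ j) γ i = D.ext z γ (min i j) := by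
  induction γ using D.rank_induction generalizing i with
  | step γ ih =>
    rcases le_or_gt (D.rank γ) i with h | h
    · rw [D.ext_of_le _ h]
      rcases le_total i j with hij | hij
      · rw [min_eq_left hij, D.ext_of_le _ h, D.ext_of_le _ (h.trans hij)]
      · rw [min_eq_right hij]
    · obtain ⟨hpre, hmid, hlast⟩ := ih (by omega)
      rw [D.ext_of_lt _ h, D.ext_of_lt z (lt_of_le_of_lt (min_le_left i j) h)]
      simp only [hpre, hmid, hlast, min_assoc]

theorem ext_add (z w : Γ → ℝ) (γ : Γ) (i : ℕ) :
    D.ext (z + w) γ i = D.ext z γ i + D.ext w γ i := by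
  induction γ using D.rank_induction generalizing i with
  | step γ ih =>
    rcases le_or_gt (D.rank γ) i with h | h
    · simp [D.ext_of_le _ h]
    · obtain ⟨hpre, hmid, hlast⟩ := ih (by omega)
      simp only [D.ext_of_lt _ h, hpre, hmid, hlast]
      ring

theorem ext_smul (c : ℝ) (z : Γ → ℝ) (γ : Γ) (i : ℕ) :
    D.ext (c • z) γ i = c * D.ext z γ i := by
  induction γ using D.rank_induction generalizing i with
  | step γ ih =>
    rcases le_or_gt (D.rank γ) i with h | h
    · simp [D.ext_of_le _ h]
    · obtain ⟨hpre, hmid, hlast⟩ := ih (by omega)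
      simp only [D.ext_of_lt _ h, hpre, hmid, hlast]
      ring

theorem nonneg_of_forall_abs_le {z : Γ → ℝ} {s : ℝ} {j : ℕ}
    (hs : ∀ δ, D.rank δ ≤ j → |z δ| ≤ s) : 0 ≤ s :=
  (abs_nonneg _).trans (hs D.root (by rw [D.rank_root]; exact j.zero_le))

-- If `i` exceeds the rank of `pre γ`, the first term of the recursion is a value of `z` itself, so
-- only the terms carrying the small factor `β` see the constant `2` of the induction hypothesis.
theorem abs_ext_le {z : Γ → ℝ} {s : ℝ} {j : ℕ} (hs : ∀ δ, D.rank δ ≤ j → |z δ| ≤ s) (γ : Γ) :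
    |D.ext z γ j| ≤ 2 * s := by
  suffices ∀ i ≤ j, |D.ext z γ i| ≤ 2 * s from this j le_rfl
  induction γ using D.rank_induction with
  | step γ ih =>
    intro i hi
    rcases le_or_gt (D.rank γ) i with h | h
    · rw [D.ext_of_le _ h]
      linarith [hs γ (h.trans hi), D.nonneg_of_forall_abs_le hs]
    · have h0 : 0 < D.rank γ := by omega
      obtain ⟨hpre, hmid, hlast⟩ := ih h0
      rcases le_or_gt i (D.rank (D.pre γ)) with h' | h'
      · rw [D.ext_of_le_rank_pre z h0 h']
        exact hpre i hi
      · have hdiff (δ : Γ) (c : ℕ) (hδ : ∀ i ≤ j, |D.ext z δ i| ≤ 2 * s) :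
            |D.ext z δ i - D.ext z δ (min c i)| ≤ 4 * s := by
          linarith [abs_sub (D.ext z δ i) (D.ext z δ (min c i)), hδ i hi,
            hδ (min c i) ((min_le_right _ _).trans hi)]
        rw [D.ext_of_lt _ h, D.ext_of_le _ h'.le]
        exact abs_add_mul_add_mul_mul_le D.β_nonneg D.β_le (D.a_le γ) (hs _ (h'.le.trans hi))
          (hdiff _ _ hmid) (hdiff _ _ hlast)

section Space

variable [TopologicalSpace Γ] [DiscreteTopology Γ]

open BoundedContinuousFunction

/-- The canonical extension projection `z ↦ (γ ↦ D.ext z γ j)` on bounded functions. -/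
noncomputable def proj (j : ℕ) : (Γ →ᵇ ℝ) →L[ℝ] (Γ →ᵇ ℝ) :=
  LinearMap.mkContinuous
    { toFun := fun z => ofNormedAddCommGroupDiscrete (fun γ => D.ext z γ j) (2 * ‖z‖)
        (D.abs_ext_le fun δ _ => z.norm_coe_le_norm δ)
      map_add' := fun z w => by
        ext γ
        exact D.ext_add z w γ j
      map_smul' := fun c z => by
        ext γ
        exact D.ext_smul c z γ j }
    2 fun z => (BoundedContinuousFunction.norm_le (by positivity)).2
      (D.abs_ext_le fun δ _ => z.norm_coe_le_norm δ)

theorem norm_proj_le {j : ℕ} {z : Γ →ᵇ ℝ} {s : ℝ} (hs : ∀ δ, D.rank δ ≤ j → |z δ| ≤ s) :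
    ‖D.proj j z‖ ≤ 2 * s :=
  (BoundedContinuousFunction.norm_le
    (mul_nonneg zero_le_two (D.nonneg_of_forall_abs_le hs))).2 (D.abs_ext_le hs)

theorem proj_proj (i j : ℕ) (z : Γ →ᵇ ℝ) : D.proj i (D.proj j z) = D.proj (min i j) z := by
  ext γ
  exact D.ext_ext z γ i j

/-- The Bourgain–Delbaen space, as a subspace of the bounded functions on `Γ`. -/
def space : Submodule ℝ (Γ →ᵇ ℝ) where
  carrier := {z | Tendsto (fun n => D.proj n z) atTop (𝓝 z)}
  add_mem' {z w} hz hw := by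
    simpa using Tendsto.add hz hw
  zero_mem' := by simp
  smul_mem' c z hz := by
    simpa using Tendsto.const_smul hz c

theorem proj_mem_space (n : ℕ) (z : Γ →ᵇ ℝ) : D.proj n z ∈ D.space := by
  refine tendsto_const_nhds.congr' ?_
  filter_upwards [eventually_ge_atTop n] with m hm
  rw [proj_proj, min_eq_right hm]

theorem isClosed_space : IsClosed (D.space : Set (Γ →ᵇ ℝ)) := by
  refine isClosed_of_closure_subset fun z hz => Metric.tendsto_atTop.2 fun ε hε => ?_
  obtain ⟨w, hw, hzw⟩ := Metric.mem_closure_iff.1 hz (ε / 4) (by positivity)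
  obtain ⟨N, hN⟩ := Metric.tendsto_atTop.1 hw (ε / 4) (by positivity)
  refine ⟨N, fun n hn => ?_⟩
  have hproj : dist (D.proj n z) (D.proj n w) ≤ 2 * dist z w := by
    rw [dist_eq_norm, dist_eq_norm, ← map_sub]
    exact D.norm_proj_le fun δ _ => (z - w).norm_coe_le_norm δ
  have htriangle := dist_triangle4 (D.proj n z) (D.proj n w) w z
  rw [dist_comm w z] at htriangle
  linarith [hN n hn]

/-- The Bourgain–Delbaen space, as a type. -/
def Z : Type _ := D.space

noncomputable instance : NormedAddCommGroup D.Z := inferInstanceAs (NormedAddCommGroup D.space)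

noncomputable instance : NormedSpace ℝ D.Z := inferInstanceAs (NormedSpace ℝ D.space)

instance : CompleteSpace D.Z := D.isClosed_space.completeSpace_coe

/-- The inclusion of the Bourgain–Delbaen space into the bounded functions. -/
noncomputable def incl : D.Z →L[ℝ] (Γ →ᵇ ℝ) := D.space.subtypeL

theorem norm_incl (z : D.Z) : ‖D.incl z‖ = ‖z‖ := rfl

theorem abs_incl_le (γ : Γ) (z : D.Z) : |D.incl z γ| ≤ ‖z‖ := (D.incl z).norm_coe_le_norm γ

theorem incl_injective : Function.Injective D.incl := Subtype.val_injective

/-- The projection of the Bourgain–Delbaen space onto the levels of rank at most `n`. -/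
noncomputable def projZ (n : ℕ) : D.Z →L[ℝ] D.Z :=
  ((D.proj n).comp D.incl).codRestrict D.space fun z => D.proj_mem_space n (D.incl z)

theorem incl_projZ (n : ℕ) (z : D.Z) : D.incl (D.projZ n z) = D.proj n (D.incl z) := rfl

theorem incl_projZ_apply (n : ℕ) (z : D.Z) (γ : Γ) :
    D.incl (D.projZ n z) γ = D.ext (D.incl z) γ n := rfl

theorem projZ_projZ (i j : ℕ) (z : D.Z) : D.projZ i (D.projZ j z) = D.projZ (min i j) z :=
  D.incl_injective (D.proj_proj i j (D.incl z))

theorem tendsto_projZ (z : D.Z) : Tendsto (fun n => D.projZ n z) atTop (𝓝 z) :=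
  tendsto_subtype_rng.2 z.2

theorem norm_le_of_projZ_eq {n : ℕ} {z : D.Z} (hz : D.projZ n z = z) {s : ℝ}
    (hs : ∀ δ, D.rank δ ≤ n → |D.incl z δ| ≤ s) : ‖z‖ ≤ 2 * s := by
  rw [← D.norm_incl, ← hz, D.incl_projZ]
  exact D.norm_proj_le hs

/-- The range of `projZ n`. -/
noncomputable def level (n : ℕ) : Submodule ℝ D.Z :=
  LinearMap.range (D.projZ n : D.Z →ₗ[ℝ] D.Z)

theorem projZ_of_mem_level {n : ℕ} {z : D.Z} (hz : z ∈ D.level n) : D.projZ n z = z := by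
  obtain ⟨w, rfl⟩ := hz
  exact (D.projZ_projZ n n w).trans (by rw [min_self]; rfl)

theorem monotone_level : Monotone D.level := by
  rintro i j hij _ ⟨w, rfl⟩
  exact ⟨D.projZ i w, (D.projZ_projZ j i w).trans (by rw [min_eq_right hij]; rfl)⟩

theorem dense_iUnion_level : Dense (⋃ n, (D.level n : Set D.Z)) := fun z =>
  mem_closure_of_tendsto (D.tendsto_projZ z)
    (Eventually.of_forall fun n => Set.mem_iUnion.2 ⟨n, z, rfl⟩)

/-- Restriction of a vector of `level n` to the indices of rank at most `n`. -/
noncomputable def restrict (n : ℕ) : D.level n →ₗ[ℝ] ({γ // D.rank γ ≤ n} → ℝ) :=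
  LinearMap.pi fun γ =>
    ((evalCLM ℝ γ.1).comp D.incl).toLinearMap ∘ₗ (D.level n).subtype

theorem restrict_apply {n : ℕ} (z : D.level n) (γ : {γ // D.rank γ ≤ n}) :
    D.restrict n z γ = D.incl z γ := rfl

theorem restrict_injective (n : ℕ) : Function.Injective (D.restrict n) := by
  refine (injective_iff_map_eq_zero _).2 fun z hz => ?_
  have hnorm := D.norm_le_of_projZ_eq (D.projZ_of_mem_level z.2) (s := 0) fun δ hδ => by
    rw [← D.restrict_apply z ⟨δ, hδ⟩, hz, Pi.zero_apply, abs_zero]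
  exact Subtype.ext (norm_le_zero_iff.1 (by simpa using hnorm))

theorem restrict_surjective (n : ℕ) : Function.Surjective (D.restrict n) := by
  intro u
  classical
  have : Fintype {γ // D.rank γ ≤ n} := (D.finite_rank_le n).fintype
  let w : Γ →ᵇ ℝ := ofNormedAddCommGroupDiscrete
    (fun γ => if h : D.rank γ ≤ n then u ⟨γ, h⟩ else 0) ‖u‖ fun γ => by
      split_ifs with h
      · exact norm_le_pi_norm u _
      · simp
  let y : D.Z := (⟨D.proj n w, D.proj_mem_space n w⟩ : D.space)
  have hy : D.projZ n y = y := D.incl_injective ((D.proj_proj n n w).trans (by rw [min_self]; rfl))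
  refine ⟨⟨y, y, hy⟩, ?_⟩
  ext γ
  exact (D.ext_of_le w γ.2).trans (dif_pos γ.2)

/-- The identification of `level n` with all functions on the indices of rank at most `n`. -/
noncomputable def levelEquiv (n : ℕ) : D.level n ≃ₗ[ℝ] ({γ // D.rank γ ≤ n} → ℝ) :=
  LinearEquiv.ofBijective (D.restrict n) ⟨D.restrict_injective n, D.restrict_surjective n⟩

theorem isLinfty : IsLinfty D.Z := by
  have (n : ℕ) : Fintype {γ // D.rank γ ≤ n} := (D.finite_rank_le n).fintype
  refine ⟨2, IsLinftyLambda.of_linearEquiv_pi D.monotone_level D.dense_iUnion_level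
    D.levelEquiv zero_le_two (fun n z => ?_) fun n u => ?_⟩
  · exact (pi_norm_le_iff_of_nonneg (norm_nonneg _)).2 fun γ => D.abs_incl_le γ z
  · refine D.norm_le_of_projZ_eq (D.projZ_of_mem_level (Subtype.prop _)) fun δ hδ => ?_
    rw [← D.restrict_apply _ ⟨δ, hδ⟩]
    change |D.levelEquiv n ((D.levelEquiv n).symm u) _| ≤ _
    rw [LinearEquiv.apply_symm_apply]
    exact norm_le_pi_norm u _

/-- The partial sum projections of the decomposition by rank: the shift of `projZ` by one, as the
partial sum with index `0` has to vanish. -/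
noncomputable def partialSum : ℕ → D.Z →L[ℝ] D.Z
  | 0 => 0
  | n + 1 => D.projZ n

/-- The decomposition of the Bourgain–Delbaen space by rank. -/
noncomputable def fdd : FDDOn D.Z :=
  FDDOn.ofPartialSums D.partialSum rfl
    (fun i j x => by
      rcases i with _ | i <;> rcases j with _ | j <;> simp [partialSum, projZ_projZ])
    (fun n => by
      rcases n with _ | n
      · refine Submodule.finiteDimensional_of_le (S₂ := ⊥) ?_
        rintro _ ⟨x, rfl⟩
        rfl
      · exact (D.levelEquiv n).symm.finiteDimensional)
    (fun x => (tendsto_add_atTop_iff_nat 1).1 (by simpa [partialSum] using D.tendsto_projZ x))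

theorem fdd_S_succ (n : ℕ) (z : D.Z) : D.fdd.S (n + 1) z = D.projZ n z :=
  FDDOn.ofPartialSums_S _ _ _ _ _ (n + 1) z

end Space

end BDData

namespace BDData

variable {Γ : Type*} (D : BDData Γ)

/-- `x` is the parent of `y` in the tree on `Γ` given by `pre`, whose root is the index of rank
`0`. -/
def IsParent (x y : Γ) : Prop := 0 < D.rank y ∧ D.pre y = x

theorem reflTransGen_root (γ : Γ) : Relation.ReflTransGen D.IsParent D.root γ := by
  induction γ using D.rank_induction with
  | step γ ih =>
    rcases Nat.eq_zero_or_pos (D.rank γ) with h | h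
    · rw [D.eq_root γ h]
    · exact (ih h).1.tail ⟨h, rfl⟩

-- `δ` is the last node below which `U` concentrates.
theorem exists_eventually_eq_or_child (hwf : WellFounded (Function.swap D.IsParent))
    (U : Ultrafilter Γ) :
    ∃ δ, (∀ᶠ γ in (U : Filter Γ), γ = δ) ∨ ∃ c : Γ → Γ,
      (∀ᶠ γ in (U : Filter Γ), D.IsParent δ (c γ) ∧ Relation.ReflTransGen D.IsParent (c γ) γ) ∧
      ∀ M, ∀ᶠ γ in (U : Filter Γ), M < D.rank (c γ) := by
  obtain ⟨δ, hδ : ∀ᶠ γ in (U : Filter Γ), Relation.ReflTransGen D.IsParent δ γ, hmin⟩ :=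
    hwf.has_min {δ | ∀ᶠ γ in (U : Filter Γ), Relation.ReflTransGen D.IsParent δ γ}
      ⟨D.root, Eventually.of_forall D.reflTransGen_root⟩
  refine ⟨δ, or_iff_not_imp_left.2 fun hne => ?_⟩
  obtain ⟨c, hc⟩ := Eventually.choice (l := (U : Filter Γ))
    (r := fun γ x => D.IsParent δ x ∧ Relation.ReflTransGen D.IsParent x γ) (by
      filter_upwards [hδ, Ultrafilter.eventually_not.2 hne] with γ hγ hγδ
      exact hγ.cases_head.resolve_left fun h => hγδ h.symm)
  refine ⟨c, hc, fun M => ?_⟩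
  by_contra hM
  have hmem : (⋃ x ∈ {γ | D.rank γ ≤ M}, {γ | c γ = x}) ∈ U := by
    filter_upwards [Ultrafilter.eventually_not.2 hM] with γ hγ
    simpa using hγ
  obtain ⟨x, -, hx : ∀ᶠ γ in (U : Filter Γ), c γ = x⟩ :=
    (Ultrafilter.finite_biUnion_mem_iff (D.finite_rank_le M)).1 hmem
  obtain ⟨γ, hγ, rfl⟩ := (hc.and hx).exists
  exact hmin (c γ) ((hc.and hx).mono fun γ' h => h.2 ▸ h.1.2) hγ.1

variable [TopologicalSpace Γ] [DiscreteTopology Γ]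

open BoundedContinuousFunction

/-- Evaluation at an index. -/
noncomputable def ev (γ : Γ) : D.Z →L[ℝ] ℝ := (evalCLM ℝ γ).comp D.incl

theorem ev_apply (γ : Γ) (z : D.Z) : D.ev γ z = D.incl z γ := rfl

theorem ext_eq_zero {m : ℕ} {z : D.Z} (hz : D.projZ m z = 0) (γ : Γ) {c : ℕ} (hc : c ≤ m) :
    D.ext (D.incl z) γ c = 0 := by
  have h := D.projZ_projZ c m z
  rw [hz, map_zero, min_eq_left hc] at h
  rw [← D.incl_projZ_apply, ← h, map_zero]
  rfl

theorem ext_eq_incl {m : ℕ} {z : D.Z} (hz : D.projZ m z = z) (γ : Γ) {c : ℕ} (hc : m ≤ c) :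
    D.ext (D.incl z) γ c = D.incl z γ := by
  have h := D.projZ_projZ c m z
  rw [min_eq_right hc, hz] at h
  rw [← D.incl_projZ_apply, h]

theorem incl_eq_zero {m : ℕ} {z : D.Z} (hz : D.projZ m z = 0) {γ : Γ} (hγ : D.rank γ ≤ m) :
    D.incl z γ = 0 := by
  rw [← D.ext_of_le (D.incl z) hγ, D.ext_eq_zero hz _ le_rfl]

theorem incl_eq_of_lt_rank {N : ℕ} {z : D.Z} (hz : D.projZ N z = z) {γ : Γ} (hγ : N < D.rank γ) :
    D.incl z γ = D.incl z (D.pre γ) +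
      D.β * (D.incl z (D.mid γ) - D.ext (D.incl z) (D.mid γ) (D.k γ)) +
      D.β * (D.a γ * (D.incl z (D.last γ) - D.ext (D.incl z) (D.last γ) (D.l γ))) := by
  have hmin (δ : Γ) (c : ℕ) : D.ext (D.incl z) δ (min c N) = D.ext (D.incl z) δ c := by
    rw [← D.incl_projZ_apply, ← D.projZ_projZ, hz, D.incl_projZ_apply]
  rw [← D.ext_eq_incl hz γ le_rfl, D.ext_of_lt _ hγ, hmin, hmin, D.ext_eq_incl hz _ le_rfl,
    D.ext_eq_incl hz _ le_rfl, D.ext_eq_incl hz _ le_rfl]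

theorem incl_eq_of_reflTransGen {N : ℕ} {z : D.Z} (hz : D.projZ N z = z) {c γ : Γ}
    (h : Relation.ReflTransGen D.IsParent c γ) (hc : N ≤ D.rank c) :
    D.incl z γ = D.incl z c := by
  suffices D.incl z γ = D.incl z c ∧ N ≤ D.rank γ from this.1
  induction h with
  | refl => exact ⟨rfl, hc⟩
  | @tail x y _ hxy ih =>
    obtain ⟨h0, rfl⟩ := hxy
    refine ⟨?_, ih.2.trans (D.rank_pre y h0).le⟩
    rw [← ih.1, ← D.ext_eq_incl hz y le_rfl, D.ext_of_le_rank_pre _ h0 ih.2,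
      D.ext_eq_incl hz _ le_rfl]

/-- A sequence of finitely supported vectors of the Bourgain–Delbaen space whose supports
eventually leave every level. -/
structure IsEscaping (z : ℕ → D.Z) : Prop where
  exists_projZ_eq : ∀ j, ∃ N, D.projZ N (z j) = z j
  eventually_projZ_eq_zero : ∀ m, ∀ᶠ j in atTop, D.projZ m (z j) = 0

variable {D} {z : ℕ → D.Z}

-- Either the cuts stay bounded along `U`, and then `P_(cut γ) (z j) = 0` for large `j`, or they
-- tend to infinity, and then `P_(cut γ) (z j) = z j` along `U`.
theorem IsEscaping.exists_tendsto_term (hz : D.IsEscaping z) (U : Ultrafilter Γ) (p : Γ → Γ)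
    (cut : Γ → ℕ) {a : Γ → ℝ} (ha : ∀ γ, |a γ| ≤ 1) :
    ∃ b : D.Z →L[ℝ] ℝ, (∀ x, |b x| ≤ ‖x‖) ∧ ∀ᶠ j in atTop, ∃ L, |L| ≤ |b (z j)| ∧
      Tendsto (fun γ => a γ * (D.incl (z j) (p γ) - D.ext (D.incl (z j)) (p γ) (cut γ))) U
        (𝓝 L) := by
  obtain ⟨b, hb, hlim⟩ := exists_tendsto_ultrafilter (fun γ => a γ • D.ev (p γ)) 1 (fun γ x => by
    change |a γ * D.incl x (p γ)| ≤ 1 * ‖x‖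
    rw [abs_mul]
    exact mul_le_mul (ha γ) (D.abs_incl_le _ x) (abs_nonneg _) zero_le_one) U
  refine ⟨b, fun x => (hb x).trans_eq (one_mul _), ?_⟩
  by_cases hM : ∃ M, ∀ᶠ γ in (U : Filter Γ), cut γ ≤ M
  · obtain ⟨M, hM⟩ := hM
    filter_upwards [hz.eventually_projZ_eq_zero M] with j hj
    refine ⟨b (z j), le_rfl, (hlim (z j)).congr' ?_⟩
    filter_upwards [hM] with γ hγ
    rw [D.ext_eq_zero hj _ hγ, sub_zero]
    rfl
  · refine Eventually.of_forall fun j => ⟨0, by simp, tendsto_const_nhds.congr' ?_⟩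
    obtain ⟨N, hN⟩ := hz.exists_projZ_eq j
    filter_upwards [Ultrafilter.eventually_not.2 fun h => hM ⟨N, h⟩] with γ hγ
    rw [D.ext_eq_incl hN _ (not_le.1 hγ).le, sub_self, mul_zero]

theorem IsEscaping.exists_abs_limit_le (hz : D.IsEscaping z)
    (hwf : WellFounded (Function.swap D.IsParent)) {U : Ultrafilter Γ} {k : D.Z →L[ℝ] ℝ}
    (hk : ∀ x, Tendsto (fun γ => D.ev γ x) U (𝓝 (k x))) :
    ∃ b₁ b₂ : D.Z →L[ℝ] ℝ, (∀ x, |b₁ x| ≤ ‖x‖) ∧ (∀ x, |b₂ x| ≤ ‖x‖) ∧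
      ∀ᶠ j in atTop, |k (z j)| ≤ D.β * (|b₁ (z j)| + |b₂ (z j)|) := by
  obtain ⟨δ, hU | ⟨c, hc, hrank⟩⟩ := D.exists_eventually_eq_or_child hwf U
  · refine ⟨0, 0, by simp, by simp, ?_⟩
    filter_upwards [hz.eventually_projZ_eq_zero (D.rank δ)] with j hj
    have hkz : k (z j) = 0 := by
      refine tendsto_nhds_unique (hk (z j)) (tendsto_const_nhds.congr' ?_)
      filter_upwards [hU] with γ hγ
      rw [hγ, ev_apply, D.incl_eq_zero hj le_rfl]
    simp [hkz]
  · obtain ⟨b₁, hb₁, h₁⟩ := hz.exists_tendsto_term U (fun γ => D.mid (c γ))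
      (fun γ => D.k (c γ)) (a := 1) (by simp)
    obtain ⟨b₂, hb₂, h₂⟩ := hz.exists_tendsto_term U (fun γ => D.last (c γ))
      (fun γ => D.l (c γ)) (a := fun γ => D.a (c γ)) fun γ => D.a_le _
    refine ⟨b₁, b₂, hb₁, hb₂, ?_⟩
    filter_upwards [h₁, h₂, hz.eventually_projZ_eq_zero (D.rank δ)]
      with j ⟨L₁, hL₁, hlim₁⟩ ⟨L₂, hL₂, hlim₂⟩ hj
    obtain ⟨N, hN⟩ := hz.exists_projZ_eq j
    have hkz : k (z j) = D.β * (L₁ + L₂) := by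
      refine tendsto_nhds_unique (hk (z j)) (((hlim₁.add hlim₂).const_mul D.β).congr' ?_)
      filter_upwards [hc, hrank N] with γ hγ hNγ
      rw [ev_apply, D.incl_eq_of_reflTransGen hN hγ.2 hNγ.le, D.incl_eq_of_lt_rank hN hNγ,
        hγ.1.2, D.incl_eq_zero hj le_rfl]
      simp only [Pi.one_apply]
      ring
    rw [hkz, abs_mul, abs_of_nonneg D.β_nonneg]
    exact mul_le_mul_of_nonneg_left ((abs_add_le _ _).trans (add_le_add hL₁ hL₂)) D.β_nonneg

variable (D) in
theorem exists_ultrafilter_norming (x : D.Z) :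
    ∃ (U : Ultrafilter Γ) (k : D.Z →L[ℝ] ℝ), (∀ y, |k y| ≤ ‖y‖) ∧
      (∀ y, Tendsto (fun γ => D.ev γ y) U (𝓝 (k y))) ∧ |k x| = ‖x‖ := by
  have hseq (n : ℕ) : ∃ γ, ‖x‖ - 1 / (n + 1 : ℝ) ≤ |D.ev γ x| := by
    by_contra! h
    have hpos : (0 : ℝ) < 1 / (n + 1 : ℝ) := by positivity
    have hle := (BoundedContinuousFunction.norm_le (f := D.incl x)
      ((abs_nonneg _).trans (h D.root).le)).2 fun γ => (h γ).le
    rw [D.norm_incl] at hle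
    linarith
  choose g hg using hseq
  let U : Ultrafilter Γ := (hyperfilter ℕ).map g
  obtain ⟨k, hk, hlim⟩ := exists_tendsto_ultrafilter D.ev 1
    (fun γ y => (D.abs_incl_le γ y).trans_eq (one_mul _).symm) U
  simp only [one_mul] at hk
  refine ⟨U, k, hk, hlim, le_antisymm (hk x) ?_⟩
  have hkx : Tendsto (fun n => |D.ev (g n) x|) (hyperfilter ℕ) (𝓝 |k x|) := by
    have := (hlim x).abs
    rwa [Ultrafilter.coe_map, tendsto_map'_iff] at this
  have hx : Tendsto (fun n : ℕ => ‖x‖ - 1 / (n + 1 : ℝ)) (hyperfilter ℕ) (𝓝 (‖x‖ - 0)) :=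
    (tendsto_const_nhds.sub tendsto_one_div_add_atTop_nhds_zero_nat).mono_left
      (by rw [← Nat.cofinite_eq_atTop]; exact hyperfilter_le_cofinite)
  rw [sub_zero] at hx
  exact le_of_tendsto_of_tendsto hx hkx (Eventually.of_forall hg)

theorem IsEscaping.eventually_abs_apply_le_half (hz : D.IsEscaping z)
    (hwf : WellFounded (Function.swap D.IsParent)) {M : ℝ} (hM : ∀ j, ‖z j‖ ≤ M) {s : ℝ}
    (hs : 0 < s)
    (h : ∀ b : D.Z →L[ℝ] ℝ, (∀ x, |b x| ≤ ‖x‖) → ∀ᶠ j in atTop, |b (z j)| ≤ s)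
    {b : D.Z →L[ℝ] ℝ} (hb : ∀ x, |b x| ≤ ‖x‖) : ∀ᶠ j in atTop, |b (z j)| ≤ s / 2 := by
  refine eventually_abs_apply_le_of_norming hM (show s / 4 < s / 2 by linarith) (fun x => ?_) hb
  obtain ⟨U, k, hk, hlim, hkx⟩ := D.exists_ultrafilter_norming x
  obtain ⟨b₁, b₂, hb₁, hb₂, hle⟩ := hz.exists_abs_limit_le hwf hlim
  refine ⟨k, hk, hkx, ?_⟩
  filter_upwards [hle, h b₁ hb₁, h b₂ hb₂] with j hj h₁ h₂
  have := mul_le_mul D.β_le (add_le_add h₁ h₂) (by positivity) (by norm_num)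
  linarith

theorem IsEscaping.tendsto_apply (hz : D.IsEscaping z)
    (hwf : WellFounded (Function.swap D.IsParent)) (hz1 : ∀ j, ‖z j‖ ≤ 1) (f : D.Z →L[ℝ] ℝ) :
    Tendsto (fun j => f (z j)) atTop (𝓝 0) := by
  have hpow (n : ℕ) : ∀ b : D.Z →L[ℝ] ℝ, (∀ x, |b x| ≤ ‖x‖) →
      ∀ᶠ j in atTop, |b (z j)| ≤ (1 / 2) ^ n := by
    induction n with
    | zero => exact fun b hb => Eventually.of_forall fun j => by simpa using (hb _).trans (hz1 j)
    | succ n ih =>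
      intro b hb
      filter_upwards [hz.eventually_abs_apply_le_half hwf hz1 (by positivity) ih hb] with j hj
      rw [pow_succ]
      linarith
  have hC : 0 < ‖f‖ + 1 := by positivity
  have hscaled (x : D.Z) : ((‖f‖ + 1)⁻¹ • f) x = (‖f‖ + 1)⁻¹ * f x := rfl
  refine Metric.tendsto_nhds.2 fun ε hε => ?_
  obtain ⟨n, hn⟩ := exists_pow_lt_of_lt_one (show 0 < ε / (‖f‖ + 1) by positivity)
    (show (1 / 2 : ℝ) < 1 by norm_num)
  filter_upwards [hpow n ((‖f‖ + 1)⁻¹ • f) fun x => by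
    rw [hscaled, abs_mul, abs_of_pos (inv_pos.2 hC), inv_mul_le_iff₀ hC]
    exact (f.le_opNorm x).trans (by gcongr; linarith)] with j hj
  rw [hscaled, abs_mul, abs_of_pos (inv_pos.2 hC)] at hj
  have hlt := hj.trans_lt hn
  rwa [inv_mul_lt_iff₀ hC, mul_div_cancel₀ _ hC.ne', ← Real.norm_eq_abs, ← dist_zero_right] at hlt

theorem fdd_shrinking (hwf : WellFounded (Function.swap D.IsParent)) : D.fdd.Shrinking := by
  intro z a b ⟨hsupp, hab⟩ hz f
  have ha : StrictMono a := strictMono_nat_of_lt_succ fun n => (hsupp n).1.trans_lt (hab n)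
  refine IsEscaping.tendsto_apply ⟨fun j => ⟨b j, ?_⟩, fun m => ?_⟩ hwf (fun j => (hz j).le) f
  · rw [← D.fdd_S_succ]
    exact D.fdd.S_eq_self_of_supp fun i hi => Nat.lt_succ_of_le ((hsupp j).2.1 hi).2
  · filter_upwards [eventually_gt_atTop m] with j hj
    rw [← D.fdd_S_succ]
    exact D.fdd.S_eq_zero_of_supp fun i hi => (hj.trans_le ha.le_apply).trans_le
      ((hsupp j).2.1 hi).1

end BDData

section Basis

theorem sum_range_comp {M : Type*} [AddCommMonoid M] {a : ℕ → ℕ} (ha : StrictMono a) (t : ℕ)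
    {g : ℕ → M} (hg : ∀ m ∉ Set.range a, g m = 0) :
    ∑ m ∈ Finset.range (a t), g m = ∑ i ∈ Finset.range t, g (a i) := by
  refine (Finset.sum_of_injOn a ha.injective.injOn (fun i hi => ?_) (fun m hm hma => ?_)
    fun _ _ => rfl).symm
  · simpa [ha.lt_iff_lt] using hi
  · refine hg m ?_
    rintro ⟨i, rfl⟩
    exact hma ⟨i, by simpa [ha.lt_iff_lt] using hm, rfl⟩

theorem sum_range_two_mul {M : Type*} [AddCommMonoid M] (f : ℕ → M) (t : ℕ) :
    ∑ i ∈ Finset.range (2 * t), f i =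
      ∑ n ∈ Finset.range t, f (2 * n) + ∑ n ∈ Finset.range t, f (2 * n + 1) := by
  induction t with
  | zero => simp
  | succ t ih =>
    rw [mul_add, mul_one, Finset.sum_range_succ, Finset.sum_range_succ, ih,
      Finset.sum_range_succ _ t, Finset.sum_range_succ _ t]
    abel

variable {V : Type*} [NormedAddCommGroup V] [NormedSpace ℝ V] {v : ℕ → V}

theorem sum_range_extend_smul {a : ℕ → ℕ} (ha : StrictMono a) (t : ℕ) (c : ℕ → ℝ) :
    ∑ m ∈ Finset.range (a t), Function.extend a c 0 m • v m =
      ∑ i ∈ Finset.range t, c i • v (a i) := by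
  rw [sum_range_comp ha t fun m hm => by
    rw [Function.extend_apply' _ _ _ hm, Pi.zero_apply, zero_smul]]
  simp only [ha.injective.extend_apply]

/-- The coefficients `α` induce a functional of lattice norm at most `r` on the span of `v`. -/
def DualBound (v : ℕ → V) (α : ℕ → ℝ) (r : ℝ) : Prop :=
  ∀ (c : ℕ → ℝ) (N : ℕ),
    ∑ i ∈ Finset.range N, |α i| * |c i| ≤ r * ‖∑ i ∈ Finset.range N, c i • v i‖

/-- The sequence `v` is `Ku`-unconditional. -/
def UncondWith (v : ℕ → V) (Ku : ℝ) : Prop :=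
  ∀ (a ε : ℕ → ℝ) (N : ℕ), (∀ i, |ε i| ≤ 1) →
    ‖∑ i ∈ Finset.range N, (ε i * a i) • v i‖ ≤ Ku * ‖∑ i ∈ Finset.range N, a i • v i‖

/-- `(v (p n))` `C`-dominates `(v (q n))` for all interlacing `p 0 < q 0 < p 1 < q 1 < ⋯`. -/
def DominatesInterlacing (v : ℕ → V) (C : ℝ) : Prop :=
  ∀ p q : ℕ → ℕ, (∀ n, p n < q n) → (∀ n, q n < p (n + 1)) → ∀ (co : ℕ → ℝ) (N : ℕ),
    ‖∑ n ∈ Finset.range N, co n • v (q n)‖ ≤ C * ‖∑ n ∈ Finset.range N, co n • v (p n)‖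

namespace DualBound

variable {α α' : ℕ → ℝ} {r s : ℝ}

theorem mono (h : DualBound v α r) (hα : ∀ i, |α' i| ≤ |α i|) : DualBound v α' r := fun c N =>
  (Finset.sum_le_sum fun i _ => mul_le_mul_of_nonneg_right (hα i) (abs_nonneg _)).trans (h c N)

theorem le (h : DualBound v α r) (hrs : r ≤ s) : DualBound v α s :=
  fun c N => (h c N).trans (mul_le_mul_of_nonneg_right hrs (norm_nonneg _))

theorem smul {t : ℝ} (h : DualBound v α r) (ht : 0 ≤ t) :
    DualBound v (fun i => t * α i) (t * r) := fun c N => by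
  simpa only [Finset.mul_sum, abs_mul, abs_of_nonneg ht, mul_assoc] using
    mul_le_mul_of_nonneg_left (h c N) ht

theorem add (h : DualBound v α r) (h' : DualBound v α' s) :
    DualBound v (fun i => α i + α' i) (r + s) := fun c N => by
  calc ∑ i ∈ Finset.range N, |α i + α' i| * |c i|
      ≤ ∑ i ∈ Finset.range N, (|α i| * |c i| + |α' i| * |c i|) := by
        refine Finset.sum_le_sum fun i _ => ?_
        rw [← add_mul]
        exact mul_le_mul_of_nonneg_right (abs_add_le _ _) (abs_nonneg _)
    _ ≤ (r + s) * ‖∑ i ∈ Finset.range N, c i • v i‖ := by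
        rw [Finset.sum_add_distrib, add_mul]
        exact add_le_add (h c N) (h' c N)

theorem zero (hr : 0 ≤ r) : DualBound v (fun _ => 0) r := fun c N => by
  simp only [abs_zero, zero_mul, Finset.sum_const_zero]
  positivity

theorem abs_le (h : DualBound v α r) (hv : ∀ i, ‖v i‖ = 1) (i : ℕ) : |α i| ≤ r := by
  simpa [Pi.single_apply, hv, ite_smul, apply_ite] using h (Pi.single i 1) (i + 1)

theorem comp_strictMono (h : DualBound v α r) {a : ℕ → ℕ} (ha : StrictMono a) :
    DualBound (v ∘ a) (α ∘ a) r := fun c t => by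
  have hext := h (Function.extend a c 0) (a t)
  rw [sum_range_extend_smul ha, sum_range_comp ha t fun m hm => by
    rw [Function.extend_apply' _ _ _ hm, Pi.zero_apply, abs_zero, mul_zero]] at hext
  simpa only [ha.injective.extend_apply, Function.comp_apply] using hext

theorem exists_functional (hv : LinearIndependent ℝ v) (h : DualBound v α r) :
    ∃ f : V →L[ℝ] ℝ, ∀ i, f (v i) = α i := by
  let b := Module.Basis.span hv
  have hb (i : ℕ) : (b i : V) = v i := congrArg Subtype.val (Module.Basis.span_apply hv i)
  let f₀ : Submodule.span ℝ (Set.range v) →ₗ[ℝ] ℝ := b.constr ℝ α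
  have hf₀ (x) : ‖f₀ x‖ ≤ r * ‖x‖ := by
    set l := b.repr x
    obtain ⟨N, hN⟩ := Finset.exists_nat_subset_range l.support
    have hsum : x = ∑ i ∈ Finset.range N, l i • b i := by
      conv_lhs => rw [← b.linearCombination_repr x, Finsupp.linearCombination_apply]
      exact Finsupp.sum_of_support_subset _ hN _ fun i _ => zero_smul ℝ _
    have hx : (x : V) = ∑ i ∈ Finset.range N, l i • v i := by
      simpa [hb] using congrArg Subtype.val hsum
    have hfx : f₀ x = ∑ i ∈ Finset.range N, α i * l i := by
      conv_lhs => rw [hsum]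
      simp [f₀, b.constr_basis, mul_comm]
    calc ‖f₀ x‖ ≤ ∑ i ∈ Finset.range N, |α i| * |l i| := by
          simpa only [hfx, abs_mul, Real.norm_eq_abs] using
            Finset.abs_sum_le_sum_abs (fun i => α i * l i) (Finset.range N)
      _ ≤ r * ‖x‖ := by simpa only [← hx, Submodule.coe_norm] using h l N
  obtain ⟨f, hf, -⟩ := exists_extension_norm_eq _ (f₀.mkContinuous r hf₀)
  refine ⟨f, fun i => ?_⟩
  rw [← hb, hf, LinearMap.mkContinuous_apply, b.constr_basis]

end DualBound

theorem exists_sign_apply_smul (f : V →L[ℝ] ℝ) (v : ℕ → V) (c : ℕ → ℝ) :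
    ∃ ε : ℕ → ℝ, (∀ i, |ε i| ≤ 1) ∧ ∀ i, f ((ε i * c i) • v i) = |f (v i)| * |c i| := by
  refine ⟨fun i => SignType.sign (f (v i) * c i), fun i => ?_, fun i => ?_⟩
  · rcases lt_trichotomy (f (v i) * c i) 0 with h | h | h <;> simp [h]
  · rw [← abs_mul, ← sign_mul_self, map_smul, smul_eq_mul]
    ring

namespace UncondWith

variable {Ku : ℝ}

theorem abs_coord_le (hK : UncondWith v Ku) (hv : ∀ i, ‖v i‖ = 1) (c : ℕ → ℝ) {i N : ℕ}
    (hi : i < N) : |c i| ≤ Ku * ‖∑ i ∈ Finset.range N, c i • v i‖ := by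
  have hsingle := hK c (fun j => if j = i then 1 else 0) N (fun j => by split_ifs <;> simp)
  rw [Finset.sum_eq_single_of_mem i (Finset.mem_range.2 hi) (fun j _ hj => by simp [hj])] at hsingle
  simpa [norm_smul, hv] using hsingle

theorem one_le (hK : UncondWith v Ku) (hv : ∀ i, ‖v i‖ = 1) : 1 ≤ Ku := by
  simpa [hv] using hK 1 1 1 (by simp)

theorem linearIndependent (hK : UncondWith v Ku) (hv : ∀ i, ‖v i‖ = 1) :
    LinearIndependent ℝ v := by
  refine linearIndependent_iff'.2 fun s c hc i hi => ?_
  obtain ⟨N, hN⟩ := Finset.exists_nat_subset_range s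
  have hsum : ∑ j ∈ Finset.range N, (if j ∈ s then c j else 0) • v j = 0 := by
    rw [← hc, ← Finset.sum_subset hN fun j _ hj => by rw [if_neg hj, zero_smul]]
    exact Finset.sum_congr rfl fun j hj => by rw [if_pos hj]
  have := hK.abs_coord_le hv (fun j => if j ∈ s then c j else 0) (Finset.mem_range.1 (hN hi))
  rw [hsum, norm_zero, mul_zero, if_pos hi] at this
  exact abs_nonpos_iff.1 this

theorem comp_strictMono (hK : UncondWith v Ku) {a : ℕ → ℕ} (ha : StrictMono a) :
    UncondWith (v ∘ a) Ku := fun c ε t hε => by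
  have hmul (m : ℕ) : Function.extend a (fun i => ε i * c i) 0 m =
      Function.extend a ε 0 m * Function.extend a c 0 m := by
    by_cases hm : m ∈ Set.range a
    · obtain ⟨i, rfl⟩ := hm
      simp only [ha.injective.extend_apply]
    · simp only [Function.extend_apply' _ _ _ hm, Pi.zero_apply, mul_zero]
  have hsign (m : ℕ) : |Function.extend a ε 0 m| ≤ 1 := by
    by_cases hm : m ∈ Set.range a
    · obtain ⟨i, rfl⟩ := hm
      simpa only [ha.injective.extend_apply] using hε i
    · simp [Function.extend_apply' _ _ _ hm]
  simpa only [← hmul, sum_range_extend_smul ha, Function.comp_apply] using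
    hK (Function.extend a c 0) (Function.extend a ε 0) (a t) hsign

theorem dualBound_apply (hK : UncondWith v Ku) (f : V →L[ℝ] ℝ) :
    DualBound v (fun i => f (v i)) (Ku * ‖f‖) := fun c N => by
  obtain ⟨ε, hε, hf⟩ := exists_sign_apply_smul f v c
  calc ∑ i ∈ Finset.range N, |f (v i)| * |c i|
      = f (∑ i ∈ Finset.range N, (ε i * c i) • v i) := by simp only [map_sum, hf]
    _ ≤ ‖f‖ * ‖∑ i ∈ Finset.range N, (ε i * c i) • v i‖ := (le_abs_self _).trans (f.le_opNorm _)
    _ ≤ ‖f‖ * (Ku * ‖∑ i ∈ Finset.range N, c i • v i‖) := by gcongr; exact hK c ε N hε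
    _ = Ku * ‖f‖ * ‖∑ i ∈ Finset.range N, c i • v i‖ := by ring

theorem exists_dualBound_norming (hK : UncondWith v Ku) (hKu : 1 ≤ Ku) (c : ℕ → ℝ) (N : ℕ) :
    ∃ α, DualBound v α 1 ∧
      Ku * ∑ i ∈ Finset.range N, α i * c i = ‖∑ i ∈ Finset.range N, c i • v i‖ := by
  obtain ⟨f, hf, hfw⟩ := exists_dual_vector'' ℝ (∑ i ∈ Finset.range N, c i • v i)
  have hK0 : 0 < Ku := by linarith
  refine ⟨fun i => Ku⁻¹ * f (v i),
    ((hK.dualBound_apply f).smul (inv_nonneg.2 hK0.le)).le ?_, ?_⟩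
  · rwa [inv_mul_cancel_left₀ hK0.ne']
  · rw [RCLike.ofReal_real_eq_id, id] at hfw
    rw [← hfw, map_sum, Finset.mul_sum]
    refine Finset.sum_congr rfl fun i _ => ?_
    rw [map_smul, smul_eq_mul]
    field_simp

theorem norm_sum_even_odd_le (hK : UncondWith v Ku) (c : ℕ → ℝ) (t : ℕ) :
    ‖∑ n ∈ Finset.range t, c (2 * n) • v (2 * n)‖ +
        ‖∑ n ∈ Finset.range t, c (2 * n + 1) • v (2 * n + 1)‖ ≤
      2 * Ku * ‖∑ i ∈ Finset.range (2 * t), c i • v i‖ := by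
  have heven := hK c (fun i => if Even i then 1 else 0) (2 * t) (fun i => by split_ifs <;> simp)
  have hodd := hK c (fun i => if Even i then 0 else 1) (2 * t) (fun i => by split_ifs <;> simp)
  rw [sum_range_two_mul] at heven hodd
  simp only [Nat.not_even_two_mul_add_one, even_two_mul, if_true, if_false, one_mul, zero_mul,
    zero_smul, Finset.sum_const_zero, add_zero, zero_add] at heven hodd
  linarith

end UncondWith

namespace DominatesInterlacing

variable {Ku C : ℝ} {a q : ℕ → ℕ}

theorem one_le (hdom : DominatesInterlacing v C) (hv : ∀ i, ‖v i‖ = 1) : 1 ≤ C := by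
  simpa [hv] using hdom (fun n => 2 * n) (fun n => 2 * n + 1) (fun _ => by omega)
    (fun _ => by omega) 1 1

theorem norm_sum_two_mul_le (hdom : DominatesInterlacing v C) (hC : 0 ≤ C) (hK : UncondWith v Ku)
    (haq : ∀ i, a i < q i) (hqa : ∀ i, q i ≤ a (i + 1)) (co : ℕ → ℝ) (t : ℕ) :
    ‖∑ i ∈ Finset.range (2 * t), co i • v (q i)‖ ≤
      2 * C * Ku * ‖∑ i ∈ Finset.range (2 * t), co i • v (a i)‖ := by
  have ha : StrictMono a := strictMono_nat_of_lt_succ fun i => (haq i).trans_le (hqa i)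
  have heven := hdom (fun n => a (2 * n)) (fun n => q (2 * n)) (fun n => haq _)
    (fun n => (hqa (2 * n)).trans_lt (ha (by omega))) (fun n => co (2 * n)) t
  have hodd := hdom (fun n => a (2 * n + 1)) (fun n => q (2 * n + 1)) (fun n => haq _)
    (fun n => (hqa (2 * n + 1)).trans_lt (ha (by omega))) (fun n => co (2 * n + 1)) t
  have hsplit := mul_le_mul_of_nonneg_left ((hK.comp_strictMono ha).norm_sum_even_odd_le co t) hC
  simp only [Function.comp_apply] at hsplit
  rw [sum_range_two_mul fun i => co i • v (q i)]
  linarith [norm_add_le (∑ n ∈ Finset.range t, co (2 * n) • v (q (2 * n)))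
    (∑ n ∈ Finset.range t, co (2 * n + 1) • v (q (2 * n + 1)))]

theorem norm_sum_le_of_le (hdom : DominatesInterlacing v C) (hC : 0 ≤ C) (hK : UncondWith v Ku)
    (haq : ∀ i, a i < q i) (hqa : ∀ i, q i ≤ a (i + 1)) (co : ℕ → ℝ) (t : ℕ) :
    ‖∑ i ∈ Finset.range t, co i • v (q i)‖ ≤
      2 * C * Ku * ‖∑ i ∈ Finset.range t, co i • v (a i)‖ := by
  have htrunc (w : ℕ → V) : ∑ i ∈ Finset.range (2 * t), (if i < t then co i else 0) • w i =
      ∑ i ∈ Finset.range t, co i • w i := by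
    rw [← Finset.sum_subset (Finset.range_subset_range.2 (by omega : t ≤ 2 * t)) fun i _ hi => by
      rw [if_neg (by simpa using hi), zero_smul]]
    exact Finset.sum_congr rfl fun i hi => by rw [if_pos (Finset.mem_range.1 hi)]
  simpa only [htrunc] using
    hdom.norm_sum_two_mul_le hC hK haq hqa (fun i => if i < t then co i else 0) t

end DominatesInterlacing

end Basis

namespace FDDOn

section Blocks

variable {X : Type*} [NormedAddCommGroup X] [NormedSpace ℝ X] (E : FDDOn X)

theorem exists_norm_S_le [CompleteSpace X] : ∃ K : ℝ, 1 ≤ K ∧ ∀ N x, ‖E.S N x‖ ≤ K * ‖x‖ := by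
  obtain ⟨C, hC⟩ := banach_steinhaus (g := E.S) fun x => by
    obtain ⟨C, hC⟩ := (E.tendsto_S x).norm.bddAbove_range
    exact ⟨C, fun i => hC ⟨i, rfl⟩⟩
  refine ⟨max C 1, le_max_right _ _, fun N x => ((E.S N).le_opNorm x).trans ?_⟩
  exact mul_le_mul_of_nonneg_right ((hC N).trans (le_max_left _ _)) (norm_nonneg _)

/-- The projection `P i + ⋯ + P (j - 1)` onto the coordinates in `[i, j)`; it is meaningful only
for `i ≤ j`. -/
noncomputable def projIco (i j : ℕ) : X →L[ℝ] X := E.S j - E.S i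

theorem projIco_apply (i j : ℕ) (x : X) : E.projIco i j x = E.S j x - E.S i x := rfl

theorem P_projIco {i j : ℕ} (hij : i ≤ j) (m : ℕ) (x : X) :
    E.P m (E.projIco i j x) = if i ≤ m ∧ m < j then E.P m x else 0 := by
  rw [projIco_apply, map_sub, P_S, P_S]
  split_ifs <;> first | omega | simp

theorem projIco_projIco {a b : ℕ} (hab : a ≤ b) (i j : ℕ) (x : X) :
    E.projIco a b (E.projIco i j x) = E.projIco (max a (min b i)) (max a (min b j)) x := by
  have hcut (t : ℕ) : E.projIco a b (E.S t x) = E.S (max a (min b t)) x - E.S a x := by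
    rw [projIco_apply, S_S, S_S]
    rcases le_total t a with h | h
    · simp [h, h.trans hab]
    · rw [max_eq_right (le_min hab h), min_eq_left h]
  rw [E.projIco_apply i j, map_sub, hcut, hcut, sub_sub_sub_cancel_right, projIco_apply]

theorem projIco_projIco_self {i j : ℕ} (hij : i ≤ j) (x : X) :
    E.projIco i j (E.projIco i j x) = E.projIco i j x := by
  simp [projIco_projIco, hij]

theorem norm_projIco_le {K : ℝ} (hK : ∀ N x, ‖E.S N x‖ ≤ K * ‖x‖) (i j : ℕ) (x : X) :
    ‖E.projIco i j x‖ ≤ 2 * K * ‖x‖ := by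
  rw [projIco_apply]
  linarith [norm_sub_le (E.S j x) (E.S i x), hK i x, hK j x]

theorem exists_suppExact {x : X} {i j : ℕ} (hij : i ≤ j) (hx : E.projIco i j x = x)
    (hne : x ≠ 0) : ∃ a b, E.SuppExact x a b ∧ i ≤ a ∧ b < j := by
  have hsupp : E.suppIn x ⊆ Set.Ico i j := fun m hm => by
    by_contra h
    refine hm ?_
    rw [← hx, P_projIco _ hij, if_neg (by simpa using h)]
  have hfin : (E.suppIn x).Finite := (Set.finite_Ico i j).subset hsupp
  have hnon : (E.suppIn x).Nonempty := by
    by_contra h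
    rw [Set.not_nonempty_iff_eq_empty] at h
    exact hne (by rw [← E.S_eq_self_of_supp (x := x) (m := 0) (by simp [h]), S_zero])
  obtain ⟨a, ha, hmin⟩ := Set.exists_min_image _ id hfin hnon
  obtain ⟨b, hb, hmax⟩ := Set.exists_max_image _ id hfin hnon
  exact ⟨a, b, ⟨hmin b hb, fun m hm => ⟨hmin m hm, hmax m hm⟩, ha, hb⟩, (hsupp ha).1, (hsupp hb).2⟩

theorem exists_unit_suppExact {x : X} {i j : ℕ} (hij : i ≤ j) (hx : E.projIco i j x = x)
    (hne : x ≠ 0) : ∃ z a b, E.SuppExact z a b ∧ ‖z‖ = 1 ∧ i ≤ a ∧ b < j ∧ ‖x‖ • z = x := by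
  have hnorm : ‖x‖ ≠ 0 := norm_ne_zero_iff.2 hne
  obtain ⟨a, b, hab, hia, hbj⟩ := E.exists_suppExact (x := ‖x‖⁻¹ • x) hij
    (by rw [map_smul, hx]) (smul_ne_zero (inv_ne_zero hnorm) hne)
  exact ⟨_, a, b, hab, by rw [norm_smul, norm_inv, norm_norm, inv_mul_cancel₀ hnorm], hia, hbj,
    smul_inv_smul₀ hnorm x⟩

theorem exists_unit_block {i j : ℕ} (hij : i ≤ j) (hne : ∃ w, E.projIco i j w ≠ 0) (x : X) :
    ∃ z a b, E.SuppExact z a b ∧ ‖z‖ = 1 ∧ i ≤ a ∧ b < j ∧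
      ‖E.projIco i j x‖ • z = E.projIco i j x := by
  by_cases hx : E.projIco i j x = 0
  · obtain ⟨w, hw⟩ := hne
    obtain ⟨z, a, b, hab, hz, hia, hbj, -⟩ :=
      E.exists_unit_suppExact hij (E.projIco_projIco_self hij w) hw
    exact ⟨z, a, b, hab, hz, hia, hbj, by rw [hx, norm_zero, zero_smul]⟩
  · exact E.exists_unit_suppExact hij (E.projIco_projIco_self hij x) hx

/-- The left end point of the `j`-th of the consecutive intervals `[0, q 0), [q 0, q 1), …`. -/
def lo (q : ℕ → ℕ) : ℕ → ℕ
  | 0 => 0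
  | j + 1 => q j

theorem lo_le {q : ℕ → ℕ} (hq : StrictMono q) : ∀ j, lo q j ≤ q j
  | 0 => Nat.zero_le _
  | j + 1 => (hq j.lt_succ_self).le

theorem lo_lt {q : ℕ → ℕ} (hq : StrictMono q) (hq0 : 0 < q 0) : ∀ j, lo q j < q j
  | 0 => hq0
  | j + 1 => hq j.lt_succ_self

theorem monotone_lo {q : ℕ → ℕ} (hq : StrictMono q) : Monotone (lo q) :=
  monotone_nat_of_le_succ fun j => lo_le hq j

theorem le_lo {q : ℕ → ℕ} (hq : StrictMono q) {i : ℕ} : ∀ {j : ℕ}, i < j → q i ≤ lo q j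
  | _ + 1, hij => hq.monotone (Nat.lt_succ_iff.1 hij)

theorem exists_lo_le_lt {q : ℕ → ℕ} (hq : StrictMono q) (n : ℕ) : ∃ j, lo q j ≤ n ∧ n < q j := by
  classical
  have hex : ∃ j, n < q j := ⟨n + 1, n.lt_succ_self.trans_le hq.le_apply⟩
  refine ⟨Nat.find hex, ?_, Nat.find_spec hex⟩
  rcases hj : Nat.find hex with _ | j
  · exact Nat.zero_le _
  · exact not_lt.1 (Nat.find_min hex (hj ▸ j.lt_succ_self))

theorem sum_projIco_lo (q : ℕ → ℕ) (x : X) (r : ℕ) :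
    ∑ j ∈ Finset.range r, E.projIco (lo q j) (q j) x = E.S (lo q r) x := by
  induction r with
  | zero => simp [lo, S_zero]
  | succ r ih => rw [Finset.sum_range_succ, ih, projIco_apply, add_sub_cancel, lo]

theorem infinite_setOf_projIco_ne_zero (hinf : {n | E.P n ≠ 0}.Infinite) {q : ℕ → ℕ}
    (hq : StrictMono q) : {j | ∃ w, E.projIco (lo q j) (q j) w ≠ 0}.Infinite := by
  rw [Set.infinite_iff_exists_gt]
  intro m
  obtain ⟨n, hn, hmn⟩ := hinf.exists_gt (q m)
  obtain ⟨w, hw⟩ : ∃ w, E.P n w ≠ 0 := by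
    by_contra! h
    exact hn (ContinuousLinearMap.ext h)
  obtain ⟨j, hlo, hj⟩ := exists_lo_le_lt hq n
  refine ⟨j, ⟨w, fun h => hw ?_⟩, hq.lt_iff_lt.1 (hmn.trans hj)⟩
  have hP := E.P_projIco (lo_le hq j) n w
  rwa [h, map_zero, if_pos ⟨hlo, hj⟩, eq_comm] at hP

theorem exists_forall_projIco_eq_zero (hfin : {n | E.P n ≠ 0}.Finite) :
    ∃ M : ℕ, ∀ q : ℕ → ℕ, StrictMono q → ∀ j, M ≤ j → ∀ x, E.projIco (lo q j) (q j) x = 0 := by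
  obtain ⟨M, hM⟩ := hfin.bddAbove
  refine ⟨M + 2, fun q hq j hj x => ?_⟩
  by_contra hne
  obtain ⟨a, b, hab, ha, -⟩ := E.exists_suppExact (lo_le hq j)
    (E.projIco_projIco_self (lo_le hq j) x) hne
  have haM : a ≤ M := hM fun h => hab.2.2.1 (by rw [h]; rfl)
  have hjlo : j - 1 ≤ lo q j := hq.le_apply.trans (le_lo hq (by omega))
  omega

end Blocks

end FDDOn

theorem sum_range_nth {M : Type*} [AddCommMonoid M] {p : ℕ → Prop} [DecidablePred p]
    (hp : {j | p j}.Infinite) {g : ℕ → M} (hg : ∀ j, ¬ p j → g j = 0) (r : ℕ) :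
    ∑ j ∈ Finset.range r, g j = ∑ i ∈ Finset.range (Nat.count p r), g (Nat.nth p i) := by
  refine (Finset.sum_of_injOn (Nat.nth p) (Nat.nth_injective hp).injOn (fun i hi => ?_)
    (fun j hj hji => ?_) fun _ _ => rfl).symm
  · simpa using Nat.nth_lt_of_lt_count (by simpa using hi)
  · refine hg j fun hpj => hji ⟨Nat.count p j, ?_, Nat.nth_count hpj⟩
    simpa using Nat.count_strict_mono hpj (Finset.mem_range.1 hj)

section LowerEstimate

open FDDOn

variable {V : Type*} [NormedAddCommGroup V] [NormedSpace ℝ V] {v : ℕ → V}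
  {X : Type*} [NormedAddCommGroup X] [NormedSpace ℝ X] {E : FDDOn X}

/-- Lower `V`-estimates for the pieces of a vector on consecutive intervals `[0, q 0), [q 0, q 1),
…`, where a piece is compared with the basis vector at the right end point of its interval. -/
def IntervalLowerEst (E : FDDOn X) (v : ℕ → V) (C : ℝ) : Prop :=
  ∀ q : ℕ → ℕ, StrictMono q → ∀ x r,
    ‖∑ j ∈ Finset.range r, ‖E.projIco (lo q j) (q j) x‖ • v (q j)‖ ≤ C * ‖x‖

theorem intervalLowerEst_of_infinite {Ku Cd Clow K : ℝ} (hU : UncondWith v Ku) (hKu : 0 ≤ Ku)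
    (hdom : DominatesInterlacing v Cd) (hCd : 0 ≤ Cd) (hlow : SubseqLowerEst E v Clow)
    (hClow : 0 ≤ Clow) (hK : ∀ N x, ‖E.S N x‖ ≤ K * ‖x‖) (hinf : {n | E.P n ≠ 0}.Infinite) :
    IntervalLowerEst E v (2 * Cd * Ku * (Clow * K)) := fun q hq x r => by
  classical
  set y : ℕ → X := fun j => E.projIco (lo q j) (q j) x
  let p : ℕ → Prop := fun j => ∃ w, E.projIco (lo q j) (q j) w ≠ 0
  have hp : {j | p j}.Infinite := E.infinite_setOf_projIco_ne_zero hinf hq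
  have hy0 (j) (hj : ¬ p j) : y j = 0 := by
    by_contra h
    exact hj ⟨x, h⟩
  choose z a b hab hz hloa hbq hyz using fun i =>
    E.exists_unit_block (lo_le hq (Nat.nth p i)) (Nat.nth_mem_of_infinite hp i) x
  have hqa (i) : q (Nat.nth p i) ≤ a (i + 1) :=
    (le_lo hq (Nat.nth_strictMono hp i.lt_succ_self)).trans (hloa (i + 1))
  have hsumV : ∑ j ∈ Finset.range r, ‖y j‖ • v (q j) =
      ∑ i ∈ Finset.range (Nat.count p r), ‖y (Nat.nth p i)‖ • v (q (Nat.nth p i)) :=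
    sum_range_nth hp (fun j hj => by rw [hy0 j hj, norm_zero, zero_smul]) r
  have hsumX : ∑ i ∈ Finset.range (Nat.count p r), ‖y (Nat.nth p i)‖ • z i = E.S (lo q r) x := by
    rw [← E.sum_projIco_lo, sum_range_nth hp hy0]
    exact Finset.sum_congr rfl fun i _ => hyz i
  calc ‖∑ j ∈ Finset.range r, ‖y j‖ • v (q j)‖
      ≤ 2 * Cd * Ku * ‖∑ i ∈ Finset.range (Nat.count p r), ‖y (Nat.nth p i)‖ • v (a i)‖ :=
        hsumV ▸ hdom.norm_sum_le_of_le hCd hU (fun i => (hab i).1.trans_lt (hbq i)) hqa _ _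
    _ ≤ 2 * Cd * Ku * (Clow * ‖E.S (lo q r) x‖) := by
        gcongr
        rw [← hsumX]
        exact hlow z a b ⟨hab, fun i => (hbq i).trans_le (hqa i)⟩ hz _ _
    _ ≤ 2 * Cd * Ku * (Clow * K) * ‖x‖ := by
        rw [mul_assoc (2 * Cd * Ku), mul_assoc Clow]
        gcongr
        exact hK _ x

theorem exists_intervalLowerEst_of_finite (hv : ∀ i, ‖v i‖ = 1) {K : ℝ} (hK0 : 0 ≤ K)
    (hK : ∀ N x, ‖E.S N x‖ ≤ K * ‖x‖) (hfin : {n | E.P n ≠ 0}.Finite) :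
    ∃ C, 0 ≤ C ∧ IntervalLowerEst E v C := by
  obtain ⟨M, hM⟩ := E.exists_forall_projIco_eq_zero hfin
  refine ⟨M * (2 * K), by positivity, fun q hq x r => ?_⟩
  have hzero (j) (hj : j ∉ Finset.range M) : ‖E.projIco (lo q j) (q j) x‖ = 0 := by
    rw [hM q hq j (by simpa using hj), norm_zero]
  calc ‖∑ j ∈ Finset.range r, ‖E.projIco (lo q j) (q j) x‖ • v (q j)‖
      ≤ ∑ j ∈ Finset.range r, ‖E.projIco (lo q j) (q j) x‖ := by
        simpa only [norm_smul, norm_norm, hv, mul_one] using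
          norm_sum_le (Finset.range r) fun j => ‖E.projIco (lo q j) (q j) x‖ • v (q j)
    _ ≤ ∑ j ∈ Finset.range (max r M), ‖E.projIco (lo q j) (q j) x‖ :=
        Finset.sum_le_sum_of_subset_of_nonneg
          (Finset.range_subset_range.2 (le_max_left r M)) fun _ _ _ => norm_nonneg _
    _ = ∑ j ∈ Finset.range M, ‖E.projIco (lo q j) (q j) x‖ :=
        (Finset.sum_subset (Finset.range_subset_range.2 (le_max_right r M))
          fun j _ hj => hzero j hj).symm
    _ ≤ ∑ j ∈ Finset.range M, 2 * K * ‖x‖ :=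
        Finset.sum_le_sum fun j _ => E.norm_projIco_le hK _ _ x
    _ = M * (2 * K) * ‖x‖ := by
        rw [Finset.sum_const, Finset.card_range, nsmul_eq_mul]
        ring

theorem SubseqLowerEst.exists_intervalLowerEst {Ku Cd Clow K : ℝ}
    (hlow : SubseqLowerEst E v Clow) (hv : ∀ i, ‖v i‖ = 1) (hU : UncondWith v Ku) (hKu : 0 ≤ Ku)
    (hdom : DominatesInterlacing v Cd) (hK0 : 0 ≤ K) (hK : ∀ N x, ‖E.S N x‖ ≤ K * ‖x‖) :
    ∃ C, 0 ≤ C ∧ IntervalLowerEst E v C := by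
  have hCd : 0 ≤ Cd := zero_le_one.trans (hdom.one_le hv)
  have hlow' : SubseqLowerEst E v |Clow| := fun z a b hz hz1 co N =>
    (hlow z a b hz hz1 co N).trans (by gcongr; exact le_abs_self _)
  by_cases hinf : {n | E.P n ≠ 0}.Infinite
  · exact ⟨_, by positivity,
      intervalLowerEst_of_infinite hU hKu hdom hCd hlow' (abs_nonneg _) hK hinf⟩
  · exact exists_intervalLowerEst_of_finite hv hK0 hK (Set.not_infinite.1 hinf)

end LowerEstimate

/-- Labels of the indices of the Bourgain–Delbaen construction: `node n η ζ ξ k l a u` is a label of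
rank `n` referring to the labels `η`, `ζ`, `ξ`, with cut points `k`, `l` for `ζ`, `ξ`, a scalar `a`
and the number `u` of a functional. -/
inductive BDTree : Type
  | root : BDTree
  | node (n : ℕ) (η ζ ξ : BDTree) (k l : ℕ) (a : ℝ) (u : ℕ) : BDTree

namespace BDTree

/-- The rank of a label. -/
def rank : BDTree → ℕ
  | root => 0
  | node n _ _ _ _ _ _ _ => n

/-- The predecessor of a label. -/
def pre : BDTree → BDTree
  | root => root
  | node _ η _ _ _ _ _ _ => η

/-- The second label a label refers to. -/
def mid : BDTree → BDTree
  | root => root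
  | node _ _ ζ _ _ _ _ _ => ζ

/-- The third label a label refers to. -/
def last : BDTree → BDTree
  | root => root
  | node _ _ _ ξ _ _ _ _ => ξ

/-- The cut point of the second label a label refers to. -/
def cutMid : BDTree → ℕ
  | root => 0
  | node _ _ _ _ k _ _ _ => k

/-- The cut point of the third label a label refers to. -/
def cutLast : BDTree → ℕ
  | root => 0
  | node _ _ _ _ _ l _ _ => l

/-- The scalar of a label. -/
def coef : BDTree → ℝ
  | root => 0
  | node _ _ _ _ _ _ a _ => a

end BDTree

section Construction

variable {X V : Type*} [NormedAddCommGroup X] [NormedSpace ℝ X] [NormedAddCommGroup V]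
  [NormedSpace ℝ V]

/-- Parameters of the construction over `E`: the constant `β` of the Bourgain–Delbaen data, a
threshold `c` for the tails of labels, and, for each rank `n`, `s n` functionals `g n u` that
depend only on the coordinate `n - 1` and a finite set `A n` of scalars. -/
structure BDParams (E : FDDOn X) where
  β : ℝ
  β_pos : 0 < β
  β_le : β ≤ 1 / 8
  c : ℝ
  c_pos : 0 < c
  g : ℕ → ℕ → X →L[ℝ] ℝ
  g_P : ∀ n u x, g (n + 1) u (E.P n x) = g (n + 1) u x
  s : ℕ → ℕ
  A : ℕ → Finset ℝ
  A_le : ∀ n, ∀ a ∈ A n, |a| ≤ 1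

namespace BDParams

variable {E : FDDOn X} (p : BDParams E)

open BDTree

theorem g_S {n : ℕ} (hn : 0 < n) (u j : ℕ) (x : X) :
    p.g n u (E.S j x) = if n ≤ j then p.g n u x else 0 := by
  obtain ⟨n, rfl⟩ := Nat.exists_eq_succ_of_ne_zero hn.ne'
  rw [← p.g_P, E.P_S]
  split_ifs <;> first | omega | simp [p.g_P]

/-- The functional on `X` carried by a label. -/
noncomputable def φ : BDTree → X →L[ℝ] ℝ
  | root => 0
  | node n η ζ ξ k l a u => φ η + p.β • (φ ζ).comp (ContinuousLinearMap.id ℝ X - E.S k) +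
      p.β • a • (φ ξ).comp (ContinuousLinearMap.id ℝ X - E.S l) + p.g n u

theorem φ_root : p.φ root = 0 := rfl

theorem φ_node (n : ℕ) (η ζ ξ : BDTree) (k l : ℕ) (a : ℝ) (u : ℕ) (x : X) :
    p.φ (node n η ζ ξ k l a u) x = p.φ η x + p.β * (p.φ ζ x - p.φ ζ (E.S k x)) +
      p.β * (a * (p.φ ξ x - p.φ ξ (E.S l x))) + p.g n u x := by
  simp [φ]

/-- The coefficient sequence carried by a label. -/
noncomputable def α : BDTree → ℕ → ℝ
  | root => fun _ => 0
  | node n η ζ _ k _ a _ => fun m => α η m + p.β * (if k < m then α ζ m else 0) +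
      if m = n then a else 0

theorem α_root (m : ℕ) : p.α root m = 0 := rfl

theorem α_node (n : ℕ) (η ζ ξ : BDTree) (k l : ℕ) (a : ℝ) (u m : ℕ) :
    p.α (node n η ζ ξ k l a u) m =
      p.α η m + p.β * (if k < m then p.α ζ m else 0) + if m = n then a else 0 := rfl

/-- A label is substantially larger than its predecessor: beyond the rank of the predecessor, its
functional or its coefficient sequence has norm more than the threshold. -/
def Large (v : ℕ → V) (t : BDTree) : Prop :=
  t.pre.rank = 0 ∨
  (∃ x, p.c * ‖x‖ < |p.φ t (E.projIco (t.pre.rank - 1) (t.rank - 1) x)|) ∨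
  ¬ DualBound v (fun m => if t.pre.rank ≤ m ∧ m < t.rank then p.α t m else 0) p.c

/-- Admissible labels; these are the indices of the construction. -/
inductive Adm (v : ℕ → V) : BDTree → Prop
  | root : Adm v root
  | node {n : ℕ} {η ζ ξ : BDTree} {k l : ℕ} {a : ℝ} {u : ℕ} (hη : Adm v η) (hζ : Adm v ζ)
      (hξ : Adm v ξ) (hηk : η.rank ≤ k) (hkn : k < n) (hηl : η.rank ≤ l) (hln : l < n)
      (hζn : ζ.rank < n) (hξn : ξ.rank < n) (ha : a ∈ p.A n) (hu : u < p.s n)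
      (hφ : ∀ x, |p.φ (node n η ζ ξ k l a u) x| ≤ 2 * ‖x‖)
      (hα : DualBound v (p.α (node n η ζ ξ k l a u)) 2)
      (hlarge : p.Large v (node n η ζ ξ k l a u)) : Adm v (node n η ζ ξ k l a u)

variable {p} {v : ℕ → V} {t : BDTree}

namespace Adm

theorem pre : p.Adm v t → p.Adm v t.pre
  | root => root
  | node hη .. => hη

theorem mid : p.Adm v t → p.Adm v t.mid
  | root => root
  | node _ hζ .. => hζ

theorem last : p.Adm v t → p.Adm v t.last
  | root => root
  | node _ _ hξ .. => hξ

theorem pre_rank_lt (h : p.Adm v t) (h0 : 0 < t.rank) : t.pre.rank < t.rank := by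
  cases h with
  | root => exact absurd h0 (lt_irrefl 0)
  | node _ _ _ hηk hkn => exact hηk.trans_lt hkn

theorem mid_rank_lt (h : p.Adm v t) (h0 : 0 < t.rank) : t.mid.rank < t.rank := by
  cases h with
  | root => exact absurd h0 (lt_irrefl 0)
  | node => assumption

theorem last_rank_lt (h : p.Adm v t) (h0 : 0 < t.rank) : t.last.rank < t.rank := by
  cases h with
  | root => exact absurd h0 (lt_irrefl 0)
  | node => assumption

theorem pre_rank_le_cutMid : p.Adm v t → t.pre.rank ≤ t.cutMid
  | root => le_rfl
  | node _ _ _ hηk .. => hηk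

theorem pre_rank_le_cutLast : p.Adm v t → t.pre.rank ≤ t.cutLast
  | root => le_rfl
  | node _ _ _ _ _ hηl .. => hηl

theorem abs_coef_le : p.Adm v t → |t.coef| ≤ 1
  | root => by simp [coef]
  | node _ _ _ _ _ _ _ _ _ ha .. => p.A_le _ _ ha

theorem eq_root (h : p.Adm v t) (h0 : t.rank = 0) : t = BDTree.root := by
  cases h with
  | root => rfl
  | node _ _ _ _ hkn => exact absurd h0 hkn.ne_bot

theorem abs_φ_le (h : p.Adm v t) (x : X) : |p.φ t x| ≤ 2 * ‖x‖ := by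
  cases h with
  | root => simp [φ_root]
  | node _ _ _ _ _ _ _ _ _ _ _ hφ => exact hφ x

theorem dualBound : p.Adm v t → DualBound v (p.α t) 2
  | root => DualBound.zero zero_le_two
  | node _ _ _ _ _ _ _ _ _ _ _ _ hα _ => hα

theorem large : p.Adm v t → p.Large v t
  | root => Or.inl rfl
  | node _ _ _ _ _ _ _ _ _ _ _ _ _ hlarge => hlarge

theorem φ_S_of_rank_le (h : p.Adm v t) {N : ℕ} (hN : t.rank ≤ N) (x : X) :
    p.φ t (E.S N x) = p.φ t x := by
  induction h generalizing N with
  | root => simp [φ_root]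
  | @node n _ _ _ _ _ _ _ _ _ _ hηk hkn _ hln hζn hξn _ _ _ _ _ ihη ihζ ihξ =>
    have hN : n ≤ N := hN
    rw [φ_node, φ_node, E.S_S, E.S_S, min_eq_left (by omega), min_eq_left (by omega),
      ihη (by omega), ihζ (by omega), ihξ (by omega), p.g_S (by omega), if_pos hN]

theorem φ_S_pre (h : p.Adm v t) {j : ℕ} (hj : j ≤ t.pre.rank) (x : X) :
    p.φ t (E.S j x) = p.φ t.pre (E.S j x) := by
  cases h with
  | root => rfl
  | @node _ η _ _ _ _ _ _ _ _ _ hηk hkn hηl =>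
    have hj : j ≤ η.rank := hj
    rw [φ_node, E.S_S, E.S_S, min_eq_right (by omega), min_eq_right (by omega),
      p.g_S (by omega), if_neg (by omega)]
    simp [BDTree.pre]

theorem α_pre (h : p.Adm v t) {m : ℕ} (hm : m ≤ t.pre.rank) : p.α t m = p.α t.pre m := by
  cases h with
  | root => rfl
  | @node _ η _ _ _ _ _ _ _ _ _ hηk hkn =>
    have hm : m ≤ η.rank := hm
    rw [α_node, if_neg (by omega), if_neg (by omega)]
    simp [BDTree.pre]

end Adm

theorem finite_adm (p : BDParams E) (v : ℕ → V) (n : ℕ) :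
    {t | p.Adm v t ∧ t.rank ≤ n}.Finite := by
  induction n with
  | zero => exact (Set.finite_singleton root).subset fun t ht => ht.1.eq_root (Nat.le_zero.1 ht.2)
  | succ n ih =>
    let f : BDTree × BDTree × BDTree × ℕ × ℕ × ℝ × ℕ → BDTree :=
      fun ⟨η, ζ, ξ, k, l, a, u⟩ => node (n + 1) η ζ ξ k l a u
    have hfin := Set.Finite.image f (ih.prod (ih.prod (ih.prod ((Set.finite_Iio (n + 1)).prod
      ((Set.finite_Iio (n + 1)).prod
        ((p.A (n + 1)).finite_toSet.prod (Set.finite_Iio (p.s (n + 1)))))))))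
    refine (ih.union hfin).subset ?_
    rintro t ⟨h, hr⟩
    rcases Nat.of_le_succ hr with hle | heq
    · exact Or.inl ⟨h, hle⟩
    · right
      cases h with
      | root => exact absurd heq.symm n.succ_ne_zero
      | @node m η ζ ξ k l a u hη hζ hξ hηk hkn hηl hln hζn hξn ha hu =>
        obtain rfl : m = n + 1 := heq
        exact ⟨(η, ζ, ξ, k, l, a, u), ⟨⟨hη, Nat.lt_succ_iff.1 (hηk.trans_lt hkn)⟩,
          ⟨hζ, Nat.lt_succ_iff.1 hζn⟩, ⟨hξ, Nat.lt_succ_iff.1 hξn⟩, hkn, hln, ha, hu⟩, rfl⟩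

variable (p)

/-- The index set of the construction. -/
def Index (v : ℕ → V) : Type := {t // p.Adm v t}

instance : TopologicalSpace (p.Index v) := ⊥

instance : DiscreteTopology (p.Index v) := ⟨rfl⟩

/-- The Bourgain–Delbaen data carried by the admissible labels. -/
noncomputable def data (v : ℕ → V) : BDData (p.Index v) where
  rank γ := γ.1.rank
  root := ⟨root, .root⟩
  eq_root γ h := Subtype.ext (γ.2.eq_root h)
  rank_root := rfl
  finite_rank_le n :=
    ((p.finite_adm v n).preimage Subtype.val_injective.injOn).subset fun γ h => ⟨γ.2, h⟩
  pre γ := ⟨γ.1.pre, γ.2.pre⟩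
  mid γ := ⟨γ.1.mid, γ.2.mid⟩
  last γ := ⟨γ.1.last, γ.2.last⟩
  k γ := γ.1.cutMid
  l γ := γ.1.cutLast
  a γ := γ.1.coef
  β := p.β
  β_nonneg := p.β_pos.le
  β_le := p.β_le
  a_le γ := γ.2.abs_coef_le
  rank_pre γ := γ.2.pre_rank_lt
  rank_mid γ := γ.2.mid_rank_lt
  rank_last γ := γ.2.last_rank_lt
  pre_le_k γ _ := γ.2.pre_rank_le_cutMid
  pre_le_l γ _ := γ.2.pre_rank_le_cutLast

theorem ext_φ (x : X) (γ : p.Index v) (j : ℕ) :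
    (p.data v).ext (fun δ => p.φ δ.1 x) γ j = p.φ γ.1 (E.S j x) := by
  revert j
  induction γ using (p.data v).rank_induction with
  | step γ ih =>
    intro j
    rcases le_or_gt ((p.data v).rank γ) j with h | h
    · rw [(p.data v).ext_of_le _ h, γ.2.φ_S_of_rank_le h]
    · obtain ⟨hpre, hmid, hlast⟩ := ih (by omega)
      rw [(p.data v).ext_of_lt _ h, hpre, hmid, hmid, hlast, hlast]
      obtain ⟨_, ht⟩ := γ
      cases ht with
      | root => exact absurd h j.not_lt_zero
      | @node n =>
        have h : j < n := h
        rw [φ_node, E.S_S, E.S_S, p.g_S (by omega), if_neg (by omega), add_zero]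
        rfl

/-- The map from `X` to the bounded functions on the index set given by the functionals of the
labels. -/
noncomputable def evalMap (v : ℕ → V) : X →L[ℝ] BoundedContinuousFunction (p.Index v) ℝ :=
  LinearMap.mkContinuous
    { toFun := fun x => BoundedContinuousFunction.ofNormedAddCommGroupDiscrete
        (fun γ => p.φ γ.1 x) (2 * ‖x‖) fun γ => γ.2.abs_φ_le x
      map_add' := fun x y => by
        ext γ
        exact map_add (p.φ γ.1) x y
      map_smul' := fun t x => by
        ext γ
        exact map_smul (p.φ γ.1) t x }
    2 fun x => (BoundedContinuousFunction.norm_le (by positivity)).2 fun γ => γ.2.abs_φ_le x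

theorem evalMap_mem_space (x : X) : p.evalMap v x ∈ (p.data v).space := by
  have hproj (j : ℕ) : (p.data v).proj j (p.evalMap v x) = p.evalMap v (E.S j x) := by
    ext γ
    exact p.ext_φ x γ j
  change Tendsto (fun n => (p.data v).proj n (p.evalMap v x)) atTop (𝓝 (p.evalMap v x))
  simp only [hproj]
  exact ((p.evalMap v).continuous.tendsto x).comp (E.tendsto_S x)

/-- The embedding of `X` into the Bourgain–Delbaen space. -/
noncomputable def embedding (v : ℕ → V) : X →L[ℝ] (p.data v).Z :=
  (p.evalMap v).codRestrict (p.data v).space p.evalMap_mem_space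

theorem incl_embedding (x : X) (γ : p.Index v) :
    (p.data v).incl (p.embedding v x) γ = p.φ γ.1 x := rfl

end BDParams

end Construction

section Approximation

theorem half_pow_sub_half_pow_le_one (k N : ℕ) : (1 / 2 : ℝ) ^ k - (1 / 2) ^ N ≤ 1 :=
  (sub_le_self _ (by positivity)).trans (pow_le_one₀ (by norm_num) (by norm_num))

variable {X V : Type*} [NormedAddCommGroup X] [NormedSpace ℝ X] [NormedAddCommGroup V]
  [NormedSpace ℝ V] {E : FDDOn X} {f : X →L[ℝ] ℝ}

namespace FDDOn

/-- The restrictions of the functional `f` to intervals of coordinates have norm at most `r`. -/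
def CutBound (E : FDDOn X) (f : X →L[ℝ] ℝ) (r : ℝ) : Prop :=
  ∀ i j x, |f (E.projIco i j x)| ≤ r * ‖x‖

theorem CutBound.comp_projIco {r : ℝ} (h : E.CutBound f r) {a b : ℕ} (hab : a ≤ b) :
    E.CutBound (f.comp (E.projIco a b)) r := fun i j x => by
  rw [ContinuousLinearMap.comp_apply, projIco_projIco _ hab]
  exact h _ _ x

theorem CutBound.inv_smul {r : ℝ} (h : E.CutBound f r) (hr : 0 < r) :
    E.CutBound (r⁻¹ • f) 1 := fun i j x => by
  rw [smul_apply, smul_eq_mul, abs_mul, abs_of_pos (inv_pos.2 hr), inv_mul_le_iff₀ hr, one_mul]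
  exact h i j x

theorem exists_minimal_cut (E : FDDOn X) (f : X →L[ℝ] ℝ) {k M : ℕ} (hkM : k ≤ M) {r : ℝ}
    (hr : 0 ≤ r) : ∃ k', k ≤ k' ∧ k' ≤ M ∧ E.CutBound (f.comp (E.projIco k' M)) r ∧
      (k < k' → ¬ E.CutBound (f.comp (E.projIco (k' - 1) M)) r) := by
  classical
  have hM : k ≤ M ∧ E.CutBound (f.comp (E.projIco M M)) r :=
    ⟨hkM, fun i j x => by simp [projIco_apply, mul_nonneg hr]⟩
  let hex : ∃ m, k ≤ m ∧ E.CutBound (f.comp (E.projIco m M)) r := ⟨M, hM⟩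
  obtain ⟨hk, hcut⟩ := Nat.find_spec hex
  exact ⟨Nat.find hex, hk, Nat.find_min' hex hM, hcut, fun hlt hcut' =>
    Nat.find_min hex (m := Nat.find hex - 1) (by omega) ⟨by omega, hcut'⟩⟩

theorem apply_eq_add_add {k k' M : ℕ} (hf : ∀ x, f (E.projIco k (M + 1) x) = f x) (x : X) :
    f x = f (E.projIco k k' x) + f (E.projIco k' M x) + f (E.P M x) := by
  rw [← hf x, ← map_add, ← map_add, ← E.S_succ_sub]
  simp only [projIco_apply]
  congr 1
  abel

end FDDOn

namespace BDParams

open BDTree FDDOn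

/-- The finite sets of functionals and scalars are `δ`-nets, with summable weights, and the
constants are adapted to a bound `K` for the partial sum projections. -/
structure IsFine (p : BDParams E) (K δ : ℝ) : Prop where
  one_le_K : 1 ≤ K
  norm_S_le : ∀ N x, ‖E.S N x‖ ≤ K * ‖x‖
  δ_nonneg : 0 ≤ δ
  δ_le_one : δ ≤ 1
  δ_le : δ * (4 * K ^ 2) ≤ p.β / 2
  c_le : p.c * (2 * K) ≤ p.β / 2
  net : ∀ n (f : X →L[ℝ] ℝ), (∀ x, |f x| ≤ ‖x‖) → (∀ x, f (E.P n x) = f x) →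
    ∃ u < p.s (n + 1), ∀ x, |p.g (n + 1) u x - f x| ≤ δ * (1 / 2) ^ (n + 1) * ‖x‖
  exists_zero : ∀ n, ∃ u < p.s (n + 1), p.g (n + 1) u = 0
  zero_mem : ∀ n, 0 ∈ p.A n
  A_net : ∀ n t, |t| ≤ 1 → ∃ a ∈ p.A n, |a - t| ≤ δ * (1 / 2) ^ n

variable {p : BDParams E} {K δ : ℝ} {v : ℕ → V} {k k' M N u : ℕ} {t η ζ : BDTree}

/-- The label `t` approximates the functional `f`, which depends on the coordinates in `[k, N)`. -/
structure IsApprox (p : BDParams E) (v : ℕ → V) (δ : ℝ) (k N : ℕ) (f : X →L[ℝ] ℝ)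
    (t : BDTree) : Prop where
  adm : p.Adm v t
  rank_eq : t.rank = if k < N then N else 0
  φ_S : ∀ x, p.φ t (E.S k x) = 0
  α_eq : ∀ m, p.α t m = 0
  abs_sub_le : ∀ x, |p.φ t x - f x| ≤ δ * ((1 / 2) ^ k - (1 / 2) ^ N) * ‖x‖

theorem IsApprox.rank_le (h : p.IsApprox v δ k N f t) : t.rank ≤ N := by
  rw [h.rank_eq]
  split_ifs <;> omega

theorem IsApprox.abs_sub_le_mul (h : p.IsApprox v δ k N f t) (hδ : 0 ≤ δ) (x : X) :
    |p.φ t x - f x| ≤ δ * ‖x‖ := by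
  refine (h.abs_sub_le x).trans (mul_le_mul_of_nonneg_right ?_ (norm_nonneg x))
  exact mul_le_of_le_one_right hδ (half_pow_sub_half_pow_le_one k N)

theorem isApprox_root (hf : ∀ x, f (E.projIco k k x) = f x) : p.IsApprox v δ k k f root where
  adm := .root
  rank_eq := by rw [if_neg (lt_irrefl k)]; rfl
  φ_S := by simp [φ_root]
  α_eq := p.α_root
  abs_sub_le x := by
    rw [← hf x]
    simp [φ_root, projIco_apply]

theorem IsFine.large_of_not_cutBound (hp : p.IsFine K δ)
    (herr : ∀ x, |p.φ t x - f x| ≤ δ * ‖x‖)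
    (hcut : ¬ E.CutBound (f.comp (E.projIco (t.pre.rank - 1) (t.rank - 1))) p.β) :
    p.Large v t := by
  simp only [CutBound, not_forall, not_le] at hcut
  obtain ⟨i, j, x, hx⟩ := hcut
  refine Or.inr (Or.inl ⟨E.projIco i j x, ?_⟩)
  set y := E.projIco i j x
  set w := E.projIco (t.pre.rank - 1) (t.rank - 1) y
  have hK := hp.one_le_K
  have hy : ‖y‖ ≤ 2 * K * ‖x‖ := E.norm_projIco_le hp.norm_S_le i j x
  have hw : ‖w‖ ≤ 4 * K ^ 2 * ‖x‖ := calc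
    ‖w‖ ≤ 2 * K * ‖y‖ := E.norm_projIco_le hp.norm_S_le _ _ y
    _ ≤ 2 * K * (2 * K * ‖x‖) := by gcongr
    _ = 4 * K ^ 2 * ‖x‖ := by ring
  have hφw : |p.φ t w - f w| ≤ p.β / 2 * ‖x‖ := calc
    |p.φ t w - f w| ≤ δ * ‖w‖ := herr w
    _ ≤ δ * (4 * K ^ 2 * ‖x‖) := mul_le_mul_of_nonneg_left hw hp.δ_nonneg
    _ = δ * (4 * K ^ 2) * ‖x‖ := by ring
    _ ≤ p.β / 2 * ‖x‖ := mul_le_mul_of_nonneg_right hp.δ_le (norm_nonneg x)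
  calc p.c * ‖y‖ ≤ p.c * (2 * K * ‖x‖) := mul_le_mul_of_nonneg_left hy p.c_pos.le
    _ = p.c * (2 * K) * ‖x‖ := by ring
    _ ≤ p.β / 2 * ‖x‖ := mul_le_mul_of_nonneg_right hp.c_le (norm_nonneg x)
    _ < |f w| - p.β / 2 * ‖x‖ := by
      have : p.β * ‖x‖ < |f w| := hx
      linarith
    _ ≤ |p.φ t w| := by
      linarith [abs_sub_abs_le_abs_sub (f w) (p.φ t w), abs_sub_comm (f w) (p.φ t w)]

theorem IsApprox.φ_node (hζ : p.IsApprox v δ k' M f ζ) (x : X) :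
    p.φ (node (M + 1) η ζ root k' k' 0 u) x = p.φ η x + p.β * p.φ ζ x + p.g (M + 1) u x := by
  rw [BDParams.φ_node, hζ.φ_S]
  simp

theorem IsApprox.abs_φ_node_sub_le (hη : p.IsApprox v δ k k' (f.comp (E.projIco k k')) η)
    (hζ : p.IsApprox v δ k' M (p.β⁻¹ • f.comp (E.projIco k' M)) ζ)
    (hf : ∀ x, f (E.projIco k (M + 1) x) = f x)
    (hu : ∀ x, |p.g (M + 1) u x - f (E.P M x)| ≤ δ * (1 / 2) ^ (M + 1) * ‖x‖) (x : X) :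
    |p.φ (node (M + 1) η ζ root k' k' 0 u) x - f x| ≤
      δ * ((1 / 2) ^ k - (1 / 2) ^ (M + 1)) * ‖x‖ := by
  have hmid : |p.β * p.φ ζ x - f (E.projIco k' M x)| ≤
      δ * ((1 / 2) ^ k' - (1 / 2) ^ M) * ‖x‖ := calc
    |p.β * p.φ ζ x - f (E.projIco k' M x)|
        = p.β * |p.φ ζ x - (p.β⁻¹ • f.comp (E.projIco k' M)) x| := by
          rw [← abs_of_pos p.β_pos, ← abs_mul, abs_of_pos p.β_pos, mul_sub]
          congr 2
          exact (mul_inv_cancel_left₀ p.β_pos.ne' _).symm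
    _ ≤ |p.φ ζ x - (p.β⁻¹ • f.comp (E.projIco k' M)) x| :=
          mul_le_of_le_one_left (abs_nonneg _) (by linarith [p.β_le])
    _ ≤ _ := hζ.abs_sub_le x
  calc |p.φ (node (M + 1) η ζ root k' k' 0 u) x - f x|
      = |(p.φ η x - f (E.projIco k k' x)) + (p.β * p.φ ζ x - f (E.projIco k' M x)) +
          (p.g (M + 1) u x - f (E.P M x))| := by
        rw [hζ.φ_node, apply_eq_add_add hf x (k' := k')]
        congr 1
        ring
    _ ≤ |p.φ η x - f (E.projIco k k' x)| + |p.β * p.φ ζ x - f (E.projIco k' M x)| +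
          |p.g (M + 1) u x - f (E.P M x)| := abs_add_three _ _ _
    _ ≤ δ * ((1 / 2) ^ k - (1 / 2) ^ k') * ‖x‖ + δ * ((1 / 2) ^ k' - (1 / 2) ^ M) * ‖x‖ +
          δ * (1 / 2) ^ (M + 1) * ‖x‖ :=
        add_le_add (add_le_add (hη.abs_sub_le x) hmid) (hu x)
    _ = δ * ((1 / 2) ^ k - (1 / 2) ^ (M + 1)) * ‖x‖ := by ring

theorem IsFine.isApprox_node (hp : p.IsFine K δ) (hkk' : k ≤ k') (hk'M : k' ≤ M)
    (hη : p.IsApprox v δ k k' (f.comp (E.projIco k k')) η)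
    (hζ : p.IsApprox v δ k' M (p.β⁻¹ • f.comp (E.projIco k' M)) ζ)
    (hf : ∀ x, f (E.projIco k (M + 1) x) = f x) (hb : E.CutBound f 1) (hus : u < p.s (M + 1))
    (hu : ∀ x, |p.g (M + 1) u x - f (E.P M x)| ≤ δ * (1 / 2) ^ (M + 1) * ‖x‖)
    (hmin : k < k' → ¬ E.CutBound (f.comp (E.projIco (k' - 1) M)) p.β) :
    p.IsApprox v δ k (M + 1) f (node (M + 1) η ζ root k' k' 0 u) := by
  set t := node (M + 1) η ζ root k' k' 0 u
  have hα (m : ℕ) : p.α t m = 0 := by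
    rw [α_node, hη.α_eq, hζ.α_eq]
    simp
  have herr (x : X) : |p.φ t x - f x| ≤ δ * ‖x‖ := by
    refine (IsApprox.abs_φ_node_sub_le hη hζ hf hu x).trans
      (mul_le_mul_of_nonneg_right (mul_le_of_le_one_right hp.δ_nonneg ?_) (norm_nonneg x))
    exact half_pow_sub_half_pow_le_one k (M + 1)
  have hlarge : p.Large v t := by
    rcases hkk'.eq_or_lt with rfl | hlt
    · exact Or.inl (hη.rank_eq.trans (if_neg (lt_irrefl k)))
    · have hpre : t.pre.rank = k' := hη.rank_eq.trans (if_pos hlt)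
      refine hp.large_of_not_cutBound herr ?_
      rw [hpre]
      exact hmin hlt
  have hηk' : η.rank ≤ k' := hη.rank_le
  have hζM : ζ.rank ≤ M := hζ.rank_le
  refine ⟨.node hη.adm hζ.adm .root hηk' (by omega) hηk' (by omega) (by omega) M.succ_pos
    (hp.zero_mem _) hus (fun x => ?_) ?_ hlarge, (if_pos (by omega)).symm, fun x => ?_, hα,
    IsApprox.abs_φ_node_sub_le hη hζ hf hu⟩
  · have hfx : |f x| ≤ 1 * ‖x‖ := hf x ▸ hb k (M + 1) x
    have hδx : δ * ‖x‖ ≤ 1 * ‖x‖ := mul_le_mul_of_nonneg_right hp.δ_le_one (norm_nonneg x)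
    linarith [herr x, abs_sub_abs_le_abs_sub (p.φ t x) (f x)]
  · exact (DualBound.zero zero_le_two).mono fun m => by rw [hα]
  · have hζS : p.φ ζ (E.S k x) = 0 := by simpa [E.S_S, hkk'] using hζ.φ_S (E.S k x)
    rw [hζ.φ_node, hη.φ_S, hζS, p.g_S M.succ_pos, if_neg (by omega)]
    simp

theorem IsFine.exists_isApprox (hp : p.IsFine K δ) (v : ℕ → V) (hkN : k ≤ N)
    (hf : ∀ x, f (E.projIco k N x) = f x) (hb : E.CutBound f 1) :
    ∃ t, p.IsApprox v δ k N f t := by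
  induction N using Nat.strong_induction_on generalizing k f with
  | _ N ih =>
  rcases hkN.eq_or_lt with rfl | hlt
  · exact ⟨root, isApprox_root hf⟩
  obtain ⟨M, rfl⟩ : ∃ M, N = M + 1 := ⟨N - 1, by omega⟩
  obtain ⟨k', hkk', hk'M, hcut, hmin⟩ :=
    E.exists_minimal_cut f (Nat.lt_succ_iff.1 hlt) p.β_pos.le
  obtain ⟨η, hη⟩ := ih k' (by omega) (f := f.comp (E.projIco k k')) hkk'
    (fun x => congrArg f (E.projIco_projIco_self hkk' x)) (hb.comp_projIco hkk')
  obtain ⟨ζ, hζ⟩ := ih M (by omega) (f := p.β⁻¹ • f.comp (E.projIco k' M)) hk'M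
    (fun x => congrArg (p.β⁻¹ * f ·) (E.projIco_projIco_self hk'M x)) (hcut.inv_smul p.β_pos)
  obtain ⟨u, hus, hu⟩ := hp.net M (f.comp (E.P M))
    (fun x => by simpa [projIco_apply, E.S_succ_sub] using hb M (M + 1) x)
    (fun x => congrArg f (E.idem M x))
  exact ⟨_, hp.isApprox_node hkk' hk'M hη hζ hf hb hus hu hmin⟩

theorem IsFine.exists_norm_le (hp : p.IsFine K δ) (v : ℕ → V) (x : X) :
    ∃ t, p.Adm v t ∧ ‖x‖ ≤ 8 * K * |p.φ t x| := by
  have hK := hp.one_le_K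
  have hK0 : 0 < 2 * K := by linarith
  rcases eq_or_ne x 0 with rfl | hx
  · exact ⟨root, .root, by simp⟩
  obtain ⟨f, hf1, hfx⟩ := exists_dual_vector ℝ x (norm_ne_zero_iff.2 hx)
  have hfle (y : X) : |f y| ≤ ‖y‖ := by simpa [hf1] using f.le_opNorm y
  obtain ⟨N, hN⟩ := ((Metric.tendsto_nhds.1 (E.tendsto_S x)) (‖x‖ / 2)
    (half_pos (norm_pos_iff.2 hx))).exists
  have hfS : ‖x‖ / 2 ≤ f (E.S N x) := by
    have hfx : f x = ‖x‖ := hfx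
    have := (abs_le.1 (hfle (E.S N x - x))).1
    rw [map_sub, hfx] at this
    rw [dist_eq_norm] at hN
    linarith
  obtain ⟨t, ht⟩ := hp.exists_isApprox v (f := (2 * K)⁻¹ • f.comp (E.S N)) N.zero_le
    (fun y => by simp [projIco_apply, E.S_zero, E.S_S])
    (CutBound.inv_smul (fun i j y => by
      rw [ContinuousLinearMap.comp_apply, projIco_apply, map_sub, E.S_S, E.S_S]
      exact (hfle _).trans (E.norm_projIco_le hp.norm_S_le _ _ y)) hK0)
  have herr : (2 * K)⁻¹ * f (E.S N x) - δ * ‖x‖ ≤ p.φ t x := by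
    have := (abs_le.1 (ht.abs_sub_le_mul hp.δ_nonneg x)).1
    rw [smul_apply, smul_eq_mul, ContinuousLinearMap.comp_apply] at this
    linarith
  have hδK : δ * (8 * K) ≤ 1 := by
    nlinarith [hp.δ_le, p.β_le, mul_le_mul_of_nonneg_left (show K ≤ K ^ 2 by nlinarith) hp.δ_nonneg]
  refine ⟨t, ht.adm, ?_⟩
  calc ‖x‖ = 4 * (‖x‖ / 2) - 1 * ‖x‖ := by ring
    _ ≤ 4 * f (E.S N x) - δ * (8 * K) * ‖x‖ := by gcongr
    _ = 8 * K * ((2 * K)⁻¹ * f (E.S N x) - δ * ‖x‖) := by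
        field_simp
        ring
    _ ≤ 8 * K * |p.φ t x| := by
        gcongr
        exact herr.trans (le_abs_self _)

end BDParams

end Approximation

section LowerEstimate

variable {q : ℕ → ℕ} {i r : ℕ} {a b : ℕ → ℝ} {δ : ℝ}

/-- The sequence with values `a j` at `q j` for `j ∈ [i, r)` and zero elsewhere. -/
noncomputable def spread (q : ℕ → ℕ) (i r : ℕ) (a : ℕ → ℝ) (m : ℕ) : ℝ :=
  ∑ j ∈ Finset.Ico i r, a j * if m = q j then 1 else 0

theorem spread_apply (hq : StrictMono q) (i r : ℕ) (a : ℕ → ℝ) (j : ℕ) :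
    spread q i r a (q j) = if i ≤ j ∧ j < r then a j else 0 := by
  simp [spread, hq.injective.eq_iff, Finset.sum_ite_eq, Finset.mem_Ico]

theorem spread_of_notMem_range (i r : ℕ) (a : ℕ → ℝ) {m : ℕ} (hm : m ∉ Set.range q) :
    spread q i r a m = 0 :=
  Finset.sum_eq_zero fun j _ => by rw [if_neg fun h => hm ⟨j, h.symm⟩, mul_zero]

theorem spread_smul (q : ℕ → ℕ) (i r : ℕ) (a : ℕ → ℝ) (t : ℝ) (m : ℕ) :
    spread q i r (fun j => t * a j) m = t * spread q i r a m := by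
  simp only [spread, Finset.mul_sum, mul_assoc]

theorem abs_spread_le (hq : StrictMono q) (i r : ℕ) (α : ℕ → ℝ) (m : ℕ) :
    |spread q i r (α ∘ q) m| ≤ |α m| := by
  by_cases hm : m ∈ Set.range q
  · obtain ⟨j, rfl⟩ := hm
    rw [spread_apply hq]
    split_ifs <;> simp
  · simp [spread_of_notMem_range _ _ _ hm]

theorem abs_spread_le_of_le (hq : StrictMono q) {r' : ℕ} (hr : r ≤ r') (a : ℕ → ℝ) (m : ℕ) :
    |spread q i r a m| ≤ |spread q i r' a m| := by
  by_cases hm : m ∈ Set.range q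
  · obtain ⟨j, rfl⟩ := hm
    rw [spread_apply hq, spread_apply hq]
    split_ifs <;> first | omega | simp
  · simp [spread_of_notMem_range _ _ _ hm]

theorem spread_restrict (hq : StrictMono q) {I R : ℕ} (hI : i ≤ I) (hR : R ≤ r) (b : ℕ → ℝ)
    (m : ℕ) : (if q I ≤ m ∧ m < q R then spread q i r b m else 0) = spread q I R b m := by
  by_cases hm : m ∈ Set.range q
  · obtain ⟨j, rfl⟩ := hm
    simp only [spread_apply hq, hq.le_iff_le, hq.lt_iff_lt]
    split_ifs <;> first | rfl | omega
  · simp [spread_of_notMem_range _ _ _ hm]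

theorem abs_spread_sub_le (hq : StrictMono q) (hδ : 0 ≤ δ)
    (h : ∀ j, i ≤ j → j < r → |b j - a j| ≤ δ * (1 / 2) ^ q j) (m : ℕ) :
    |spread q i r b m - spread q i r a m| ≤ δ * (1 / 2) ^ m := by
  by_cases hm : m ∈ Set.range q
  · obtain ⟨j, rfl⟩ := hm
    rw [spread_apply hq, spread_apply hq]
    split_ifs with hj
    · exact h j hj.1 hj.2
    · rw [sub_zero, abs_zero]
      positivity
  · rw [spread_of_notMem_range _ _ _ hm, spread_of_notMem_range _ _ _ hm, sub_zero, abs_zero]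
    positivity

/-- The sequence equal to `b` on `[0, i)`, to `c` on `[i, R)` and to `t` from `R` on. -/
noncomputable def glue (i R : ℕ) (b c : ℕ → ℝ) (t : ℝ) (j : ℕ) : ℝ :=
  if j < i then b j else if j < R then c j else t

theorem sum_glue_mul {i' R : ℕ} (hi : i ≤ i') (hR : i' ≤ R) (b c : ℕ → ℝ) (t : ℝ) (y : ℕ → ℝ) :
    ∑ j ∈ Finset.Ico i (R + 1), glue i' R b c t j * y j =
      ∑ j ∈ Finset.Ico i i', b j * y j + ∑ j ∈ Finset.Ico i' R, c j * y j + t * y R := by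
  rw [Finset.sum_Ico_succ_top (hi.trans hR), ← Finset.sum_Ico_consecutive _ hi hR]
  congr 1
  · congr 1 <;> refine Finset.sum_congr rfl fun j hj => ?_ <;> rw [Finset.mem_Ico] at hj <;>
      simp only [glue]
    · rw [if_pos hj.2]
    · rw [if_neg (by omega), if_pos hj.2]
  · simp [glue, hR]

theorem abs_glue_sub_le {i' R : ℕ} {β t : ℝ} {c : ℕ → ℝ} (hβ : 0 < β) (hβ1 : β ≤ 1)
    (hb : ∀ j, i ≤ j → j < i' → |b j - a j| ≤ δ * (1 / 2) ^ q j)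
    (hc : ∀ j, i' ≤ j → j < R → |c j - β⁻¹ * a j| ≤ δ * (1 / 2) ^ q j)
    (ht : |t - a R| ≤ δ * (1 / 2) ^ q R) (j : ℕ) (hij : i ≤ j) (hjR : j < R + 1) :
    |glue i' R b (fun j => β * c j) t j - a j| ≤ δ * (1 / 2) ^ q j := by
  simp only [glue]
  split_ifs with h h'
  · exact hb j hij h
  · calc |β * c j - a j| = β * |c j - β⁻¹ * a j| := by
          rw [← abs_of_pos hβ, ← abs_mul, abs_of_pos hβ, mul_sub, mul_inv_cancel_left₀ hβ.ne']
      _ ≤ |c j - β⁻¹ * a j| := mul_le_of_le_one_left (abs_nonneg _) hβ1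
      _ ≤ δ * (1 / 2) ^ q j := hc j (not_lt.1 h) h'
  · obtain rfl : j = R := by omega
    exact ht

variable {V : Type*} [NormedAddCommGroup V] [NormedSpace ℝ V] {v : ℕ → V} {Ku : ℝ}

theorem UncondWith.dualBound_of_abs_le_geometric (hU : UncondWith v Ku) (hKu : 0 ≤ Ku)
    (hv : ∀ i, ‖v i‖ = 1) {e : ℕ → ℝ} (hδ : 0 ≤ δ) (he : ∀ m, |e m| ≤ δ * (1 / 2) ^ m) :
    DualBound v e (2 * δ * Ku) := fun c N => by
  set w := ‖∑ i ∈ Finset.range N, c i • v i‖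
  calc ∑ i ∈ Finset.range N, |e i| * |c i|
      ≤ ∑ i ∈ Finset.range N, δ * (1 / 2) ^ i * (Ku * w) := by
        refine Finset.sum_le_sum fun i hi => mul_le_mul (he i) ?_ (abs_nonneg _) (by positivity)
        exact hU.abs_coord_le hv c (Finset.mem_range.1 hi)
    _ = δ * (∑ i ∈ Finset.range N, (1 / 2 : ℝ) ^ i) * (Ku * w) := by
        rw [Finset.mul_sum, Finset.sum_mul]
    _ ≤ δ * 2 * (Ku * w) := by
        gcongr
        exact (summable_geometric_two.sum_le_tsum _ fun i _ => by positivity).trans_eq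
          tsum_geometric_two
    _ = 2 * δ * Ku * w := by ring

theorem DualBound.of_close {α α' : ℕ → ℝ} {s : ℝ} (h : DualBound v α s) (hU : UncondWith v Ku)
    (hKu : 0 ≤ Ku) (hv : ∀ i, ‖v i‖ = 1) (hδ : 0 ≤ δ)
    (he : ∀ m, |α' m - α m| ≤ δ * (1 / 2) ^ m) : DualBound v α' (s + 2 * δ * Ku) :=
  (h.add (hU.dualBound_of_abs_le_geometric hKu hv hδ he)).mono fun i => by simp

theorem exists_minimal_dualBound (v : ℕ → V) (q : ℕ → ℕ) (a : ℕ → ℝ) {R : ℕ} (hiR : i ≤ R)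
    {s : ℝ} (hs : 0 ≤ s) : ∃ i', i ≤ i' ∧ i' ≤ R ∧ DualBound v (spread q i' R a) s ∧
      (i < i' → ¬ DualBound v (spread q (i' - 1) R a) s) := by
  classical
  have hR : i ≤ R ∧ DualBound v (spread q R R a) s :=
    ⟨hiR, (DualBound.zero hs).mono fun m => by simp [spread]⟩
  let hex : ∃ j, i ≤ j ∧ DualBound v (spread q j R a) s := ⟨R, hR⟩
  obtain ⟨hi, hdual⟩ := Nat.find_spec hex
  exact ⟨Nat.find hex, hi, Nat.find_min' hex hR, hdual, fun hlt hdual' =>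
    Nat.find_min hex (m := Nat.find hex - 1) (by omega) ⟨by omega, hdual'⟩⟩

namespace BDData

variable {Γ : Type*} (D : BDData Γ)

/-- The element `z` vanishes at the root and its components at the levels `q 0, q 1, …` vanish. -/
def Skips (q : ℕ → ℕ) (z : Γ → ℝ) : Prop :=
  z D.root = 0 ∧ ∀ γ m, D.rank γ = q m → D.ext z γ (q m - 1) = z γ

variable {D} in
theorem Skips.ext {z : Γ → ℝ} (hz : D.Skips q z) (n : ℕ) : D.Skips q fun γ => D.ext z γ n := by
  refine ⟨(D.ext_of_le z (by rw [D.rank_root]; exact n.zero_le)).trans hz.1, fun γ m hm => ?_⟩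
  change D.ext (fun δ => D.ext z δ n) γ (q m - 1) = D.ext z γ n
  rw [D.ext_ext]
  rcases le_or_gt (q m) n with h | h
  · rw [min_eq_left (by omega), hz.2 γ m hm, D.ext_of_le _ (by omega)]
  · rw [min_eq_right (by omega)]

end BDData

variable {X : Type*} [NormedAddCommGroup X] [NormedSpace ℝ X] {E : FDDOn X}

namespace BDParams

open BDTree FDDOn

variable {p : BDParams E} {K : ℝ} {ξ : ℕ → p.Index v} {γ η ζ : p.Index v} {c : ℕ → ℝ} {i' R u : ℕ}
  {t : ℝ}

/-- The functional at the index `γ` is `β` times the sum over `j ∈ [i, r)` of the functionals at the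
indices `ξ j`, restricted to the coordinates from `lo q j` on, with the coefficients `b j`. -/
structure IsWeightedSum (p : BDParams E) (q : ℕ → ℕ) (ξ : ℕ → p.Index v) (i r : ℕ) (b : ℕ → ℝ)
    (γ : p.Index v) : Prop where
  rank_eq : γ.1.rank = if i < r then lo q r else 0
  α_eq : ∀ m, p.α γ.1 m = spread q i r b m
  φ_eq : ∀ x, p.φ γ.1 x = p.β * ∑ j ∈ Finset.Ico i r,
    b j * (p.φ (ξ j).1 x - p.φ (ξ j).1 (E.S (lo q j) x))
  apply_eq : ∀ z : p.Index v → ℝ, (p.data v).Skips q z → z γ = p.β * ∑ j ∈ Finset.Ico i r,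
    b j * (z (ξ j) - (p.data v).ext z (ξ j) (lo q j))

theorem isWeightedSum_root (ξ : ℕ → p.Index v) (i : ℕ) (b : ℕ → ℝ) :
    p.IsWeightedSum q ξ i i b (p.data v).root where
  rank_eq := by rw [if_neg (lt_irrefl i)]; rfl
  α_eq m := by
    rw [spread, Finset.Ico_self, Finset.sum_empty]
    rfl
  φ_eq x := by
    rw [Finset.Ico_self, Finset.sum_empty, mul_zero]
    rfl
  apply_eq z hz := by rw [Finset.Ico_self, Finset.sum_empty, mul_zero, hz.1]

namespace IsWeightedSum

theorem rank_le (h : p.IsWeightedSum q ξ i r b γ) : γ.1.rank ≤ lo q r := by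
  rw [h.rank_eq]
  split_ifs <;> omega

theorem φ_S_lo (h : p.IsWeightedSum q ξ i r b γ) (hq : StrictMono q) (x : X) :
    p.φ γ.1 (E.S (lo q i) x) = 0 := by
  rw [h.φ_eq, Finset.sum_eq_zero, mul_zero]
  intro j hj
  rw [E.S_S, min_eq_right (monotone_lo hq (Finset.mem_Ico.1 hj).1), sub_self, mul_zero]

theorem ext_lo (h : p.IsWeightedSum q ξ i r b γ) (hq : StrictMono q) {z : p.Index v → ℝ}
    (hz : (p.data v).Skips q z) : (p.data v).ext z γ (lo q i) = 0 := by
  rw [h.apply_eq _ (hz.ext (lo q i)), Finset.sum_eq_zero, mul_zero]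
  intro j hj
  rw [(p.data v).ext_ext, min_eq_right (monotone_lo hq (Finset.mem_Ico.1 hj).1), sub_self,
    mul_zero]

theorem α_node (hη : p.IsWeightedSum q ξ i i' b η) (hζ : p.IsWeightedSum q ξ i' R c ζ)
    (hq : StrictMono q) (hq0 : 0 < q 0) (hi : i ≤ i') (hR : i' ≤ R) (ω : BDTree) (l m : ℕ) :
    p.α (node (q R) η.1 ζ.1 ω (lo q i') l t u) m =
      spread q i (R + 1) (glue i' R b (fun j => p.β * c j) t) m := by
  have htail : (if lo q i' < m then p.α ζ.1 m else 0) = spread q i' R c m := by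
    rw [← hζ.α_eq]
    refine ite_eq_left_iff.2 fun hm => ?_
    rw [hζ.α_eq]
    refine (Finset.sum_eq_zero fun j hj => ?_).symm
    have := monotone_lo hq (Finset.mem_Ico.1 hj).1
    have := lo_lt hq hq0 j
    rw [if_neg (by omega), mul_zero]
  rw [BDParams.α_node, htail, hη.α_eq]
  simp only [spread]
  rw [sum_glue_mul hi hR]
  simp only [mul_ite, mul_one, mul_zero, Finset.mul_sum]

theorem φ_node (hη : p.IsWeightedSum q ξ i i' b η) (hζ : p.IsWeightedSum q ξ i' R c ζ)
    (hq : StrictMono q) (hi : i ≤ i') (hR : i' ≤ R) (hu : p.g (q R) u = 0) (x : X) :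
    p.φ (node (q R) η.1 ζ.1 (ξ R).1 (lo q i') (lo q R) t u) x =
      p.β * ∑ j ∈ Finset.Ico i (R + 1), glue i' R b (fun j => p.β * c j) t j *
        (p.φ (ξ j).1 x - p.φ (ξ j).1 (E.S (lo q j) x)) := by
  rw [BDParams.φ_node, hζ.φ_S_lo hq, hu, hη.φ_eq, hζ.φ_eq, sum_glue_mul hi hR]
  simp only [zero_apply, mul_assoc, ← Finset.mul_sum]
  ring

theorem node (hη : p.IsWeightedSum q ξ i i' b η) (hζ : p.IsWeightedSum q ξ i' R c ζ)
    (hq : StrictMono q) (hq0 : 0 < q 0) (hi : i ≤ i') (hR : i' ≤ R) (hu : p.g (q R) u = 0)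
    (hξ : (ξ R).1.rank < q R)
    (hadm : p.Adm v (node (q R) η.1 ζ.1 (ξ R).1 (lo q i') (lo q R) t u)) :
    p.IsWeightedSum q ξ i (R + 1) (glue i' R b (fun j => p.β * c j) t) ⟨_, hadm⟩ where
  rank_eq := (if_pos (Nat.lt_succ_of_le (hi.trans hR))).symm
  α_eq m := hη.α_node hζ hq hq0 hi hR _ _ m
  φ_eq := hη.φ_node hζ hq hi hR hu
  apply_eq z hz := by
    have hloR := lo_lt hq hq0 R
    have hloi' : lo q i' ≤ lo q R := monotone_lo hq hR
    have hηR : η.1.rank ≤ q R - 1 := hη.rank_le.trans (by omega)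
    have hζR : ζ.1.rank ≤ q R - 1 := hζ.rank_le.trans (by omega)
    have hext : (p.data v).ext z ⟨_, hadm⟩ (q R - 1) =
        (p.data v).ext z η (q R - 1) +
        p.β * ((p.data v).ext z ζ (q R - 1) - (p.data v).ext z ζ (min (lo q i') (q R - 1))) +
        p.β * (t * ((p.data v).ext z (ξ R) (q R - 1) -
          (p.data v).ext z (ξ R) (min (lo q R) (q R - 1)))) :=
      (p.data v).ext_of_lt z (show q R - 1 < q R by omega)
    rw [hz.2 ⟨_, hadm⟩ R rfl, min_eq_left (by omega), min_eq_left (by omega), hζ.ext_lo hq hz,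
      (p.data v).ext_of_le z hηR, (p.data v).ext_of_le z hζR,
      (p.data v).ext_of_le z (Nat.le_sub_one_of_lt hξ), hη.apply_eq z hz, hζ.apply_eq z hz] at hext
    rw [hext, sum_glue_mul hi hR]
    simp only [mul_assoc, ← Finset.mul_sum]
    ring

end IsWeightedSum

theorem abs_mul_sum_φ_le {C : ℝ} (hC : 2 * p.β * C ≤ 1) (hlow : IntervalLowerEst E v C)
    (hq : StrictMono q) (hξ : ∀ j, (ξ j).1.rank < q j) (hb : DualBound v (spread q i r b) 2)
    (x : X) : |p.β * ∑ j ∈ Finset.Ico i r,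
      b j * (p.φ (ξ j).1 x - p.φ (ξ j).1 (E.S (lo q j) x))| ≤ 2 * ‖x‖ := by
  have hterm (j : ℕ) (hj : j ∈ Finset.Ico i r) :
      |b j * (p.φ (ξ j).1 x - p.φ (ξ j).1 (E.S (lo q j) x))| ≤
        2 * (|spread q i r b (q j)| * |‖E.projIco (lo q j) (q j) x‖|) := by
    rw [spread_apply hq, if_pos (Finset.mem_Ico.1 hj), abs_mul, abs_norm, mul_left_comm,
      ← (ξ j).2.φ_S_of_rank_le (hξ j).le x, ← map_sub]
    exact mul_le_mul_of_nonneg_left ((ξ j).2.abs_φ_le _) (abs_nonneg _)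
  have hsum : ∑ j ∈ Finset.Ico i r, |spread q i r b (q j)| * |‖E.projIco (lo q j) (q j) x‖| ≤
      2 * (C * ‖x‖) := calc
    _ ≤ ∑ j ∈ Finset.range r, |spread q i r b (q j)| * |‖E.projIco (lo q j) (q j) x‖| :=
        Finset.sum_le_sum_of_subset_of_nonneg
          (fun j hj => Finset.mem_range.2 (Finset.mem_Ico.1 hj).2) fun j _ _ => by positivity
    _ ≤ 2 * ‖∑ j ∈ Finset.range r, ‖E.projIco (lo q j) (q j) x‖ • v (q j)‖ :=
        hb.comp_strictMono hq (fun j => ‖E.projIco (lo q j) (q j) x‖) r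
    _ ≤ 2 * (C * ‖x‖) := mul_le_mul_of_nonneg_left (hlow q hq x r) zero_le_two
  calc |p.β * ∑ j ∈ Finset.Ico i r, b j * (p.φ (ξ j).1 x - p.φ (ξ j).1 (E.S (lo q j) x))|
      ≤ p.β * (2 * (2 * (C * ‖x‖))) := by
        rw [abs_mul, abs_of_pos p.β_pos]
        refine mul_le_mul_of_nonneg_left ((Finset.abs_sum_le_sum_abs _ _).trans
          ((Finset.sum_le_sum hterm).trans ?_)) p.β_pos.le
        rw [← Finset.mul_sum]
        exact mul_le_mul_of_nonneg_left hsum zero_le_two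
    _ = 2 * p.β * C * (2 * ‖x‖) := by ring
    _ ≤ 2 * ‖x‖ := mul_le_of_le_one_left (by positivity) hC

theorem IsFine.large_of_not_dualBound (hp : p.IsFine K δ) (hU : UncondWith v Ku) (hKu : 0 ≤ Ku)
    (hv : ∀ i, ‖v i‖ = 1) (hδ : 2 * δ * Ku ≤ p.β / 2) (hq : StrictMono q)
    (hη : p.IsWeightedSum q ξ i i' b η) (hi : i ≤ i') {T : BDTree} (hpre : T.pre = η.1)
    (hrank : T.rank = q R) (hα : ∀ m, p.α T m = spread q i (R + 1) c m)
    (hca : ∀ j, i ≤ j → j < R + 1 → |c j - a j| ≤ δ * (1 / 2) ^ q j)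
    (hmin : i < i' → ¬ DualBound v (spread q (i' - 1) R a) p.β) : p.Large v T := by
  rcases hi.eq_or_lt with rfl | hlt
  · exact Or.inl (by rw [hpre, hη.rank_eq, if_neg (lt_irrefl i)])
  · obtain ⟨I, rfl⟩ : ∃ I, i' = I + 1 := ⟨i' - 1, by omega⟩
    have hiI : i ≤ I := Nat.lt_succ_iff.1 hlt
    have hpre_rank : T.pre.rank = q I := by
      rw [hpre, hη.rank_eq, if_pos hlt]
      rfl
    refine Or.inr (Or.inr fun hd => hmin hlt ?_)
    simp only [hpre_rank, hrank, hα, spread_restrict hq hiI R.le_succ] at hd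
    have hd' : DualBound v (spread q I R a) (p.c + 2 * δ * Ku) :=
      hd.of_close hU hKu hv hp.δ_nonneg fun m => by
        rw [abs_sub_comm]
        exact abs_spread_sub_le hq hp.δ_nonneg
          (fun j hj hjR => hca j (hiI.trans hj) (hjR.trans R.lt_succ_self)) m
    refine hd'.le ?_
    nlinarith [hp.c_le, hp.one_le_K, p.c_pos]

theorem IsFine.exists_isWeightedSum (hp : p.IsFine K δ) (hU : UncondWith v Ku) (hKu : 0 ≤ Ku)
    (hv : ∀ i, ‖v i‖ = 1) (hδ : 2 * δ * Ku ≤ p.β / 2) {C : ℝ} (hC : 2 * p.β * C ≤ 1)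
    (hlow : IntervalLowerEst E v C) (hq : StrictMono q) (hq0 : 0 < q 0)
    (hξ : ∀ j, (ξ j).1.rank < q j) (hir : i ≤ r) (ha : DualBound v (spread q i r a) 1) :
    ∃ γ b, (∀ j, i ≤ j → j < r → |b j - a j| ≤ δ * (1 / 2) ^ q j) ∧
      p.IsWeightedSum q ξ i r b γ := by
  induction r using Nat.strong_induction_on generalizing i a with
  | _ r ih =>
  rcases hir.eq_or_lt with rfl | hlt
  · exact ⟨_, a, fun j hj hj' => absurd hj hj'.not_ge, isWeightedSum_root ξ i a⟩
  obtain ⟨R, rfl⟩ : ∃ R, r = R + 1 := ⟨r - 1, by omega⟩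
  obtain ⟨i', hi, hR, hi', hmin⟩ :=
    exists_minimal_dualBound v q a (Nat.lt_succ_iff.1 hlt) p.β_pos.le
  obtain ⟨η, b, hb, hη⟩ := ih i' (by omega) hi (ha.mono (abs_spread_le_of_le hq (by omega) a))
  have hscale : DualBound v (spread q i' R fun j => p.β⁻¹ * a j) 1 := by
    have h := hi'.smul (inv_nonneg.2 p.β_pos.le)
    rw [inv_mul_cancel₀ p.β_pos.ne'] at h
    exact h.mono fun m => by rw [spread_smul]
  obtain ⟨ζ, c, hc, hζ⟩ := ih R (by omega) hR hscale
  have haR : |a R| ≤ 1 := by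
    have h := ha.abs_le hv (q R)
    rwa [spread_apply hq, if_pos ⟨Nat.lt_succ_iff.1 hlt, R.lt_succ_self⟩] at h
  obtain ⟨t, htA, ht⟩ := hp.A_net (q R) (a R) haR
  have hloR := lo_lt hq hq0 R
  obtain ⟨u, hus, hu⟩ := hp.exists_zero (q R - 1)
  rw [Nat.sub_add_cancel (by omega)] at hus hu
  have hclose := abs_glue_sub_le p.β_pos (by linarith [p.β_le]) hb hc ht
  have hα := hη.α_node (l := lo q R) (t := t) (u := u) hζ hq hq0 hi hR (ξ R).1
  have hdual : DualBound v (p.α (.node (q R) η.1 ζ.1 (ξ R).1 (lo q i') (lo q R) t u)) 2 :=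
    (ha.of_close hU hKu hv hp.δ_nonneg fun m => by
      rw [hα]
      exact abs_spread_sub_le hq hp.δ_nonneg hclose m).le (by linarith [p.β_le])
  have hloi' : lo q i' ≤ lo q R := monotone_lo hq hR
  have hadm := Adm.node η.2 ζ.2 (ξ R).2 hη.rank_le (hloi'.trans_lt hloR) (hη.rank_le.trans hloi')
    hloR (hζ.rank_le.trans_lt hloR) (hξ R) htA hus
    (fun x => by
      rw [hη.φ_node hζ hq hi hR hu]
      exact abs_mul_sum_φ_le hC hlow hq hξ (hdual.mono fun m => by rw [hα]) x)
    hdual (hp.large_of_not_dualBound hU hKu hv hδ hq hη hi rfl rfl hα hclose hmin)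
  exact ⟨_, _, hclose, hη.node hζ hq hq0 hi hR hu (hξ R) hadm⟩

end BDParams

end LowerEstimate

namespace BDData

variable {Γ : Type*} [TopologicalSpace Γ] [DiscreteTopology Γ] {D : BDData Γ} {r q : ℕ → ℕ}
  {z : ℕ → D.Z}

/-- The vectors `z 0, z 1, …` are supported in the intervals `(r 0, q 0), (r 1, q 1), …`, where
`r 0 < q 0 < r 1 < q 1 < ⋯`. -/
structure IsSkippedBlockSeq (D : BDData Γ) (r q : ℕ → ℕ) (z : ℕ → D.Z) : Prop where
  lt : ∀ n, r n < q n
  lt_succ : ∀ n, q n < r (n + 1)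
  projZ_eq_zero : ∀ n, D.projZ (r n) (z n) = 0
  projZ_eq_self : ∀ n m, q n ≤ m + 1 → D.projZ m (z n) = z n

namespace IsSkippedBlockSeq

theorem of_suppIn (hrq : ∀ n, r n < q n) (hqr : ∀ n, q n < r (n + 1))
    (hz : ∀ n, ∀ i ∈ D.fdd.suppIn (z n), r n < i ∧ i < q n) : D.IsSkippedBlockSeq r q z where
  lt := hrq
  lt_succ := hqr
  projZ_eq_zero n := by
    rw [← D.fdd_S_succ]
    exact D.fdd.S_eq_zero_of_supp fun i hi => (hz n i hi).1
  projZ_eq_self n m hm := by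
    rw [← D.fdd_S_succ]
    exact D.fdd.S_eq_self_of_supp fun i hi => (hz n i hi).2.trans_le hm

theorem strictMono (h : D.IsSkippedBlockSeq r q z) : StrictMono q :=
  strictMono_nat_of_lt_succ fun n => (h.lt_succ n).trans (h.lt _)

theorem le_of_lt (h : D.IsSkippedBlockSeq r q z) {m n : ℕ} (hmn : m < n) : q m ≤ r n := by
  obtain ⟨n, rfl⟩ := Nat.exists_eq_succ_of_ne_zero (by omega : n ≠ 0)
  exact (h.strictMono.monotone (Nat.lt_succ_iff.1 hmn)).trans (h.lt_succ n).le

theorem lo_le (h : D.IsSkippedBlockSeq r q z) : ∀ n, FDDOn.lo q n ≤ r n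
  | 0 => Nat.zero_le _
  | n + 1 => (h.lt_succ n).le

theorem exists_third_lt (h : D.IsSkippedBlockSeq r q z) (n : ℕ) (hz1 : ‖z n‖ = 1) :
    ∃ ξ, D.rank ξ < q n ∧ 1 / 3 < |D.incl (z n) ξ| := by
  by_contra! hcon
  have hlt := h.lt n
  have hnorm := D.norm_le_of_projZ_eq (h.projZ_eq_self n (q n - 1) (by omega))
    fun ξ hξ => hcon ξ (by omega)
  norm_num [hz1] at hnorm

theorem skips (h : D.IsSkippedBlockSeq r q z) (co : ℕ → ℝ) (N : ℕ) :
    D.Skips q (D.incl (∑ n ∈ Finset.range N, co n • z n)) := by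
  refine ⟨?_, fun γ m hm => ?_⟩
  · simp only [map_sum, map_smul]
    simp [fun n => D.incl_eq_zero (h.projZ_eq_zero n) (D.rank_root.trans_le (r n).zero_le)]
  · rw [← D.incl_projZ_apply]
    simp only [map_sum, map_smul, BoundedContinuousFunction.coe_sum, Finset.sum_apply]
    refine Finset.sum_congr rfl fun n _ => congrArg (co n * ·) ?_
    change D.ext (D.incl (z n)) γ (q m - 1) = D.incl (z n) γ
    rcases le_or_gt n m with hnm | hmn
    · have := h.strictMono.monotone hnm
      exact D.ext_eq_incl (h.projZ_eq_self n (q m - 1) (by omega)) γ le_rfl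
    · have := h.le_of_lt hmn
      rw [D.ext_eq_zero (h.projZ_eq_zero n) γ (by omega),
        D.incl_eq_zero (h.projZ_eq_zero n) (by omega)]

theorem incl_sub_ext_lo (h : D.IsSkippedBlockSeq r q z) (co : ℕ → ℝ) {N j : ℕ}
    (hj : j < N) {ξ : Γ} (hξ : D.rank ξ < q j) :
    D.incl (∑ n ∈ Finset.range N, co n • z n) ξ -
        D.ext (D.incl (∑ n ∈ Finset.range N, co n • z n)) ξ (FDDOn.lo q j) =
      co j * D.incl (z j) ξ := by
  rw [← D.incl_projZ_apply]
  simp only [map_sum, map_smul, BoundedContinuousFunction.coe_sum, Finset.sum_apply,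
    BoundedContinuousFunction.coe_smul, smul_eq_mul, D.incl_projZ_apply]
  rw [← Finset.sum_sub_distrib, Finset.sum_eq_single_of_mem j (Finset.mem_range.2 hj)]
  · rw [D.ext_eq_zero (h.projZ_eq_zero j) _ (h.lo_le j), mul_zero, sub_zero]
  · intro n _ hn
    rcases lt_or_gt_of_ne hn with hnj | hjn
    · have := FDDOn.le_lo h.strictMono hnj
      rw [D.ext_eq_incl (h.projZ_eq_self n (FDDOn.lo q j) (by omega)) _ le_rfl, sub_self]
    · have := h.le_of_lt hjn
      have := FDDOn.lo_le h.strictMono j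
      rw [D.ext_eq_zero (h.projZ_eq_zero n) _ (by omega),
        D.incl_eq_zero (h.projZ_eq_zero n) (by omega), sub_self]

end IsSkippedBlockSeq

end BDData

section SkippedEstimate

variable {X V : Type*} [NormedAddCommGroup X] [NormedSpace ℝ X] [NormedAddCommGroup V]
  [NormedSpace ℝ V] {E : FDDOn X} {v : ℕ → V} {Ku δ : ℝ} {q : ℕ → ℕ}

namespace UncondWith

theorem norm_sum_le_of_le_abs (hU : UncondWith v Ku) {d : ℕ → ℝ} {s : ℝ} (hs : 0 < s)
    (hd : ∀ j, s ≤ |d j|) (c : ℕ → ℝ) (N : ℕ) :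
    ‖∑ j ∈ Finset.range N, c j • v j‖ ≤
      Ku / s * ‖∑ j ∈ Finset.range N, (c j * d j) • v j‖ := by
  have hd0 (j : ℕ) : d j ≠ 0 := abs_pos.1 (hs.trans_le (hd j))
  have h := hU (fun j => s⁻¹ * (c j * d j)) (fun j => s / d j) N fun j => by
    rw [abs_div, abs_of_pos hs]
    exact div_le_one_of_le₀ (hd j) (abs_nonneg _)
  have hc (j : ℕ) : s / d j * (s⁻¹ * (c j * d j)) = c j := by
    have := hd0 j
    field_simp
  simp only [hc, mul_smul s⁻¹] at h
  rw [← Finset.smul_sum, norm_smul, Real.norm_of_nonneg (inv_nonneg.2 hs.le)] at h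
  rwa [div_eq_mul_inv, mul_assoc]

theorem exists_dualBound_norming_comp (hU : UncondWith v Ku) (hKu : 1 ≤ Ku) (hq : StrictMono q)
    (c : ℕ → ℝ) (N : ℕ) : ∃ α, DualBound v α 1 ∧
      Ku * ∑ j ∈ Finset.range N, α (q j) * c j = ‖∑ j ∈ Finset.range N, c j • v (q j)‖ := by
  obtain ⟨α, hα, h⟩ := hU.exists_dualBound_norming hKu (Function.extend q c 0) (q N)
  refine ⟨α, hα, ?_⟩
  rw [sum_range_extend_smul hq, sum_range_comp hq N fun m hm => by
    rw [Function.extend_apply' _ _ _ hm, Pi.zero_apply, mul_zero]] at h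
  simpa only [hq.injective.extend_apply] using h

theorem abs_sum_sub_mul_le (hU : UncondWith v Ku) (hKu : 0 ≤ Ku) (hv : ∀ i, ‖v i‖ = 1)
    (hq : StrictMono q) (hδ : 0 ≤ δ) {a b : ℕ → ℝ} {N : ℕ}
    (hb : ∀ j, 0 ≤ j → j < N → |b j - a j| ≤ δ * (1 / 2) ^ q j) (c : ℕ → ℝ) :
    |∑ j ∈ Finset.range N, (b j - a j) * c j| ≤
      2 * δ * Ku * ‖∑ j ∈ Finset.range N, c j • v (q j)‖ := by
  have h := (hU.dualBound_of_abs_le_geometric hKu hv hδ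
    (abs_spread_sub_le hq hδ hb)).comp_strictMono hq c N
  refine (Finset.abs_sum_le_sum_abs _ _).trans (h.trans' (Finset.sum_le_sum fun j hj => ?_))
  rw [abs_mul]
  simp [spread_apply hq, Finset.mem_range.1 hj]

end UncondWith

namespace BDParams

variable {p : BDParams E} {K C : ℝ} {r : ℕ → ℕ} {z : ℕ → (p.data v).Z}

open BDData

theorem IsFine.mul_norm_le (hp : p.IsFine K δ) (hU : UncondWith v Ku) (hKu : 1 ≤ Ku)
    (hv : ∀ i, ‖v i‖ = 1) (hδ : 2 * δ * Ku ≤ p.β / 2) (hδ' : 4 * δ * Ku ^ 2 ≤ 1)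
    (hC : 2 * p.β * C ≤ 1) (hlow : IntervalLowerEst E v C)
    (hz : (p.data v).IsSkippedBlockSeq r q z) {ξ : ℕ → p.Index v}
    (hξ : ∀ j, (ξ j).1.rank < q j) (co : ℕ → ℝ) (N : ℕ) :
    p.β * ‖∑ j ∈ Finset.range N, (co j * (p.data v).incl (z j) (ξ j)) • v (q j)‖ ≤
      2 * Ku * ‖∑ n ∈ Finset.range N, co n • z n‖ := by
  have hq := hz.strictMono
  have hKu0 : 0 ≤ Ku := zero_le_one.trans hKu
  set y := ∑ n ∈ Finset.range N, co n • z n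
  set c : ℕ → ℝ := fun j => co j * (p.data v).incl (z j) (ξ j)
  set W := ‖∑ j ∈ Finset.range N, c j • v (q j)‖
  obtain ⟨α, hα, hαW⟩ := hU.exists_dualBound_norming_comp hKu hq c N
  obtain ⟨γ, b, hb, hγ⟩ := hp.exists_isWeightedSum hU hKu0 hv hδ hC hlow hq
    ((Nat.zero_le _).trans_lt (hz.lt 0)) hξ N.zero_le (hα.mono (abs_spread_le hq 0 N α))
  have hyγ : (p.data v).incl y γ = p.β * ∑ j ∈ Finset.range N, b j * c j := by
    rw [hγ.apply_eq _ (hz.skips co N), Nat.Ico_zero_eq_range]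
    congr 1
    exact Finset.sum_congr rfl fun j hj => by
      rw [hz.incl_sub_ext_lo co (Finset.mem_range.1 hj) (hξ j)]
  have herr := hU.abs_sum_sub_mul_le hKu0 hv hq hp.δ_nonneg hb c
  simp only [Function.comp_apply, sub_mul, Finset.sum_sub_distrib] at herr
  have hhalf : W / 2 ≤ Ku * ∑ j ∈ Finset.range N, b j * c j := calc
    W / 2 ≤ W - 2 * δ * Ku ^ 2 * W := by
      linarith [mul_le_of_le_one_left (show 0 ≤ W from norm_nonneg _) hδ']
    _ = Ku * (∑ j ∈ Finset.range N, α (q j) * c j - 2 * δ * Ku * W) := by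
      rw [mul_sub, hαW]
      ring
    _ ≤ Ku * ∑ j ∈ Finset.range N, b j * c j :=
      mul_le_mul_of_nonneg_left (by linarith [(abs_le.1 herr).1]) hKu0
  calc p.β * W = 2 * (p.β * (W / 2)) := by ring
    _ ≤ 2 * (p.β * (Ku * ∑ j ∈ Finset.range N, b j * c j)) := by
      gcongr
      exact p.β_pos.le
    _ = 2 * Ku * (p.data v).incl y γ := by rw [hyγ]; ring
    _ ≤ 2 * Ku * ‖y‖ := by
      gcongr
      exact (le_abs_self _).trans ((p.data v).abs_incl_le γ y)

theorem IsFine.skipped_lower_estimate (hp : p.IsFine K δ) (hU : UncondWith v Ku) (hKu : 1 ≤ Ku)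
    (hv : ∀ i, ‖v i‖ = 1) (hδ : 2 * δ * Ku ≤ p.β / 2) (hδ' : 4 * δ * Ku ^ 2 ≤ 1)
    (hC : 2 * p.β * C ≤ 1) (hlow : IntervalLowerEst E v C)
    (hz : (p.data v).IsSkippedBlockSeq r q z) (hz1 : ∀ n, ‖z n‖ = 1) (co : ℕ → ℝ) (N : ℕ) :
    ‖∑ n ∈ Finset.range N, co n • v (q n)‖ ≤
      6 * Ku ^ 2 / p.β * ‖∑ n ∈ Finset.range N, co n • z n‖ := by
  choose ξ hξ hthird using fun n => hz.exists_third_lt n (hz1 n)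
  have hw := (hU.comp_strictMono hz.strictMono).norm_sum_le_of_le_abs (by norm_num)
    (fun j => (hthird j).le) co N
  have hW := hp.mul_norm_le hU hKu hv hδ hδ' hC hlow hz hξ co N
  simp only [Function.comp_apply] at hw
  refine hw.trans ?_
  rw [div_mul_eq_mul_div (6 * Ku ^ 2), le_div_iff₀ p.β_pos]
  have := mul_le_mul_of_nonneg_left hW (by linarith : 0 ≤ 3 * Ku)
  linarith

end BDParams

end SkippedEstimate

section WellFounded

variable {X V : Type*} [NormedAddCommGroup X] [NormedSpace ℝ X] [NormedAddCommGroup V]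
  [NormedSpace ℝ V] {E : FDDOn X} {v : ℕ → V} {Ku K c : ℝ} {n : ℕ → ℕ}

theorem FDDOn.Shrinking.eventually_abs_apply_projIco_le (hE : E.Shrinking)
    (hK : ∀ N x, ‖E.S N x‖ ≤ K * ‖x‖) (f : X →L[ℝ] ℝ) (hn : Monotone n) (hc : 0 < c) :
    ∀ᶠ i in atTop, ∀ x, |f (E.projIco (n i) (n (i + 1)) x)| ≤ c * ‖x‖ := by
  by_contra hfreq
  obtain ⟨ψ, hψ, hlarge⟩ := extraction_of_frequently_atTop (not_eventually.1 hfreq)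
  push Not at hlarge
  choose x hx using hlarge
  have hmono (k : ℕ) : n (ψ k) ≤ n (ψ k + 1) := hn (ψ k).le_succ
  have hne (k : ℕ) : E.projIco (n (ψ k)) (n (ψ k + 1)) (x k) ≠ 0 := fun h => by
    have := hx k
    rw [h, map_zero, abs_zero] at this
    exact this.not_ge (by positivity)
  choose z a b hab hz ha hb hzx using fun k =>
    E.exists_unit_suppExact (hmono k) (E.projIco_projIco_self (hmono k) (x k)) (hne k)
  have hblock : E.IsBlockSeq z a b :=
    ⟨hab, fun k => (hb k).trans_le ((hn (hψ k.lt_succ_self)).trans (ha (k + 1)))⟩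
  have hlim := ((hE z a b hblock hz f).abs).const_mul (2 * K)
  rw [abs_zero, mul_zero] at hlim
  refine hc.not_ge (ge_of_tendsto' hlim fun k => ?_)
  refine (lt_of_mul_lt_mul_right (a := ‖x k‖) ?_ (norm_nonneg _)).le
  calc c * ‖x k‖ < |f (E.projIco (n (ψ k)) (n (ψ k + 1)) (x k))| := hx k
    _ = ‖E.projIco (n (ψ k)) (n (ψ k + 1)) (x k)‖ * |f (z k)| := by
      conv_lhs => rw [← hzx k, map_smul, smul_eq_mul, abs_mul, abs_norm]
    _ ≤ 2 * K * ‖x k‖ * |f (z k)| := by gcongr; exact E.norm_projIco_le hK _ _ _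
    _ = 2 * K * |f (z k)| * ‖x k‖ := by ring

/-- Every bounded block sequence of `v` is weakly null; for a Schauder basis this says that `v` is
shrinking. -/
def WeaklyNullBlocks (v : ℕ → V) : Prop :=
  ∀ (z : ℕ → V) (a b : ℕ → ℕ), BasisBlockSeq v z a b → (∀ n, ‖z n‖ ≤ 1) →
    ∀ f : V →L[ℝ] ℝ, Tendsto (fun n => f (z n)) atTop (𝓝 0)

theorem UncondWith.exists_block_of_not_dualBound (hU : UncondWith v Ku) (f : V →L[ℝ] ℝ) (hc : 0 < c)
    {i j : ℕ} (h : ¬ DualBound v (fun m => if i ≤ m ∧ m < j then f (v m) else 0) c) :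
    ∃ co : ℕ → ℝ, ‖∑ m ∈ Finset.Icc i (j - 1), co m • v m‖ ≤ 1 ∧
      c ≤ Ku * f (∑ m ∈ Finset.Icc i (j - 1), co m • v m) := by
  simp only [DualBound, not_forall, not_le] at h
  obtain ⟨co, N, hN⟩ := h
  obtain ⟨ε, hε, hf⟩ := exists_sign_apply_smul f v co
  set w := ‖∑ m ∈ Finset.range N, co m • v m‖
  set u := ∑ m ∈ Finset.range N, ((if i ≤ m ∧ m < j then ε m else 0) * co m) • v m with hu
  have huw : ‖u‖ ≤ Ku * w := hU co _ N fun m => by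
    split_ifs
    exacts [hε m, by simp]
  have hwu : c * w < f u := hN.trans_eq <| by
    rw [hu, map_sum]
    exact Finset.sum_congr rfl fun m _ => by split_ifs <;> simp [← hf]
  have hu0 : 0 < ‖u‖ := norm_pos_iff.2 fun h0 => by
    rw [h0, map_zero] at hwu
    exact hwu.not_ge (by positivity)
  have hKu : 0 ≤ Ku := (pos_of_mul_pos_left (hu0.trans_le huw) (norm_nonneg _)).le
  have hblock : ∑ m ∈ Finset.Icc i (j - 1),
      (‖u‖⁻¹ * if m < N ∧ i ≤ m ∧ m < j then ε m * co m else 0) • v m = ‖u‖⁻¹ • u := by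
    simp only [mul_smul, ← Finset.smul_sum, hu, ite_smul, ite_mul, zero_mul, zero_smul,
      ← Finset.sum_filter]
    congr 2
    ext m
    simp only [Finset.mem_filter, Finset.mem_Icc, Finset.mem_range]
    omega
  refine ⟨_, by rw [hblock, norm_smul, norm_inv, norm_norm, inv_mul_cancel₀ hu0.ne'], ?_⟩
  rw [hblock, map_smul, smul_eq_mul, mul_left_comm, le_inv_mul_iff₀ hu0]
  calc ‖u‖ * c ≤ Ku * w * c := by gcongr
    _ = Ku * (c * w) := by ring
    _ ≤ Ku * f u := by gcongr

theorem WeaklyNullBlocks.eventually_dualBound (hv : WeaklyNullBlocks v) (hU : UncondWith v Ku)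
    (f : V →L[ℝ] ℝ) (hn : StrictMono n) (hc : 0 < c) :
    ∀ᶠ i in atTop, DualBound v (fun m => if n i ≤ m ∧ m < n (i + 1) then f (v m) else 0) c := by
  by_contra hfreq
  obtain ⟨ψ, hψ, hlarge⟩ := extraction_of_frequently_atTop (not_eventually.1 hfreq)
  choose co hco hc' using fun k => hU.exists_block_of_not_dualBound f hc (hlarge k)
  have hblock (k : ℕ) : n (ψ k + 1) - 1 < n (ψ (k + 1)) := by
    have hlt := hn (ψ k).lt_succ_self
    have hle := hn.monotone (Nat.succ_le_of_lt (hψ k.lt_succ_self))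
    simp only [Nat.succ_eq_add_one] at hlt hle
    omega
  have hlim := (hv _ _ _ ⟨fun k => ⟨co k, rfl⟩, hblock⟩ hco f).const_mul Ku
  rw [mul_zero] at hlim
  exact hc.not_ge (ge_of_tendsto' hlim hc')

namespace BDParams

open BDTree

variable (p : BDParams E)

/-- An infinite branch of the tree of admissible labels. -/
structure IsBranch (v : ℕ → V) (t : ℕ → BDTree) : Prop where
  adm : ∀ i, p.Adm v (t i)
  pre : ∀ i, (t (i + 1)).pre = t i
  rank_pos : ∀ i, 0 < (t (i + 1)).rank

namespace IsBranch

variable {p} {t : ℕ → BDTree}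

theorem strictMono_rank (ht : p.IsBranch v t) : StrictMono fun i => (t i).rank :=
  strictMono_nat_of_lt_succ fun i => by
    simpa only [ht.pre] using (ht.adm (i + 1)).pre_rank_lt (ht.rank_pos i)

theorem φ_S (ht : p.IsBranch v t) {i j m : ℕ} (hij : i ≤ j) (hm : m ≤ (t i).rank) (x : X) :
    p.φ (t j) (E.S m x) = p.φ (t i) (E.S m x) := by
  induction j, hij using Nat.le_induction with
  | base => rfl
  | succ j hij ih =>
    rw [(ht.adm (j + 1)).φ_S_pre (by rw [ht.pre]; exact hm.trans (ht.strictMono_rank.monotone hij)),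
      ht.pre, ih]

theorem α_eq (ht : p.IsBranch v t) {i j m : ℕ} (hij : i ≤ j) (hm : m ≤ (t i).rank) :
    p.α (t j) m = p.α (t i) m := by
  induction j, hij using Nat.le_induction with
  | base => rfl
  | succ j hij ih =>
    rw [(ht.adm (j + 1)).α_pre (by rw [ht.pre]; exact hm.trans (ht.strictMono_rank.monotone hij)),
      ht.pre, ih]

theorem exists_limit_φ (ht : p.IsBranch v t) :
    ∃ f : X →L[ℝ] ℝ, ∀ i, ∀ m ≤ (t i).rank, ∀ x, f (E.S m x) = p.φ (t i) (E.S m x) := by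
  obtain ⟨f, -, hf⟩ := exists_tendsto_ultrafilter (fun i => p.φ (t i)) 2
    (fun i x => (ht.adm i).abs_φ_le x) (hyperfilter ℕ)
  refine ⟨f, fun i m hm x => tendsto_nhds_unique (hf (E.S m x)) (tendsto_const_nhds.congr' ?_)⟩
  refine Eventually.filter_mono Nat.hyperfilter_le_atTop ?_
  filter_upwards [eventually_ge_atTop i] with j hj
  rw [ht.φ_S hj hm]

theorem exists_limit_α (ht : p.IsBranch v t) (hv : LinearIndependent ℝ v) :
    ∃ f : V →L[ℝ] ℝ, ∀ i, ∀ m ≤ (t i).rank, f (v m) = p.α (t i) m := by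
  have hrank (m : ℕ) : m ≤ (t m).rank := ht.strictMono_rank.le_apply
  have hα (i m : ℕ) (hm : m ≤ (t i).rank) : p.α (t m) m = p.α (t i) m := by
    rcases le_total i m with h | h
    · exact ht.α_eq h hm
    · exact (ht.α_eq h (hrank m)).symm
  have hdual : DualBound v (fun m => p.α (t m) m) 2 := fun co N => by
    refine (Finset.sum_congr rfl fun m hm => ?_).trans_le ((ht.adm N).dualBound co N)
    simp only [hα N m ((Finset.mem_range.1 hm).le.trans (hrank N))]
  obtain ⟨f, hf⟩ := hdual.exists_functional hv
  exact ⟨f, fun i m hm => (hf m).trans (hα i m hm)⟩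

end IsBranch

theorem not_isBranch (hE : E.Shrinking) (hK : ∀ N x, ‖E.S N x‖ ≤ K * ‖x‖)
    (hV : WeaklyNullBlocks v) (hU : UncondWith v Ku) (hv : LinearIndependent ℝ v)
    (t : ℕ → BDTree) : ¬ p.IsBranch v t := fun ht => by
  obtain ⟨f, hf⟩ := ht.exists_limit_φ
  obtain ⟨g, hg⟩ := ht.exists_limit_α hv
  have hmono := ht.strictMono_rank.monotone
  have hφ := hE.eventually_abs_apply_projIco_le hK f (n := fun i => (t i).rank - 1)
    (fun i j hij => Nat.sub_le_sub_right (hmono hij) 1) p.c_pos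
  have hα := hV.eventually_dualBound hU g ht.strictMono_rank p.c_pos
  obtain ⟨i, hφi, hαi, hi⟩ := (hφ.and (hα.and (eventually_ge_atTop 1))).exists
  have hlarge := (ht.adm (i + 1)).large
  simp only [Large, ht.pre] at hlarge
  rcases hlarge with hrank | ⟨x, hx⟩ | hdual
  · exact (hi.trans (ht.strictMono_rank.le_apply)).not_gt (by rw [hrank]; exact one_pos)
  · refine hx.not_ge ((le_of_eq ?_).trans (hφi x))
    have hle : (t i).rank - 1 ≤ (t (i + 1)).rank := (Nat.sub_le _ _).trans (hmono i.le_succ)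
    rw [E.projIco_apply, map_sub, map_sub, hf (i + 1) _ (Nat.sub_le _ _), hf (i + 1) _ hle]
  · refine hdual (hαi.mono fun m => le_of_eq ?_)
    congr 1
    split_ifs with hm
    · rw [hg (i + 1) m hm.2.le]
    · rfl

theorem wellFounded_isParent (hE : E.Shrinking) (hK : ∀ N x, ‖E.S N x‖ ≤ K * ‖x‖)
    (hV : WeaklyNullBlocks v) (hU : UncondWith v Ku) (hv : LinearIndependent ℝ v) :
    WellFounded (Function.swap (p.data v).IsParent) := by
  rw [wellFounded_iff_isEmpty_descending_chain]
  exact ⟨fun ⟨γ, hγ⟩ => p.not_isBranch hE hK hV hU hv (fun i => (γ i).1)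
    ⟨fun i => (γ i).2, fun i => congrArg Subtype.val (hγ i).2, fun i => (hγ i).1⟩⟩

end BDParams

end WellFounded

section Nets

variable {X : Type*} [NormedAddCommGroup X] [NormedSpace ℝ X]

theorem FDDOn.exists_finite_net (E : FDDOn X) (n : ℕ) {ε : ℝ} (hε : 0 < ε) :
    ∃ T : Set (X →L[ℝ] ℝ), T.Finite ∧ (∀ g ∈ T, ∀ x, g (E.P n x) = g x) ∧
      ∀ f : X →L[ℝ] ℝ, (∀ x, |f x| ≤ ‖x‖) → (∀ x, f (E.P n x) = f x) →
        ∃ g ∈ T, ∀ x, |g x - f x| ≤ ε * ‖x‖ := by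
  let R := LinearMap.range (E.P n : X →ₗ[ℝ] X)
  have : FiniteDimensional ℝ R := E.finDim n
  have : ProperSpace (R →L[ℝ] ℝ) := FiniteDimensional.proper ℝ (R →L[ℝ] ℝ)
  let Q : X →L[ℝ] R := (E.P n).codRestrict R fun x => ⟨x, rfl⟩
  let B := (fun h : R →L[ℝ] ℝ => h.comp Q) '' Metric.closedBall 0 1
  have hB : IsCompact B := (isCompact_closedBall 0 1).image (by fun_prop)
  obtain ⟨T, hTB, hT, hcover⟩ := hB.finite_cover_balls hε
  refine ⟨T, hT, fun g hg x => ?_, fun f hf hfP => ?_⟩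
  · obtain ⟨h, -, rfl⟩ := hTB hg
    exact congrArg h (Subtype.ext (E.idem n x))
  · have hfB : f ∈ B := by
      refine ⟨f.comp R.subtypeL, (mem_closedBall_zero_iff (E := R →L[ℝ] ℝ)).2 ?_,
        ContinuousLinearMap.ext hfP⟩
      exact ContinuousLinearMap.opNorm_le_bound _ zero_le_one fun x => by simpa using hf x
    obtain ⟨g, hg, hgf⟩ := Set.mem_iUnion₂.1 (hcover hfB)
    refine ⟨g, hg, fun x => ((g - f).le_opNorm x).trans ?_⟩
    gcongr
    rw [← dist_eq_norm, dist_comm]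
    exact (Metric.mem_ball.1 hgf).le

theorem FDDOn.exists_net_seq (E : FDDOn X) (n : ℕ) {ε : ℝ} (hε : 0 < ε) :
    ∃ (s : ℕ) (g : ℕ → X →L[ℝ] ℝ), (∀ u x, g u (E.P n x) = g u x) ∧ (∃ u < s, g u = 0) ∧
      ∀ f : X →L[ℝ] ℝ, (∀ x, |f x| ≤ ‖x‖) → (∀ x, f (E.P n x) = f x) →
        ∃ u < s, ∀ x, |g u x - f x| ≤ ε * ‖x‖ := by
  obtain ⟨T, hT, hTP, hnet⟩ := E.exists_finite_net n hε
  obtain ⟨s, e, -, rfl⟩ := hT.fin_param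
  refine ⟨s + 1, fun u => if hu : u < s then e ⟨u, hu⟩ else 0, fun u x => ?_,
    ⟨s, s.lt_succ_self, dif_neg (lt_irrefl s)⟩, fun f hf hfP => ?_⟩
  · dsimp only
    split_ifs
    exacts [hTP _ ⟨_, rfl⟩ x, rfl]
  · obtain ⟨_, ⟨u, rfl⟩, hu⟩ := hnet f hf hfP
    exact ⟨u, u.2.trans s.lt_succ_self, by simpa using hu⟩

theorem exists_finset_net_Icc {ε : ℝ} (hε : 0 < ε) :
    ∃ A : Finset ℝ, (∀ a ∈ A, |a| ≤ 1) ∧ 0 ∈ A ∧ ∀ t : ℝ, |t| ≤ 1 → ∃ a ∈ A, |a - t| ≤ ε := by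
  obtain ⟨T, hT, hfin, hcover⟩ := (isCompact_Icc (a := (-1 : ℝ)) (b := 1)).finite_cover_balls hε
  refine ⟨insert 0 hfin.toFinset, fun a ha => ?_, Finset.mem_insert_self _ _, fun t ht => ?_⟩
  · rcases Finset.mem_insert.1 ha with rfl | ha
    · simp
    · exact abs_le.2 (hT (hfin.mem_toFinset.1 ha))
  · obtain ⟨a, ha, hta⟩ := Set.mem_iUnion₂.1 (hcover (abs_le.1 ht))
    refine ⟨a, Finset.mem_insert_of_mem (hfin.mem_toFinset.2 ha), ?_⟩
    rw [abs_sub_comm]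
    exact (Metric.mem_ball.1 hta).le

namespace BDParams

theorem exists_isFine (E : FDDOn X) {K β c δ : ℝ} (hK1 : 1 ≤ K)
    (hK : ∀ N x, ‖E.S N x‖ ≤ K * ‖x‖) (hβ : 0 < β) (hβ' : β ≤ 1 / 8) (hc : 0 < c)
    (hcK : c * (2 * K) ≤ β / 2) (hδ : 0 < δ) (hδ1 : δ ≤ 1) (hδK : δ * (4 * K ^ 2) ≤ β / 2) :
    ∃ p : BDParams E, p.β = β ∧ p.IsFine K δ := by
  choose s g hgP hg0 hg using fun n : ℕ =>
    E.exists_net_seq (n - 1) (ε := δ * (1 / 2) ^ n) (by positivity)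
  choose A hA hA0 hAnet using fun n : ℕ =>
    exists_finset_net_Icc (ε := δ * (1 / 2) ^ n) (by positivity)
  let p : BDParams E :=
    { β := β, β_pos := hβ, β_le := hβ', c := c, c_pos := hc, g := g
      g_P := fun n => hgP (n + 1), s := s, A := A, A_le := hA }
  exact ⟨p, rfl,
    { one_le_K := hK1, norm_S_le := hK, δ_nonneg := hδ.le, δ_le_one := hδ1, δ_le := hδK
      c_le := hcK, net := fun n => hg (n + 1), exists_zero := fun n => hg0 (n + 1)
      zero_mem := hA0, A_net := hAnet }⟩

theorem exists_isFine_and_le (E : FDDOn X) {K Ku C : ℝ} (hK1 : 1 ≤ K)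
    (hK : ∀ N x, ‖E.S N x‖ ≤ K * ‖x‖) (hKu : 1 ≤ Ku) (hC : 0 ≤ C) :
    ∃ (p : BDParams E) (δ : ℝ), p.IsFine K δ ∧ 2 * p.β * C ≤ 1 ∧
      2 * δ * Ku ≤ p.β / 2 ∧ 4 * δ * Ku ^ 2 ≤ 1 := by
  obtain ⟨β, hβ⟩ : ∃ β, β * (8 * (C + 1)) = 1 := ⟨_, inv_mul_cancel₀ (by positivity)⟩
  obtain ⟨δ, hδ⟩ : ∃ δ, δ * (8 * (K ^ 2 * Ku ^ 2)) = β := ⟨_, div_mul_cancel₀ _ (by positivity)⟩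
  have hβ0 : 0 < β := pos_of_mul_pos_left (hβ ▸ one_pos) (by positivity)
  have hδ0 : 0 < δ := pos_of_mul_pos_left (hδ ▸ hβ0) (by positivity)
  have hβC : 0 ≤ β * C := by positivity
  have hβ8 : β ≤ 1 / 8 := by linarith
  have hK2 : 1 ≤ K ^ 2 := one_le_pow₀ hK1
  have hKu2 : 1 ≤ Ku ^ 2 := one_le_pow₀ hKu
  have hδK : δ * K ^ 2 ≤ δ * (K ^ 2 * Ku ^ 2) := by
    gcongr
    exact le_mul_of_one_le_right (by positivity) hKu2
  have hδKu2 : δ * Ku ^ 2 ≤ δ * (K ^ 2 * Ku ^ 2) := by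
    gcongr
    exact le_mul_of_one_le_left (by positivity) hK2
  have hδKu : δ * Ku ≤ δ * Ku ^ 2 := by
    gcongr
    exact le_self_pow₀ hKu two_ne_zero
  have hδ1 : δ ≤ δ * Ku := le_mul_of_one_le_right hδ0.le hKu
  obtain ⟨p, rfl, hp⟩ := exists_isFine E hK1 hK hβ0 hβ8 (c := β / (4 * K)) (by positivity)
    (le_of_eq (by field_simp; norm_num)) hδ0 (by linarith) (by linarith)
  exact ⟨p, δ, hp, by linarith, by linarith, by linarith⟩

end BDParams

end Nets

section Main

variable {X V : Type*} [NormedAddCommGroup X] [NormedSpace ℝ X] [NormedAddCommGroup V]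
  [NormedSpace ℝ V]

theorem BDParams.IsFine.norm_le_norm_embedding {E : FDDOn X} {p : BDParams E} {K δ : ℝ}
    (hp : p.IsFine K δ) (v : ℕ → V) (x : X) : ‖x‖ ≤ 8 * K * ‖p.embedding v x‖ := by
  have hK : 0 ≤ K := zero_le_one.trans hp.one_le_K
  obtain ⟨t, ht, hx⟩ := hp.exists_norm_le v x
  calc ‖x‖ ≤ 8 * K * |p.φ t x| := hx
    _ ≤ 8 * K * ‖p.embedding v x‖ := by
      gcongr
      rw [← p.incl_embedding x ⟨t, ht⟩]
      exact (p.data v).abs_incl_le ⟨t, ht⟩ (p.embedding v x)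

theorem statement_17_general {v : ℕ → V} {Ku Cd Clow : ℝ} (hv : ∀ i, ‖v i‖ = 1)
    (hU : UncondWith v Ku) (hdom : DominatesInterlacing v Cd) [CompleteSpace X] (E : FDDOn X)
    (hlow : SubseqLowerEst E v Clow) :
    ∃ (Z : Type) (_ : NormedAddCommGroup Z) (_ : NormedSpace ℝ Z) (_ : CompleteSpace Z)
      (F : FDDOn Z),
      IsLinfty Z ∧ Embeds X Z ∧
      (∃ K : ℝ, 1 ≤ K ∧
        ∀ p q : ℕ → ℕ, (∀ n, p n < q n) → (∀ n, q n < p (n + 1)) →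
          ∀ z : ℕ → Z, (∀ n, ∀ i ∈ F.suppIn (z n), p n < i ∧ i < q n) → (∀ n, ‖z n‖ = 1) →
            ∀ (co : ℕ → ℝ) (N : ℕ),
              ‖∑ n ∈ Finset.range N, co n • v (q n)‖ ≤
                K * ‖∑ n ∈ Finset.range N, co n • z n‖) ∧
      (E.Shrinking → WeaklyNullBlocks v → F.Shrinking) := by
  have hKu : 1 ≤ Ku := hU.one_le hv
  obtain ⟨K, hK1, hK⟩ := E.exists_norm_S_le
  obtain ⟨C, hC0, hC⟩ := hlow.exists_intervalLowerEst hv hU (by linarith) hdom (by linarith) hK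
  obtain ⟨p, δ, hp, hβC, hδ, hδ'⟩ := BDParams.exists_isFine_and_le E hK1 hK hKu hC0
  refine ⟨(p.data v).Z, inferInstance, inferInstance, inferInstance, (p.data v).fdd,
    (p.data v).isLinfty, ⟨p.embedding v, 1 / (8 * K), by positivity, fun x => ?_⟩,
    ⟨6 * Ku ^ 2 / p.β, ?_, fun r q hrq hqr z hz hz1 => ?_⟩, fun hE hV => ?_⟩
  · rw [one_div_mul_eq_div, div_le_iff₀' (by positivity)]
    exact hp.norm_le_norm_embedding v x
  · rw [le_div_iff₀ p.β_pos]
    linarith [p.β_le, one_le_pow₀ (n := 2) hKu]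
  · exact hp.skipped_lower_estimate hU hKu hv hδ hδ' hβC hC (.of_suppIn hrq hqr hz) hz1
  · exact (p.data v).fdd_shrinking
      (p.wellFounded_isParent hE hK hV hU (hU.linearIndependent hv))

end Main

/-- **Theorem 6.5.**  Let `V` have a normalized unconditional basis `(v_i)` such that,
for a fixed constant `C`, `(v_{p_n})` `C`-dominates `(v_{q_n})` whenever
`p_1 < q_1 < p_2 < q_2 < ⋯`.  If `X` has an FDD satisfying subsequential `V`-lower
estimates, then `X` embeds into an `ℒ_∞` space `Z` with an FDD `(F̄_i)` satisfying
skipped subsequential `V'`-lower estimates for some subsequence `V'` of `(v_i)`;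
moreover if the FDD of `X` and `(v_i)` are shrinking, then `(F̄_i)` can be chosen
shrinking. -/
theorem statement_17 (V : Type*) [NormedAddCommGroup V] [NormedSpace ℝ V] [CompleteSpace V]
    (v : ℕ → V) (hnorm : ∀ i, ‖v i‖ = 1) (huncond : UnconditionalBasis v)
    (Cd : ℝ) (hCd : 0 < Cd)
    (hdom : ∀ p q : ℕ → ℕ, (∀ n, p n < q n) → (∀ n, q n < p (n + 1)) →
      ∀ (co : ℕ → ℝ) (N : ℕ),
        ‖∑ n ∈ Finset.range N, co n • v (q n)‖ ≤ Cd * ‖∑ n ∈ Finset.range N, co n • v (p n)‖)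
    (X : Type*) [NormedAddCommGroup X] [NormedSpace ℝ X] [CompleteSpace X]
    (E : FDDOn X) (Clow : ℝ) (hClow : 1 ≤ Clow) (hlow : SubseqLowerEst E v Clow) :
    ∃ (Z : Type) (_ : NormedAddCommGroup Z) (_ : NormedSpace ℝ Z) (_ : CompleteSpace Z)
      (F : FDDOn Z),
      IsLinfty Z ∧ Embeds X Z ∧
      (∃ (K : ℝ) (m : ℕ → ℕ), 1 ≤ K ∧ StrictMono m ∧
        ∀ p q : ℕ → ℕ, (∀ n, p n < q n) → (∀ n, q n < p (n + 1)) →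
          ∀ (z : ℕ → Z),
            (∀ n, (F.suppIn (z n)).Finite ∧
              ∀ i ∈ F.suppIn (z n), m (p n) < i ∧ i < m (q n)) →
            (∀ n, ‖z n‖ = 1) →
            ∀ (co : ℕ → ℝ) (N : ℕ),
              ‖∑ n ∈ Finset.range N, co n • v (q n)‖ ≤
                K * ‖∑ n ∈ Finset.range N, co n • z n‖) ∧
      (E.Shrinking → ShrinkingBasis v → F.Shrinking) := by
  obtain ⟨-, Ku, -, hU⟩ := huncond
  obtain ⟨Z, hZ₁, hZ₂, hZ₃, F, hF, hX, ⟨K, hK, hest⟩, hshr⟩ :=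
    statement_17_general hnorm hU hdom E hlow
  exact ⟨Z, hZ₁, hZ₂, hZ₃, F, hF, hX, ⟨K, id, hK, strictMono_id, fun p q hpq hqp z hz =>
    hest p q hpq hqp z fun n => (hz n).2⟩, fun hE hV => hshr hE hV.2⟩
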